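/- Let n > 1, L ⊆ ℂᴺ compact polynomially convex, and K̃ ⊆ ℂ^{N+n} a compact polynomially convex set whose projection to ℂᴺ is contained in L, with fibres K_z = {ζ : (z,ζ) ∈ K̃}. Let f be holomorphic on a neighbourhood of L with f(z) ∉ K_z for all z ∈ L. Then there exist a neighbourhood V of L and a holomorphic map F : V × ℂⁿ → ℂⁿ such that for each z ∈ V ∩ L: F(z,0) = f(z), ζ ↦ F(z,ζ) is injective, and F({z} × ℂⁿ) ∩ K_z = ∅. -/

import Mathlib

noncomputable section
open Set Metric MvPolynomial

/-- The polynomially convex hull of a set in `ℂⁿ`. -/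
def polyHull {n : ℕ} (K : Set (EuclideanSpace ℂ (Fin n))) : Set (EuclideanSpace ℂ (Fin n)) :=
  {z | ∀ p : MvPolynomial (Fin n) ℂ,
    ‖eval (fun i => z i) p‖ ≤ sSup ((fun w => ‖eval (fun i => w i) p‖) '' K)}

/-- A compact set in `ℂⁿ` is polynomially convex if it equals its polynomial hull. -/
def IsPolyConvex {n : ℕ} (K : Set (EuclideanSpace ℂ (Fin n))) : Prop :=
  polyHull K = K

/-- Polynomial hull for subsets of a product `ℂᴺ × ℂⁿ ≅ ℂ^{N+n}`, using polynomials in the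
`N + n` coordinates. -/
def polyHull2 {N n : ℕ} (S : Set (EuclideanSpace ℂ (Fin N) × EuclideanSpace ℂ (Fin n))) :
    Set (EuclideanSpace ℂ (Fin N) × EuclideanSpace ℂ (Fin n)) :=
  {z | ∀ p : MvPolynomial (Fin N ⊕ Fin n) ℂ,
    ‖eval (Sum.elim (fun i => z.1 i) (fun j => z.2 j)) p‖ ≤
      sSup ((fun w => ‖eval (Sum.elim (fun i => w.1 i) (fun j => w.2 j)) p‖) '' S)}

def IsPolyConvex2 {N n : ℕ} (S : Set (EuclideanSpace ℂ (Fin N) × EuclideanSpace ℂ (Fin n))) :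
    Prop :=
  polyHull2 S = S

/-!
After the fibrewise translation by `f`, the map `F` has to fix the zero section and avoid `K̃`. The
union of `K̃` with the graph of `f` over `L` is polynomially convex: multiply a polynomial which
separates a point from `K̃` by `ζ_j - f_j(z)`, which vanishes on the graph, and approximate `f_j`
over `L` by polynomials. By the Oka–Weil theorem a polynomial is then close to `1` on the graph and
to `0` on `K̃`. Iterates of a cubic with superattracting fixed points `0` and `1`, applied to this
polynomial and multiplied with the coordinates, give cutoffs which are approximated by sums of terms
`c(z) exp (l ζ)`; the vector fields `ζ_j (∂_j a · e_k - ∂_k a · e_j)` built from such sums `a` are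
sums of overshear fields, whose flows are automorphisms of the fibres, and add up to a field close
to `-ζ` near the zero section and close to `0` near `K̃`. Composing the inverses of their small-time
flows gives fibre automorphisms `Ψ` close to `e · ζ` near the zero section, whose inverses `Φ` are
close to the identity near `K̃`. The basin of attraction of the zero section under a rapidly
converging sequence `⋯ ∘ Φ₁ ∘ Φ₀` avoids `K̃`, and `ζ ↦ lim eᵏ (Φₖ₋₁ ∘ ⋯ ∘ Φ₀) ζ` maps it onto the
whole fibre; `F` is the inverse map.
-/

open Filter Topology

section Holomorphic

variable {E F G : Type*} [NormedAddCommGroup E] [NormedSpace ℂ E] [NormedAddCommGroup F]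
  [NormedSpace ℂ F] [NormedAddCommGroup G] [NormedSpace ℂ G]

/-- `f` is complex differentiable on a neighbourhood of `x`. No power series are involved, so that
nothing like Hartogs' theorem is needed in several variables. -/
def HolomorphicAt (f : E → F) (x : E) : Prop := ∀ᶠ y in 𝓝 x, DifferentiableAt ℂ f y

namespace HolomorphicAt

variable {f g : E → F} {x : E}

theorem differentiableAt (h : HolomorphicAt f x) : DifferentiableAt ℂ f x := h.self_of_nhds

theorem eventually (h : HolomorphicAt f x) : ∀ᶠ y in 𝓝 x, HolomorphicAt f y :=
  eventually_eventually_nhds.2 h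

theorem congr (h : HolomorphicAt f x) (hfg : f =ᶠ[𝓝 x] g) : HolomorphicAt g x := by
  filter_upwards [h, hfg.eventuallyEq_nhds] with y hy hy' using hy'.differentiableAt_iff.1 hy

theorem of_differentiable (h : Differentiable ℂ f) (x : E) : HolomorphicAt f x :=
  Eventually.of_forall h

theorem sub (hf : HolomorphicAt f x) (hg : HolomorphicAt g x) :
    HolomorphicAt (fun y => f y - g y) x := by
  filter_upwards [hf, hg] with y h₁ h₂ using h₁.sub h₂

theorem mul {f g : E → ℂ} (hf : HolomorphicAt f x) (hg : HolomorphicAt g x) :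
    HolomorphicAt (fun y => f y * g y) x := by
  filter_upwards [hf, hg] with y h₁ h₂ using h₁.mul h₂

theorem div {f g : E → ℂ} (hf : HolomorphicAt f x) (hg : HolomorphicAt g x) (h0 : g x ≠ 0) :
    HolomorphicAt (fun y => f y / g y) x := by
  filter_upwards [hf, hg, hg.differentiableAt.continuousAt.eventually_ne h0] with y h₁ h₂ h₃
  simp only [div_eq_mul_inv]
  exact h₁.mul (h₂.inv h₃)

theorem comp {g : F → G} (hg : HolomorphicAt g (f x)) (hf : HolomorphicAt f x) :
    HolomorphicAt (fun y => g (f y)) x := by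
  filter_upwards [hf.differentiableAt.continuousAt.eventually hg, hf] with y h₁ h₂
  exact h₁.comp y h₂

end HolomorphicAt

theorem norm_fderiv_le_of_norm_le {f : E → F} {x : E} {r M : ℝ} (hr : 0 < r)
    (hf : DifferentiableOn ℂ f (ball x r)) (hM : ∀ y ∈ ball x r, ‖f y‖ ≤ M) :
    ‖fderiv ℂ f x‖ ≤ 2 * M / r := by
  refine Complex.norm_fderiv_le_div_of_mapsTo_ball hf (fun y hy => ?_) hr
  rw [mem_closedBall, dist_eq_norm]
  linarith [norm_sub_le (f y) (f x), hM y hy, hM x (mem_ball_self hr)]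

theorem norm_fderiv_sub_fderiv_le_of_norm_sub_le {f g : E → F} {x : E} {r M : ℝ} (hr : 0 < r)
    (hf : DifferentiableOn ℂ f (ball x r)) (hg : DifferentiableOn ℂ g (ball x r))
    (hM : ∀ y ∈ ball x r, ‖f y - g y‖ ≤ M) : ‖fderiv ℂ f x - fderiv ℂ g x‖ ≤ 2 * M / r := by
  have hx := ball_mem_nhds x hr
  rw [← fderiv_fun_sub (hf.differentiableAt hx) (hg.differentiableAt hx)]
  exact norm_fderiv_le_of_norm_le hr (hf.fun_sub hg) hM

theorem norm_sub_le_of_norm_le {f : E → F} {x y y' : E} {r M : ℝ} (hr : 0 < r)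
    (hf : DifferentiableOn ℂ f (ball x (2 * r))) (hM : ∀ y ∈ ball x (2 * r), ‖f y‖ ≤ M)
    (hy : y ∈ ball x r) (hy' : y' ∈ ball x r) : ‖f y - f y'‖ ≤ 2 * M / r * ‖y - y'‖ := by
  have hsub : ∀ w ∈ ball x r, ball w r ⊆ ball x (2 * r) := fun w hw =>
    ball_subset_ball' (by linarith [mem_ball.1 hw])
  refine Convex.norm_image_sub_le_of_norm_fderiv_le (𝕜 := ℂ) (s := ball x r) (fun w hw => ?_)
    (fun w hw => ?_) (convex_ball x r) hy' hy
  · exact hf.differentiableAt (isOpen_ball.mem_nhds (hsub w hw (mem_ball_self hr)))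
  · exact norm_fderiv_le_of_norm_le hr (hf.mono (hsub w hw)) fun v hv => hM v (hsub w hw hv)

theorem uniformCauchySeqOn_fderiv {ι : Type*} {l : Filter ι} {f : ι → E → F} {x : E} {r : ℝ}
    (hr : 0 < r) (hf : ∀ᶠ i in l, DifferentiableOn ℂ (f i) (ball x (2 * r)))
    (h : UniformCauchySeqOn f l (ball x (2 * r))) :
    UniformCauchySeqOn (fun i => fderiv ℂ (f i)) l (ball x r) := by
  intro u hu
  obtain ⟨ε, hε, hεu⟩ := Metric.mem_uniformity_dist.1 hu
  have hεr : 0 < ε * r / 4 := by positivity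
  filter_upwards [h _ (Metric.dist_mem_uniformity hεr), hf.prod_mk hf] with m hm hdm w hw
  have hsub : ball w r ⊆ ball x (2 * r) := ball_subset_ball' (by linarith [mem_ball.1 hw])
  refine hεu ?_
  rw [dist_eq_norm]
  calc ‖fderiv ℂ (f m.1) w - fderiv ℂ (f m.2) w‖ ≤ 2 * (ε * r / 4) / r :=
        norm_fderiv_sub_fderiv_le_of_norm_sub_le hr (hdm.1.mono hsub) (hdm.2.mono hsub)
          fun y hy => by simpa only [← dist_eq_norm] using (hm y (hsub hy)).le
    _ = ε / 2 := by field_simp; norm_num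
    _ < ε := half_lt_self hε

theorem differentiableOn_of_tendstoUniformlyOn [CompleteSpace F] {ι : Type*} {l : Filter ι}
    [l.NeBot] {f : ι → E → F} {g : E → F} {s : Set E} (hs : IsOpen s)
    (hf : ∀ᶠ i in l, DifferentiableOn ℂ (f i) s) (h : TendstoUniformlyOn f g l s) :
    DifferentiableOn ℂ g s := by
  intro x hx
  obtain ⟨r, hr, hrs⟩ : ∃ r > 0, ball x (2 * r) ⊆ s := by
    obtain ⟨r, hr, hrs⟩ := Metric.isOpen_iff.1 hs x hx
    exact ⟨r / 2, by positivity, by rwa [mul_div_cancel₀ r two_ne_zero]⟩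
  have hcauchy : UniformCauchySeqOn (fun i => fderiv ℂ (f i)) l (ball x r) :=
    uniformCauchySeqOn_fderiv hr (hf.mono fun _ hi => hi.mono hrs) (h.mono hrs).uniformCauchySeqOn
  have hlim : ∀ w ∈ ball x r, ∃ A, Tendsto (fun i => fderiv ℂ (f i) w) l (𝓝 A) :=
    fun w hw => cauchy_map_iff_exists_tendsto.1 (hcauchy.cauchy_map hw)
  choose! g' hg' using hlim
  have hderiv : HasFDerivAt g (g' x) x := by
    refine hasFDerivAt_of_tendstoUniformlyOnFilter (f := f)
      ((hcauchy.tendstoUniformlyOn_of_tendsto hg').tendstoUniformlyOnFilter.mono_right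
        (le_principal_iff.2 (ball_mem_nhds x hr))) ?_ ?_
    · rw [eventually_prod_iff]
      exact ⟨_, hf, _, hs.mem_nhds hx, fun hi y hy =>
        (hi.differentiableAt (hs.mem_nhds hy)).hasFDerivAt⟩
    · filter_upwards [hs.mem_nhds hx] with y hy using h.tendsto_at hy
  exact hderiv.differentiableAt.differentiableWithinAt

theorem continuousOn_fderiv_of_continuousOn_prod [ProperSpace E] {T : Type*}
    [PseudoMetricSpace T] {g : E → T → F} {x : E} {r : ℝ} {K : Set T} (hr : 0 < r)
    (hK : IsCompact K) (hd : ∀ t ∈ K, DifferentiableOn ℂ (fun y => g y t) (ball x r))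
    (hc : ContinuousOn (fun q : E × T => g q.1 q.2) (closedBall x r ×ˢ K)) :
    ContinuousOn (fun t => fderiv ℂ (fun y => g y t) x) K := by
  have huc := Metric.uniformContinuousOn_iff.1
    (((isCompact_closedBall x r).prod hK).uniformContinuousOn_of_continuous hc)
  rw [Metric.continuousOn_iff]
  intro t ht ε hε
  obtain ⟨δ, hδ, h⟩ := huc (ε * r / 4) (by positivity)
  refine ⟨δ, hδ, fun u hu hut => ?_⟩
  rw [dist_eq_norm]
  calc ‖fderiv ℂ (fun y => g y u) x - fderiv ℂ (fun y => g y t) x‖ ≤ 2 * (ε * r / 4) / r := by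
        refine norm_fderiv_sub_fderiv_le_of_norm_sub_le hr (hd u hu) (hd t ht) fun y hy => ?_
        have hy' := ball_subset_closedBall hy
        have := h (y, u) ⟨hy', hu⟩ (y, t) ⟨hy', ht⟩ (by simpa [Prod.dist_eq, hδ] using hut)
        exact (dist_eq_norm (g y u) (g y t) ▸ this).le
    _ = ε / 2 := by field_simp; norm_num
    _ < ε := half_lt_self hε

theorem differentiableAt_intervalIntegral [ProperSpace E] [NormedSpace ℝ F]
    {g : E → ℝ → F} {x₀ : E} {r a b : ℝ}
    (hr : 0 < r) (hd : ∀ t ∈ uIcc a b, DifferentiableOn ℂ (fun x => g x t) (ball x₀ r))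
    (hc : ContinuousOn (fun q : E × ℝ => g q.1 q.2) (ball x₀ r ×ˢ uIcc a b)) :
    DifferentiableAt ℂ (fun x => ∫ t in a..b, g x t) x₀ := by
  have hr2 : 0 < r / 2 := by positivity
  have hr4 : 0 < r / 4 := by positivity
  have hball : closedBall x₀ (r / 2) ⊆ ball x₀ r := closedBall_subset_ball (half_lt_self hr)
  have hcK := hc.mono (prod_mono_left (t := uIcc a b) hball)
  obtain ⟨M, hM⟩ :=
    ((isCompact_closedBall x₀ (r / 2)).prod isCompact_uIcc).exists_bound_of_continuousOn hcK
  have hslice : ∀ x ∈ closedBall x₀ (r / 2), ContinuousOn (g x) (uIcc a b) := fun x hx =>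
    hcK.comp (f := fun t => (x, t)) (by fun_prop) fun t ht => ⟨hx, ht⟩
  have hderiv : ContinuousOn (fun t => fderiv ℂ (fun x => g x t) x₀) (uIcc a b) :=
    continuousOn_fderiv_of_continuousOn_prod hr2 isCompact_uIcc
      (fun t ht => (hd t ht).mono (ball_subset_closedBall.trans hball)) hcK
  have hlip : ∀ t ∈ uIcc a b,
      LipschitzOnWith (Real.nnabs (2 * M / (r / 4))) (fun x => g x t) (ball x₀ (r / 4)) := by
    refine fun t ht => LipschitzOnWith.of_dist_le_mul fun y hy y' hy' => ?_
    have hsub : ball x₀ (2 * (r / 4)) ⊆ closedBall x₀ (r / 2) :=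
      ball_subset_closedBall.trans (closedBall_subset_closedBall (by linarith))
    rw [dist_eq_norm, dist_eq_norm]
    refine (norm_sub_le_of_norm_le hr4 ((hd t ht).mono (hsub.trans hball))
      (fun w hw => hM (w, t) ⟨hsub hw, ht⟩) hy hy').trans ?_
    gcongr
    exact le_abs_self _
  refine (intervalIntegral.hasFDerivAt_integral_of_dominated_loc_of_lip
    (F' := fun t => fderiv ℂ (fun x => g x t) x₀) (ball_mem_nhds x₀ hr4) ?_
    (hslice x₀ (mem_closedBall_self hr2.le)).intervalIntegrable
    ((hderiv.mono uIoc_subset_uIcc).aestronglyMeasurable measurableSet_uIoc)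
    (Eventually.of_forall fun t ht => hlip t (uIoc_subset_uIcc ht)) intervalIntegrable_const
    (Eventually.of_forall fun t ht => ?_)).2.differentiableAt
  · filter_upwards [ball_mem_nhds x₀ hr2] with x hx
    exact ((hslice x (ball_subset_closedBall hx)).mono uIoc_subset_uIcc).aestronglyMeasurable
      measurableSet_uIoc
  · exact ((hd t (uIoc_subset_uIcc ht)).differentiableAt (ball_mem_nhds x₀ hr)).hasFDerivAt

theorem HolomorphicAt.intervalIntegral_comp [ProperSpace E] {Q : E × ℂ → ℂ} {γ κ : ℝ → ℂ} {x₀ : E}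
    {a b : ℝ} (hγ : Continuous γ) (hκ : Continuous κ)
    (hQ : ∀ t ∈ uIcc a b, HolomorphicAt Q (x₀, γ t)) :
    HolomorphicAt (fun x => ∫ t in a..b, κ t * Q (x, γ t)) x₀ := by
  have hev : ∀ᶠ x in 𝓝 x₀, ∀ t ∈ uIcc a b, HolomorphicAt Q (x, γ t) := by
    refine isCompact_uIcc.eventually_forall_of_forall_eventually fun t ht => ?_
    have hc : Continuous fun q : E × ℝ => (q.1, γ q.2) := by fun_prop
    exact (hc.tendsto (x₀, t)).eventually (hQ t ht).eventually
  obtain ⟨r, hr, h⟩ := Metric.eventually_nhds_iff_ball.1 hev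
  refine Metric.eventually_nhds_iff_ball.2 ⟨r, hr, fun x hx => ?_⟩
  obtain ⟨r', hr', hsub⟩ := Metric.isOpen_iff.1 isOpen_ball x hx
  refine differentiableAt_intervalIntegral hr' (fun t ht y hy => ?_) (fun q hq => ?_)
  · have hQy := (h y (hsub hy) t ht).differentiableAt
    exact ((hQy.comp y (f := fun y => (y, γ t)) (by fun_prop)).const_mul _).differentiableWithinAt
  · have hQq := (h q.1 (hsub hq.1) q.2 hq.2).differentiableAt.continuousAt
    exact ((hκ.comp continuous_snd).continuousAt.mul (ContinuousAt.comp (g := Q)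
      (f := fun q : E × ℝ => (q.1, γ q.2)) hQq (by fun_prop))).continuousWithinAt

end Holomorphic

section Cousin

open Complex (I log slitPlane)

/-- The parabolic arc from `b` to `c` in `ℂ`, over the real segment `[b, c]` for `η > 0` and under
it for `η < 0`, parametrised by its real part. The arcs for `η` and `-η` bound a lens. -/
def arc (b c η : ℝ) (t : ℝ) : ℂ := t + ((η * ((t - b) * (c - t)) : ℝ) : ℂ) * I

/-- The velocity of `arc`. -/
def arcDeriv (b c η : ℝ) (t : ℝ) : ℂ := 1 + ((η * (b + c - 2 * t) : ℝ) : ℂ) * I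

variable {b c η t : ℝ} {w : ℂ}

theorem arc_re (b c η t : ℝ) : (arc b c η t).re = t := by simp [arc]

theorem arc_im (b c η t : ℝ) : (arc b c η t).im = η * ((t - b) * (c - t)) := by simp [arc]

theorem arc_left (b c η : ℝ) : arc b c η b = b := by simp [arc]

theorem arc_right (b c η : ℝ) : arc b c η c = c := by simp [arc]

theorem continuous_arc (b c η : ℝ) : Continuous (arc b c η) := by unfold arc; fun_prop

theorem continuous_arcDeriv (b c η : ℝ) : Continuous (arcDeriv b c η) := by
  unfold arcDeriv; fun_prop

theorem hasDerivAt_arc (b c η t : ℝ) : HasDerivAt (arc b c η) (arcDeriv b c η t) t := by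
  have him : HasDerivAt (fun t : ℝ => η * ((t - b) * (c - t))) (η * (b + c - 2 * t)) t := by
    refine ((((hasDerivAt_id t).sub_const b).mul
      ((hasDerivAt_id t).const_sub c)).const_mul η).congr_deriv ?_
    rw [id_eq]
    ring
  exact (Complex.ofRealCLM.hasDerivAt (x := t)).add (him.ofReal_comp.mul_const _)

theorem arc_ne_of_im_ne (h : w.im ≠ η * ((w.re - b) * (c - w.re))) (t : ℝ) : arc b c η t ≠ w := by
  rintro rfl
  rw [arc_im, arc_re] at h
  exact h rfl

theorem abs_arc_im_le (ht : t ∈ Icc b c) (η : ℝ) : |(arc b c η t).im| ≤ |η| * (c - b) ^ 2 := by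
  have hb : 0 ≤ t - b := sub_nonneg.2 ht.1
  have hc : 0 ≤ c - t := sub_nonneg.2 ht.2
  rw [arc_im, abs_mul, abs_of_nonneg (mul_nonneg hb hc)]
  gcongr
  nlinarith

theorem arc_im_nonneg (hη : 0 ≤ η) (ht : t ∈ Icc b c) : 0 ≤ (arc b c η t).im := by
  rw [arc_im]
  exact mul_nonneg hη (mul_nonneg (sub_nonneg.2 ht.1) (sub_nonneg.2 ht.2))

theorem arc_im_pos (hη : 0 < η) (ht : t ∈ Ioo b c) : 0 < (arc b c η t).im := by
  rw [arc_im]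
  exact mul_pos hη (mul_pos (sub_pos.2 ht.1) (sub_pos.2 ht.2))

theorem arc_neg_im (b c η t : ℝ) : (arc b c (-η) t).im = -(arc b c η t).im := by
  rw [arc_im, arc_im, neg_mul]

theorem log_sub_log_neg_of_im_pos (h : 0 < w.im) : log w - log (-w) = Real.pi * I := by
  simp only [Complex.log, norm_neg, Complex.arg_neg_eq_arg_sub_pi_of_im_pos h]
  push_cast
  ring

theorem intervalIntegrable_arcDeriv_mul {h : ℂ → ℂ} (hbc : b ≤ c)
    (hh : ContinuousOn h (arc b c η '' Icc b c)) :
    IntervalIntegrable (fun t => arcDeriv b c η t * h (arc b c η t)) MeasureTheory.volume b c := by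
  apply ContinuousOn.intervalIntegrable
  rw [uIcc_of_le hbc]
  exact (continuous_arcDeriv b c η).continuousOn.mul
    (hh.comp (continuous_arc b c η).continuousOn (mapsTo_image _ _))

theorem integral_arcDeriv_mul_eq_sub {h H : ℂ → ℂ} (hbc : b ≤ c)
    (hh : ContinuousOn h (arc b c η '' Icc b c))
    (hH : ∀ t ∈ Icc b c, HasDerivAt H (h (arc b c η t)) (arc b c η t)) :
    ∫ t in b..c, arcDeriv b c η t * h (arc b c η t) = H c - H b := by
  have hFTC := intervalIntegral.integral_eq_sub_of_hasDerivAt (f := fun t => H (arc b c η t))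
    (fun t ht => ?_) (intervalIntegrable_arcDeriv_mul hbc hh)
  · rw [hFTC, arc_left, arc_right]
  · rw [uIcc_of_le hbc] at ht
    rw [mul_comm]
    exact (hH t ht).comp t (hasDerivAt_arc b c η t)

theorem integral_arcDeriv_div_arc_sub {u : ℂ} (hbc : b ≤ c)
    (hu : ∀ t ∈ Icc b c, u * (arc b c η t - w) ∈ slitPlane) :
    ∫ t in b..c, arcDeriv b c η t * (arc b c η t - w)⁻¹ =
      log (u * (c - w)) - log (u * (b - w)) := by
  have hne : ∀ t ∈ Icc b c, u ≠ 0 ∧ arc b c η t - w ≠ 0 := fun t ht =>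
    mul_ne_zero_iff.1 (Complex.slitPlane_ne_zero (hu t ht))
  refine integral_arcDeriv_mul_eq_sub (h := fun v => (v - w)⁻¹)
    (H := fun v => log (u * (v - w))) hbc ?_ fun t ht => ?_
  · refine (continuousOn_id.sub continuousOn_const).inv₀ ?_
    rintro _ ⟨t, ht, rfl⟩
    exact (hne t ht).2
  · refine ((((hasDerivAt_id (arc b c η t)).sub_const w).const_mul u).clog
      (hu t ht)).congr_deriv ?_
    rw [mul_div_mul_left _ _ (hne t ht).1, id_eq, one_div]

theorem integral_lens_inv_sub (hb : b < w.re) (hc : w.re < c)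
    (hw : |w.im| < η * ((w.re - b) * (c - w.re))) :
    (∫ t in b..c, arcDeriv b c (-η) t * (arc b c (-η) t - w)⁻¹) -
      ∫ t in b..c, arcDeriv b c η t * (arc b c η t - w)⁻¹ = 2 * Real.pi * I := by
  obtain ⟨hw₁, hw₂⟩ := abs_lt.1 hw
  have hlower : ∀ t ∈ Icc b c, I * (arc b c (-η) t - w) ∈ slitPlane := by
    intro t _
    rw [Complex.mem_slitPlane_iff]
    by_cases h : t = w.re
    · exact .inl (by simp [arc_im, h]; linarith)
    · exact .inr (by simpa [arc_re, sub_eq_zero] using h)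
  have hupper : ∀ t ∈ Icc b c, -I * (arc b c η t - w) ∈ slitPlane := by
    intro t _
    rw [Complex.mem_slitPlane_iff]
    by_cases h : t = w.re
    · exact .inl (by simp [arc_im, h]; linarith)
    · exact .inr (by simpa [arc_re, sub_eq_zero, eq_comm] using h)
  have hlogc := log_sub_log_neg_of_im_pos (w := I * (c - w)) (by simp; linarith)
  have hlogb := log_sub_log_neg_of_im_pos (w := -(I * (b - w))) (by simp; linarith)
  rw [integral_arcDeriv_div_arc_sub (hb.trans hc).le hlower,
    integral_arcDeriv_div_arc_sub (hb.trans hc).le hupper, neg_mul, neg_mul]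
  rw [neg_neg] at hlogb
  linear_combination hlogc + hlogb

theorem integral_arcDeriv_mul_div_arc_sub {P g : ℂ → ℂ} (hbc : b ≤ c)
    (hw : w.im ≠ η * ((w.re - b) * (c - w.re)))
    (hg : ContinuousOn (dslope g w) (arc b c η '' Icc b c))
    (hP : ∀ t ∈ Icc b c, HasDerivAt P (dslope g w (arc b c η t)) (arc b c η t)) :
    ∫ t in b..c, arcDeriv b c η t * (g (arc b c η t) / (arc b c η t - w)) =
      (P c - P b) + g w * ∫ t in b..c, arcDeriv b c η t * (arc b c η t - w)⁻¹ := by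
  have hne : ∀ t, arc b c η t - w ≠ 0 := fun t => sub_ne_zero.2 (arc_ne_of_im_ne hw t)
  have hinv : ContinuousOn (fun v => (v - w)⁻¹) (arc b c η '' Icc b c) := by
    refine (continuousOn_id.sub continuousOn_const).inv₀ ?_
    rintro _ ⟨t, -, rfl⟩
    exact hne t
  rw [← integral_arcDeriv_mul_eq_sub hbc hg hP, ← intervalIntegral.integral_const_mul,
    ← intervalIntegral.integral_add (intervalIntegrable_arcDeriv_mul hbc hg)
      ((intervalIntegrable_arcDeriv_mul hbc hinv).const_mul _)]
  refine intervalIntegral.integral_congr fun t _ => ?_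
  have h0 := hne t
  rw [dslope_of_ne _ (sub_ne_zero.1 h0), slope_def_field]
  field_simp
  ring

theorem integral_lens_div_sub (hb : b < w.re) (hc : w.re < c)
    (hw : |w.im| < η * ((w.re - b) * (c - w.re))) {R : Set ℂ} (hR : Convex ℝ R) (hRo : IsOpen R)
    (hwR : w ∈ R) (hupper : ∀ t ∈ Icc b c, arc b c η t ∈ R)
    (hlower : ∀ t ∈ Icc b c, arc b c (-η) t ∈ R) {g : ℂ → ℂ} (hg : DifferentiableOn ℂ g R) :
    (∫ t in b..c, arcDeriv b c (-η) t * (g (arc b c (-η) t) / (arc b c (-η) t - w))) -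
      ∫ t in b..c, arcDeriv b c η t * (g (arc b c η t) / (arc b c η t - w)) =
        2 * Real.pi * I * g w := by
  obtain ⟨hw₁, hw₂⟩ := abs_lt.1 hw
  have hbc : b ≤ c := (hb.trans hc).le
  have hd := (Complex.differentiableOn_dslope (hRo.mem_nhds hwR)).2 hg
  obtain ⟨P, hP⟩ := hR.exists_forall_hasDerivWithinAt hd
  have hside : ∀ σ, w.im ≠ σ * ((w.re - b) * (c - w.re)) → (∀ t ∈ Icc b c, arc b c σ t ∈ R) →
      ∫ t in b..c, arcDeriv b c σ t * (g (arc b c σ t) / (arc b c σ t - w)) =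
        (P c - P b) + g w * ∫ t in b..c, arcDeriv b c σ t * (arc b c σ t - w)⁻¹ :=
    fun σ hσ hmem => integral_arcDeriv_mul_div_arc_sub hbc hσ
      (hd.continuousOn.mono (image_subset_iff.2 hmem)) fun t ht =>
        (hP _ (hmem t ht)).hasDerivAt (hRo.mem_nhds (hmem t ht))
  rw [hside η hw₂.ne hupper, hside (-η) (by linarith) hlower]
  linear_combination (g w) * integral_lens_inv_sub hb hc hw

variable {E : Type*} [NormedAddCommGroup E] [NormedSpace ℂ E]

theorem exists_pos_forall_holomorphicAt_of_segment {P : Set E} (hP : IsCompact P) {b₀ c₀ : ℝ}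
    (hbc₀ : b₀ ≤ c₀) {Q : E × ℂ → ℂ}
    (hQ : ∀ x ∈ P, ∀ t ∈ Icc b₀ c₀, HolomorphicAt Q (x, (t : ℂ))) :
    ∃ ε > 0, ∀ x₀ ∈ P, ∀ x ∈ ball x₀ ε, ∀ w ∈ Ioo (b₀ - ε) (c₀ + ε) ×ℂ Ioo (-ε) ε,
      HolomorphicAt Q (x, w) := by
  obtain ⟨δ, hδ, h⟩ := (hP.prod ((isCompact_Icc (a := b₀) (b := c₀)).image
      Complex.continuous_ofReal)).exists_thickening_subset_open (t := {x | HolomorphicAt Q x})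
      (isOpen_iff_mem_nhds.2 fun x (hx : HolomorphicAt Q x) => hx.eventually) (by
        rintro ⟨x, _⟩ ⟨hx, t, ht, rfl⟩
        exact hQ x hx t ht)
  refine ⟨δ / 2, by positivity, fun x₀ hx₀ x hx w hw => h ?_⟩
  obtain ⟨⟨hre₁, hre₂⟩, him⟩ := hw
  set s : ℝ := ↑(projIcc b₀ c₀ hbc₀ w.re) with hs
  have hdist : |w.re - s| < δ / 2 := by
    rw [hs, coe_projIcc, abs_lt]
    grind
  rw [mem_thickening_iff]
  refine ⟨(x₀, (s : ℂ)), ⟨hx₀, mem_image_of_mem _ (projIcc b₀ c₀ hbc₀ w.re).2⟩, ?_⟩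
  rw [Prod.dist_eq, max_lt_iff, dist_eq_norm w]
  refine ⟨(mem_ball.1 hx).trans (half_lt_self hδ),
    (Complex.norm_le_abs_re_add_abs_im _).trans_lt ?_⟩
  simp only [Complex.sub_re, Complex.sub_im, Complex.ofReal_re, Complex.ofReal_im, sub_zero]
  linarith [abs_lt.2 him]

/-- The Cauchy integral along the arc `arc b c η`, in the last variable, of a function `Q` with a
parameter. It is normalised so that `Q` is its value for `η` minus its value for `-η` inside the
lens. -/
def arcCauchyIntegral (b c η : ℝ) (Q : E × ℂ → ℂ) (q : E × ℂ) : ℂ :=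
  -(2 * Real.pi * I)⁻¹ *
    ∫ t in b..c, arcDeriv b c η t * (Q (q.1, arc b c η t) / (arc b c η t - q.2))

theorem HolomorphicAt.arcCauchyIntegral [ProperSpace E] {Q : E × ℂ → ℂ} {x : E} (hbc : b ≤ c)
    (hQ : ∀ t ∈ Icc b c, HolomorphicAt Q (x, arc b c η t)) (hw : ∀ t ∈ Icc b c, arc b c η t ≠ w) :
    HolomorphicAt (arcCauchyIntegral b c η Q) (x, w) := by
  refine (HolomorphicAt.of_differentiable (differentiable_const _) _).mul ?_
  refine HolomorphicAt.intervalIntegral_comp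
    (Q := fun q : (E × ℂ) × ℂ => Q (q.1.1, q.2) / (q.2 - q.1.2))
    (continuous_arc b c η) (continuous_arcDeriv b c η) fun t ht => ?_
  rw [uIcc_of_le hbc] at ht
  exact ((hQ t ht).comp (f := fun q : (E × ℂ) × ℂ => (q.1.1, q.2))
    (.of_differentiable (by fun_prop) _)).div (.of_differentiable (by fun_prop) _)
      (sub_ne_zero.2 (hw t ht))

theorem arcCauchyIntegral_sub_neg {Q : E × ℂ → ℂ} {x : E} (hb : b < w.re) (hc : w.re < c)
    (hw : |w.im| < η * ((w.re - b) * (c - w.re))) {R : Set ℂ} (hR : Convex ℝ R) (hRo : IsOpen R)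
    (hwR : w ∈ R) (hupper : ∀ t ∈ Icc b c, arc b c η t ∈ R)
    (hlower : ∀ t ∈ Icc b c, arc b c (-η) t ∈ R) (hQ : ∀ v ∈ R, HolomorphicAt Q (x, v)) :
    arcCauchyIntegral b c η Q (x, w) - arcCauchyIntegral b c (-η) Q (x, w) = Q (x, w) := by
  have hcauchy := integral_lens_div_sub (g := fun v => Q (x, v)) hb hc hw hR hRo hwR hupper hlower
    fun v hv => ((hQ v hv).differentiableAt.comp v (f := fun v => (x, v))
      (by fun_prop)).differentiableWithinAt
  have hpi := inv_mul_cancel₀ Complex.two_pi_I_ne_zero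
  unfold arcCauchyIntegral
  linear_combination (2 * Real.pi * I : ℂ)⁻¹ * hcauchy + Q (x, w) * hpi

theorem eventually_mem_lens (hη : 0 < η) (ht : t ∈ Ioo b c) : ∀ᶠ v : ℂ in 𝓝 t,
      b < v.re ∧ v.re < c ∧ |v.im| < η * ((v.re - b) * (c - v.re)) := by
  have hre := Complex.continuous_re
  have him := Complex.continuous_im
  refine IsOpen.mem_nhds ((isOpen_lt continuous_const hre).and ((isOpen_lt hre
    continuous_const).and (isOpen_lt him.abs (by fun_prop)))) ?_
  simp only [mem_ofPred_eq, Complex.ofReal_re, Complex.ofReal_im, abs_zero]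
  exact ⟨ht.1, ht.2, arc_im b c η t ▸ arc_im_pos hη ht⟩

theorem exists_arcs_subset_reProdIm {b₀ c₀ ε : ℝ} (hε : 0 < ε) :
    ∃ b ∈ Ioo (b₀ - ε) b₀, ∃ c ∈ Ioo c₀ (c₀ + ε), ∃ η > 0, ∀ σ, |σ| = η → ∀ t ∈ Icc b c,
      arc b c σ t ∈ Ioo (b₀ - ε) (c₀ + ε) ×ℂ Ioo (-ε) ε := by
  obtain ⟨b, hbε, hb⟩ := exists_between (sub_lt_self b₀ hε)
  obtain ⟨c, hc, hcε⟩ := exists_between (lt_add_of_pos_right c₀ hε)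
  obtain ⟨η, hη, hηε⟩ := exists_pos_mul_lt hε ((c - b) ^ 2)
  refine ⟨b, ⟨hbε, hb⟩, c, ⟨hc, hcε⟩, η, hη, fun σ hσ t ht =>
    ⟨?_, abs_lt.1 ((abs_arc_im_le ht σ).trans_lt (by rwa [hσ, mul_comm]))⟩⟩
  rw [mem_preimage, arc_re]
  exact ⟨hbε.trans_le ht.1, ht.2.trans_lt hcε⟩

-- The additive Cousin problem for a real segment: moving the segment up or down to an arc
-- continues the Cauchy integral holomorphically across it from one side.
theorem exists_holomorphicAt_sub_eq_of_segment [ProperSpace E] {P : Set E} (hP : IsCompact P)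
    {b₀ c₀ : ℝ} (hbc₀ : b₀ ≤ c₀) {Q : E × ℂ → ℂ}
    (hQ : ∀ x ∈ P, ∀ t ∈ Icc b₀ c₀, HolomorphicAt Q (x, (t : ℂ))) :
    ∃ Q₁ Q₂ : E × ℂ → ℂ,
      (∀ x ∈ P, ∀ w : ℂ, w.im ≤ 0 → (w.im = 0 → w.re ∈ Icc b₀ c₀) → HolomorphicAt Q₁ (x, w)) ∧
      (∀ x ∈ P, ∀ w : ℂ, 0 ≤ w.im → (w.im = 0 → w.re ∈ Icc b₀ c₀) → HolomorphicAt Q₂ (x, w)) ∧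
      ∀ x ∈ P, ∀ t ∈ Icc b₀ c₀, ∀ᶠ q in 𝓝 (x, (t : ℂ)), Q q = Q₁ q - Q₂ q := by
  obtain ⟨ε, hε, hhol⟩ := exists_pos_forall_holomorphicAt_of_segment hP hbc₀ hQ
  set R : Set ℂ := Ioo (b₀ - ε) (c₀ + ε) ×ℂ Ioo (-ε) ε
  have hR : Convex ℝ R := ((convex_Ioo _ _).linear_preimage Complex.reLm).inter
    ((convex_Ioo _ _).linear_preimage Complex.imLm)
  have hRo : IsOpen R := isOpen_Ioo.reProdIm isOpen_Ioo
  obtain ⟨b, ⟨-, hb⟩, c, ⟨hc, -⟩, η, hη, harc⟩ := exists_arcs_subset_reProdIm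
    (b₀ := b₀) (c₀ := c₀) hε
  have hbc : b ≤ c := by linarith
  have hIcc : ∀ t ∈ Icc b₀ c₀, t ∈ Ioo b c := fun t ht => ⟨hb.trans_le ht.1, ht.2.trans_lt hc⟩
  have hup := harc η (abs_of_pos hη)
  have hdown := harc (-η) (by rw [abs_neg, abs_of_pos hη])
  refine ⟨arcCauchyIntegral b c η Q, arcCauchyIntegral b c (-η) Q,
    fun x hx w hw hw₀ => HolomorphicAt.arcCauchyIntegral hbc
      (fun t ht => hhol x hx x (mem_ball_self hε) _ (hup t ht)) ?_,
    fun x hx w hw hw₀ => HolomorphicAt.arcCauchyIntegral hbc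
      (fun t ht => hhol x hx x (mem_ball_self hε) _ (hdown t ht)) ?_, fun x hx t ht => ?_⟩
  · rintro t ht rfl
    have h0 := le_antisymm hw (arc_im_nonneg hη.le ht)
    exact (arc_im_pos hη (hIcc t (arc_re b c η t ▸ hw₀ h0))).ne' h0
  · rintro t ht rfl
    rw [arc_neg_im, neg_nonneg] at hw
    have h0 := le_antisymm hw (arc_im_nonneg hη.le ht)
    rw [arc_neg_im, h0, neg_zero] at hw₀
    exact (arc_im_pos hη (hIcc t (arc_re b c (-η) t ▸ hw₀ rfl))).ne' h0
  · have htR : (t : ℂ) ∈ R := ⟨⟨by simp; linarith [ht.1], by simp; linarith [ht.2]⟩, by simp [hε]⟩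
    filter_upwards [continuousAt_fst.eventually (ball_mem_nhds x hε),
      continuousAt_snd.eventually (hRo.mem_nhds htR),
      (eventually_mem_lens hη (hIcc t ht)).prod_inr_nhds x]
      with q hqx hqR ⟨hq₁, hq₂, hq₃⟩
    exact (arcCauchyIntegral_sub_neg hq₁ hq₂ hq₃ hR hRo hqR hup hdown (hhol x hx q.1 hqx)).symm

end Cousin

section Oka

open Matrix (vecCons vecTail)

variable {d : ℕ}

theorem differentiable_vecTail :
    Differentiable ℂ (vecTail : (Fin (d + 1) → ℂ) → Fin d → ℂ) :=
  differentiable_pi.2 fun i => differentiable_apply i.succ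

theorem differentiable_vecCons :
    Differentiable ℂ fun q : ℂ × (Fin d → ℂ) => (vecCons q.1 q.2 : Fin (d + 1) → ℂ) :=
  differentiable_pi.2 <| Fin.forall_fin_succ.2
    ⟨differentiable_fst, fun i => differentiable_pi.1 differentiable_snd i⟩

theorem convex_im_mul_preimage (u : ℂ) {S : Set ℝ} (hS : Convex ℝ S) :
    Convex ℝ {w : ℂ | (u * w).im ∈ S} :=
  hS.linear_preimage (Complex.imLm.comp (LinearMap.mulLeft ℝ u))

/-- A product of compact convex plane sets. -/
def Brick (X : Set (Fin d → ℂ)) : Prop :=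
  ∃ C : Fin d → Set ℂ, (∀ i, IsCompact (C i) ∧ Convex ℝ (C i)) ∧ X = Set.pi univ C

namespace Brick

variable {X : Set (Fin d → ℂ)}

theorem isCompact (h : Brick X) : IsCompact X := by
  obtain ⟨C, hC, rfl⟩ := h
  exact isCompact_univ_pi fun i => (hC i).1

theorem inter_coord (h : Brick X) (k : Fin d) {S : Set ℂ} (hS : IsClosed S) (hS' : Convex ℝ S) :
    Brick (X ∩ {z | z k ∈ S}) := by
  obtain ⟨C, hC, rfl⟩ := h
  refine ⟨Function.update C k (C k ∩ S), fun i => ?_, ?_⟩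
  · rcases eq_or_ne i k with rfl | hi
    · rw [Function.update_self]
      exact ⟨(hC i).1.inter_right hS, (hC i).2.inter hS'⟩
    · rw [Function.update_of_ne hi]
      exact hC i
  · ext z
    simp only [mem_inter_iff, mem_univ_pi, mem_ofPred_eq]
    rw [Function.forall_update_iff C fun i s => z i ∈ s]
    constructor
    · exact fun ⟨hz, hk⟩ => ⟨⟨hz k, hk⟩, fun i _ => hz i⟩
    · rintro ⟨⟨hk, hkS⟩, hz⟩
      refine ⟨fun i => ?_, hkS⟩
      rcases eq_or_ne i k with rfl | hi
      exacts [hk, hz i hi]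

theorem inter_strip (h : Brick X) (k : Fin d) (u : ℂ) {S : Set ℝ} (hS : IsClosed S)
    (hS' : Convex ℝ S) : Brick (X ∩ {z | (u * z k).im ∈ S}) :=
  h.inter_coord k (hS.preimage (by fun_prop : Continuous fun w : ℂ => (u * w).im))
    (convex_im_mul_preimage u hS')

theorem vecCons (h : Brick X) (R : ℝ) :
    Brick {q : Fin (d + 1) → ℂ | ‖q 0‖ ≤ R ∧ vecTail q ∈ X} := by
  obtain ⟨C, hC, rfl⟩ := h
  refine ⟨Matrix.vecCons (closedBall 0 R) C, Fin.forall_fin_succ.2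
    ⟨⟨isCompact_closedBall _ _, convex_closedBall _ _⟩, hC⟩, ?_⟩
  ext q
  simp only [mem_ofPred_eq, mem_univ_pi, Fin.forall_fin_succ, Matrix.cons_val_zero,
    Matrix.cons_val_succ, mem_closedBall_zero_iff, vecTail, Function.comp_apply]

theorem induction_strip {P : Set (Fin d → ℂ) → Prop} (k : Fin d) (u : ℂ)
    (hP : ∀ X, Brick X → ∀ a : ℝ, P (X ∩ {z | (u * z k).im ≤ a}) →
      P (X ∩ {z | a ≤ (u * z k).im}) → P X)
    {δ : ℝ} (hδ : 0 < δ) (hX : Brick X)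
    (h : ∀ Y ⊆ X, Brick Y → (∀ y ∈ Y, ∀ y' ∈ Y, |(u * y k).im - (u * y' k).im| ≤ δ) → P Y) :
    P X := by
  have hslab : ∀ (n : ℕ) (a : ℝ), ∀ Y ⊆ X, Brick Y →
      (∀ y ∈ Y, (u * y k).im ∈ Icc a (a + (n + 1) * δ)) → P Y := by
    intro n
    induction n with
    | zero =>
      refine fun a Y hYX hY hYa => h Y hYX hY fun y hy y' hy' => ?_
      simpa using abs_sub_le_of_le_of_le (hYa y hy).1 (hYa y hy).2 (hYa y' hy').1 (hYa y' hy').2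
    | succ n ih =>
      intro a Y hYX hY hYa
      refine hP Y hY (a + (n + 1) * δ) (ih a _ (inter_subset_left.trans hYX)
        (hY.inter_strip k u isClosed_Iic (convex_Iic _)) fun y hy => ⟨(hYa y hy.1).1, hy.2⟩)
        (h _ (inter_subset_left.trans hYX) (hY.inter_strip k u isClosed_Ici (convex_Ici _)) ?_)
      intro y hy y' hy'
      have hle := abs_sub_le_of_le_of_le hy.2 (hYa y hy.1).2 hy'.2 (hYa y' hy'.1).2
      push_cast at hle
      linarith
  have him : Continuous fun q : Fin d → ℂ => (u * q k).im := by fun_prop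
  obtain ⟨M, hM⟩ := hX.isCompact.exists_bound_of_continuousOn him.continuousOn
  obtain ⟨n, hn⟩ := exists_nat_gt (2 * M / δ)
  rw [div_lt_iff₀ hδ] at hn
  refine hslab n (-M) X Subset.rfl hX fun y hy => ?_
  obtain ⟨h₁, h₂⟩ := abs_le.1 (hM y hy)
  exact ⟨h₁, by linarith⟩

theorem induction_small {P : Set (Fin d → ℂ) → Prop}
    (hP : ∀ (k : Fin d) (u : ℂ), u ≠ 0 → ∀ X, Brick X → ∀ a : ℝ,
      P (X ∩ {z | (u * z k).im ≤ a}) → P (X ∩ {z | a ≤ (u * z k).im}) → P X)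
    {δ : ℝ} (hδ : 0 < δ) (hX : Brick X)
    (h : ∀ Y ⊆ X, Brick Y → (∀ y ∈ Y, ∀ y' ∈ Y, dist y y' < δ) → P Y) : P X := by
  have hslices : ∀ T : List (Fin d × ℂ), (∀ q ∈ T, q.2 ≠ 0) → ∀ X, Brick X →
      (∀ Y ⊆ X, Brick Y → (∀ q ∈ T, ∀ y ∈ Y, ∀ y' ∈ Y,
        |(q.2 * y q.1).im - (q.2 * y' q.1).im| ≤ δ / 3) → P Y) → P X := by
    intro T
    induction T with
    | nil => exact fun _ X hX h => h X Subset.rfl hX (by simp)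
    | cons q T ih =>
      intro hT X hX h
      rw [List.forall_mem_cons] at hT
      refine induction_strip q.1 q.2 (hP q.1 q.2 hT.1) (by positivity) hX fun Y hYX hY hYq =>
        ih hT.2 Y hY fun Z hZY hZ hZT => h Z (hZY.trans hYX) hZ <| List.forall_mem_cons.2
          ⟨fun y hy y' hy' => hYq y (hZY hy) y' (hZY hy'), hZT⟩
  refine hslices ((Finset.univ : Finset (Fin d)).toList.flatMap fun i => [(i, 1), (i, Complex.I)])
    (fun q hq => ?_) X hX fun Y hYX hY hYT => h Y hYX hY fun y hy y' hy' => ?_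
  · simp only [List.mem_flatMap, List.mem_cons, List.not_mem_nil, or_false] at hq
    obtain ⟨i, _, rfl | rfl⟩ := hq <;> simp
  · refine (dist_pi_lt_iff hδ).2 fun i => ?_
    have him := hYT (i, 1) (by simp) y hy y' hy'
    have hre := hYT (i, Complex.I) (by simp) y hy y' hy'
    simp only [one_mul, Complex.I_mul_im] at him hre
    calc dist (y i) (y' i) ≤ |(y i - y' i).re| + |(y i - y' i).im| :=
          dist_eq_norm (y i) (y' i) ▸ Complex.norm_le_abs_re_add_abs_im _
      _ ≤ δ / 3 + δ / 3 := add_le_add (by simpa using hre) (by simpa using him)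
      _ < δ := by linarith

end Brick

/-- The set where all the functions of the list `l` are bounded by one. -/
def polyhedron {E : Type*} (l : List (E → ℂ)) : Set E := {z | ∀ p ∈ l, ‖p z‖ ≤ 1}

theorem isClosed_polyhedron {E : Type*} [TopologicalSpace E] {l : List (E → ℂ)}
    (h : ∀ p ∈ l, Continuous p) : IsClosed (polyhedron l) := by
  have : polyhedron l = ⋂ p ∈ l, {z | ‖p z‖ ≤ 1} := by ext; simp [polyhedron]
  rw [this]
  exact isClosed_biInter fun p hp => isClosed_le (h p hp).norm continuous_const

theorem polyhedron_nil {E : Type*} : polyhedron ([] : List (E → ℂ)) = univ := by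
  ext; simp [polyhedron]

theorem mem_polyhedron_cons {E : Type*} {l : List (E → ℂ)} {p : E → ℂ} {z : E} :
    z ∈ polyhedron (p :: l) ↔ ‖p z‖ ≤ 1 ∧ z ∈ polyhedron l := List.forall_mem_cons

theorem mem_polyhedron_map_comp {E F : Type*} {l : List (E → ℂ)} {g : F → E} {z : F} :
    z ∈ polyhedron (l.map (· ∘ g)) ↔ g z ∈ polyhedron l := List.forall_mem_map

/-- Solvability of the additive Cousin problem for the two parts into which a real hyperplane
`im (u * z k) = a` cuts the intersection of a brick with the polyhedron of `l`. -/
def CousinSolvable (l : List ((Fin d → ℂ) → ℂ)) : Prop :=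
  ∀ X : Set (Fin d → ℂ), Brick X → ∀ (k : Fin d) (u : ℂ), u ≠ 0 → ∀ (a : ℝ) (D : (Fin d → ℂ) → ℂ),
    (∀ z ∈ X ∩ polyhedron l, (u * z k).im = a → HolomorphicAt D z) →
    ∃ D₁ D₂ : (Fin d → ℂ) → ℂ,
      (∀ z ∈ X ∩ polyhedron l, (u * z k).im ≤ a → HolomorphicAt D₁ z) ∧
      (∀ z ∈ X ∩ polyhedron l, a ≤ (u * z k).im → HolomorphicAt D₂ z) ∧
      ∀ z ∈ X ∩ polyhedron l, (u * z k).im = a → ∀ᶠ y in 𝓝 z, D y = D₁ y - D₂ y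

theorem exists_line_preimage_eq_Icc {C : Set ℂ} (hC : IsCompact C) (hC' : Convex ℝ C) {u : ℂ}
    (hu : u ≠ 0) (v : ℂ) (hne : ∃ t : ℝ, u * (t + v) ∈ C) :
    ∃ b c : ℝ, b ≤ c ∧ ∀ t : ℝ, u * (t + v) ∈ C ↔ t ∈ Icc b c := by
  set T : Set ℝ := {t : ℝ | u * (t + v) ∈ C}
  have hconv : Convex ℝ T := ((hC'.linear_preimage (LinearMap.mulLeft ℝ u)).translate_preimage_left
    v).linear_preimage Complex.ofRealCLM.toLinearMap
  have hcomp : IsCompact T := (((Homeomorph.mulLeft₀ u hu).isClosedEmbedding.comp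
    (Homeomorph.addRight v).isClosedEmbedding).comp
      Complex.isometry_ofReal.isClosedEmbedding).isCompact_preimage hC
  have hIcc := eq_Icc_of_connected_compact ⟨hne, hconv.isPreconnected⟩ hcomp
  exact ⟨sInf T, sSup T, nonempty_Icc.1 (hIcc ▸ hne), fun t => Set.ext_iff.1 hIcc t⟩

theorem differentiable_update (k : Fin d) :
    Differentiable ℂ fun q : (Fin d → ℂ) × ℂ => Function.update q.1 k q.2 :=
  differentiable_pi.2 fun i => by
    rcases eq_or_ne i k with rfl | hi
    · simpa only [Function.update_self] using differentiable_snd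
    · simp only [Function.update_of_ne hi]
      exact differentiable_pi.1 differentiable_fst i

theorem cousinSolvable_nil : CousinSolvable ([] : List ((Fin d → ℂ) → ℂ)) := by
  intro X hX k u hu a D hD
  simp only [polyhedron_nil, inter_univ] at hD ⊢
  have hXc := hX.isCompact
  obtain ⟨C, hC, rfl⟩ := hX
  set ψ : (Fin d → ℂ) → ℂ := fun z => u * z k - a * Complex.I
  have him : ∀ z, (ψ z).im = (u * z k).im - a := fun z => by simp [ψ]
  have hψ : ∀ z, u⁻¹ * (ψ z + a * Complex.I) = z k := fun z => by simp [ψ, hu]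
  have hreal : ∀ z, (ψ z).im = 0 → ((ψ z).re : ℂ) = ψ z := fun z hz =>
    Complex.ext rfl (by simp [hz])
  by_cases hne : ∃ t : ℝ, u⁻¹ * (t + a * Complex.I) ∈ C k
  swap
  · refine ⟨0, 0, fun z _ _ => .of_differentiable (differentiable_const 0) z,
      fun z _ _ => .of_differentiable (differentiable_const 0) z, fun z hz hza => ?_⟩
    refine absurd ⟨(ψ z).re, ?_⟩ hne
    rw [hreal z (by rw [him, hza, sub_self]), hψ]
    exact hz k (mem_univ k)
  obtain ⟨b, c, hbc, hT⟩ := exists_line_preimage_eq_Icc (hC k).1 (hC k).2 (inv_ne_zero hu) _ hne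
  have hre : ∀ z ∈ Set.pi univ C, (ψ z).im = 0 → (ψ z).re ∈ Icc b c := fun z hz hz0 => by
    rw [← hT, hreal z hz0, hψ]
    exact hz k (mem_univ k)
  obtain ⟨Q₁, Q₂, hQ₁, hQ₂, hQ⟩ := exists_holomorphicAt_sub_eq_of_segment hXc hbc
    (Q := fun q => D (Function.update q.1 k (u⁻¹ * (q.2 + a * Complex.I)))) fun z hz t ht => by
      refine HolomorphicAt.comp (g := D) (hD _ ?_ ?_) (.of_differentiable
        ((differentiable_update k).comp (f := fun q : (Fin d → ℂ) × ℂ =>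
          (q.1, u⁻¹ * (q.2 + a * Complex.I))) (by fun_prop)) _)
      · exact (update_mem_pi_iff_of_mem hz).2 fun _ => (hT t).2 ht
      · simp [hu]
  have hgraph : ∀ z, HolomorphicAt (fun z => (z, ψ z)) z :=
    .of_differentiable (by fun_prop)
  refine ⟨fun z => Q₁ (z, ψ z), fun z => Q₂ (z, ψ z),
    fun z hz hza => .comp (hQ₁ z hz _ (by rw [him]; linarith) (hre z hz)) (hgraph z),
    fun z hz hza => .comp (hQ₂ z hz _ (by rw [him]; linarith) (hre z hz)) (hgraph z),
    fun z hz hza => ?_⟩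
  have hz0 : (ψ z).im = 0 := by rw [him, hza, sub_self]
  filter_upwards [(hgraph z).differentiableAt.continuousAt.eventually
    (hreal z hz0 ▸ hQ z hz _ (hre z hz hz0))] with y hy
  rw [← hy]
  simp only [hψ, Function.update_eq_self]

end Oka

section OkaExtension

open Matrix (vecCons vecTail)

theorem HolomorphicAt.circleIntegral {E : Type*} [NormedAddCommGroup E] [NormedSpace ℂ E]
    [ProperSpace E] {Q : E × ℂ → ℂ} {x : E} {c : ℂ} {R : ℝ} (hR : 0 ≤ R)
    (hQ : ∀ w ∈ sphere c R, HolomorphicAt Q (x, w)) :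
    HolomorphicAt (fun x => ∮ w in C(c, R), Q (x, w)) x := by
  simp only [_root_.circleIntegral, deriv_circleMap, smul_eq_mul]
  exact intervalIntegral_comp (continuous_circleMap c R)
    ((continuous_circleMap 0 R).mul continuous_const)
    fun θ _ => hQ _ (circleMap_mem_sphere c hR θ)

theorem dslope_eq_circleIntegral {g : ℂ → ℂ} {a w c : ℂ} {R : ℝ}
    (hg : DifferentiableOn ℂ g (closedBall c R)) (ha : a ∈ ball c R) (hga : g a = 0)
    (hw : w ∈ ball c R) :
    dslope g a w = (2 * Real.pi * Complex.I)⁻¹ * ∮ ξ in C(c, R), g ξ / ((ξ - a) * (ξ - w)) := by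
  have hR : 0 ≤ R := (nonempty_ball.1 ⟨a, ha⟩).le
  have hcauchy := ((Complex.differentiableOn_dslope
    (closedBall_mem_nhds_of_mem ha)).2 hg).circleIntegral_sub_inv_smul hw
  rw [eq_inv_mul_iff_mul_eq₀ Complex.two_pi_I_ne_zero, ← smul_eq_mul, ← hcauchy]
  refine circleIntegral.integral_congr hR fun ξ hξ => ?_
  have hne : ∀ b ∈ ball c R, ξ - b ≠ 0 := fun b hb => sub_ne_zero.2 fun h =>
    (mem_sphere.1 hξ).not_lt (mem_ball.1 (h ▸ hb))
  have hξa := hne a ha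
  have hξw := hne w hw
  simp only [dslope_of_ne g (sub_ne_zero.1 hξa), slope_def_field, hga, sub_zero, smul_eq_mul]
  field_simp

section Graph

variable {E : Type*} [NormedAddCommGroup E] [NormedSpace ℂ E] [ProperSpace E] {G : ℂ × E → ℂ}
  {p : E → ℂ}

theorem HolomorphicAt.dslope_graph {z : E} (hp : HolomorphicAt p z)
    (hG : HolomorphicAt G (p z, z)) (h0 : ∀ᶠ y in 𝓝 z, G (p y, y) = 0) :
    HolomorphicAt (fun q : ℂ × E => dslope (fun ξ => G (ξ, q.2)) (p q.2) q.1) (p z, z) := by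
  obtain ⟨r, hr, hGr⟩ := Metric.nhds_basis_closedBall.eventually_iff.1 hG.eventually
  have hmem : ∀ {ξ y}, ξ ∈ closedBall (p z) r → y ∈ closedBall z r →
      HolomorphicAt G (ξ, y) := fun hξ hy => hGr (closedBall_prod_same (p z) z r ▸ ⟨hξ, hy⟩)
  have hp₂ : HolomorphicAt (fun q : ℂ × E => p q.2) (p z, z) :=
    hp.comp (.of_differentiable differentiable_snd _)
  have hp₃ : ∀ ξ : ℂ, HolomorphicAt (fun q : (ℂ × E) × ℂ => p q.1.2) ((p z, z), ξ) := fun ξ =>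
    .comp (f := fun q : (ℂ × E) × ℂ => q.1.2) hp (.of_differentiable (by fun_prop) _)
  have hint : HolomorphicAt (fun q : ℂ × E => ∮ ξ in C(p z, r),
      G (ξ, q.2) / ((ξ - p q.2) * (ξ - q.1))) (p z, z) := by
    refine .circleIntegral (Q := fun q : (ℂ × E) × ℂ =>
      G (q.2, q.1.2) / ((q.2 - p q.1.2) * (q.2 - q.1.1))) hr.le fun ξ hξ => .div
        (.comp (f := fun q : (ℂ × E) × ℂ => (q.2, q.1.2))
          (hmem (sphere_subset_closedBall hξ) (mem_closedBall_self hr.le))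
          (.of_differentiable (by fun_prop) _))
        (.mul (.sub (.of_differentiable differentiable_snd _) (hp₃ ξ))
          (.of_differentiable (by fun_prop) _)) ?_
    have hne : ξ - p z ≠ 0 := sub_ne_zero.2 (ne_of_mem_sphere hξ hr.ne')
    exact mul_ne_zero hne hne
  refine (HolomorphicAt.mul (.of_differentiable (differentiable_const
    (2 * Real.pi * Complex.I)⁻¹) _) hint).congr ?_
  filter_upwards [continuousAt_fst.eventually (ball_mem_nhds (p z) hr),
    hp₂.differentiableAt.continuousAt.eventually (ball_mem_nhds (p z) hr),
    continuousAt_snd.eventually (closedBall_mem_nhds z hr), continuousAt_snd.eventually h0]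
    with q hq₁ hpq hq₂ hq0
  refine (dslope_eq_circleIntegral (fun ξ hξ => ?_) hpq hq0 hq₁).symm
  exact ((hmem hξ hq₂).differentiableAt.comp ξ (f := fun ξ => (ξ, q.2))
    (by fun_prop)).differentiableWithinAt

theorem exists_holomorphicAt_eq_sub_mul_of_graph {S : Set (ℂ × E)}
    (hp : ∀ q ∈ S, HolomorphicAt p q.2) (hG : ∀ q ∈ S, HolomorphicAt G q)
    (h0 : ∀ q ∈ S, q.1 = p q.2 → ∀ᶠ y in 𝓝 q.2, G (p y, y) = 0) :
    ∃ D : ℂ × E → ℂ, ∀ q ∈ S, HolomorphicAt D q ∧ ∀ᶠ v in 𝓝 q, G v = (v.1 - p v.2) * D v := by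
  classical
  refine ⟨fun q => if q.1 = p q.2 then deriv (fun ξ => G (ξ, q.2)) q.1 else
    G q / (q.1 - p q.2), fun q hq => ?_⟩
  have hpq : HolomorphicAt (fun v : ℂ × E => v.1 - p v.2) q := .sub
    (.of_differentiable differentiable_fst _)
    ((hp q hq).comp (.of_differentiable differentiable_snd _))
  rcases eq_or_ne q.1 (p q.2) with hqp | hqp
  · obtain ⟨w, z⟩ := q
    obtain rfl : w = p z := hqp
    have hzero := (continuous_snd.tendsto (p z, z)).eventually (h0 _ hq rfl)
    constructor
    · refine (HolomorphicAt.dslope_graph (hp _ hq) (hG _ hq) (h0 _ hq rfl)).congr ?_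
      filter_upwards [hzero] with v hv
      split_ifs with h
      · rw [h, dslope_same]
      · rw [dslope_of_ne _ h, slope_def_field, hv, sub_zero]
    · filter_upwards [hzero] with v hv
      split_ifs with h
      · rw [h, sub_self, zero_mul, ← hv, ← h]
      · rw [mul_div_cancel₀ _ (sub_ne_zero.2 h)]
  · have hne := hpq.differentiableAt.continuousAt.eventually_ne (sub_ne_zero.2 hqp)
    refine ⟨((hG q hq).div hpq (sub_ne_zero.2 hqp)).congr ?_, ?_⟩
    · filter_upwards [hne] with v hv using (if_neg (sub_ne_zero.1 hv)).symm
    · filter_upwards [hne] with v hv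
      rw [if_neg (sub_ne_zero.1 hv), mul_div_cancel₀ _ hv]

end Graph

variable {d : ℕ} {l : List ((Fin d → ℂ) → ℂ)} {p f : (Fin d → ℂ) → ℂ} {X : Set (Fin d → ℂ)}

theorem CousinSolvable.prod (hs : CousinSolvable (l.map (· ∘ vecTail))) (hX : Brick X)
    (k : Fin d) {u : ℂ} (hu : u ≠ 0) (a : ℝ) {D : ℂ × (Fin d → ℂ) → ℂ}
    (hD : ∀ z ∈ X ∩ polyhedron l, (u * z k).im = a → ∀ w : ℂ, ‖w‖ ≤ 1 → HolomorphicAt D (w, z)) :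
    ∃ D₁ D₂ : ℂ × (Fin d → ℂ) → ℂ, ∀ z ∈ X ∩ polyhedron l, ∀ w : ℂ, ‖w‖ ≤ 1 →
      ((u * z k).im ≤ a → HolomorphicAt D₁ (w, z)) ∧
      (a ≤ (u * z k).im → HolomorphicAt D₂ (w, z)) ∧
      ((u * z k).im = a → ∀ᶠ q in 𝓝 (w, z), D q = D₁ q - D₂ q) := by
  have htail : Differentiable ℂ fun q : Fin (d + 1) → ℂ => (q 0, vecTail q) :=
    (differentiable_apply 0).prodMk differentiable_vecTail
  obtain ⟨D₁, D₂, hD₁, hD₂, hsub⟩ := hs _ (hX.vecCons 1) k.succ u hu a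
    (fun q => D (q 0, vecTail q)) fun q hq hqa =>
      .comp (hD _ ⟨hq.1.2, mem_polyhedron_map_comp.1 hq.2⟩ hqa _ hq.1.1)
        (.of_differentiable htail q)
  refine ⟨fun q => D₁ (vecCons q.1 q.2), fun q => D₂ (vecCons q.1 q.2), fun z hz w hw => ?_⟩
  have hmem : (vecCons w z : Fin (d + 1) → ℂ) ∈ {q : Fin (d + 1) → ℂ | ‖q 0‖ ≤ 1 ∧ vecTail q ∈ X} ∩
      polyhedron (l.map (· ∘ vecTail)) := ⟨⟨hw, hz.1⟩, mem_polyhedron_map_comp.2 hz.2⟩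
  have hcons := HolomorphicAt.of_differentiable differentiable_vecCons (w, z)
  exact ⟨fun h => .comp (f := fun q : ℂ × (Fin d → ℂ) => vecCons q.1 q.2) (hD₁ _ hmem h) hcons,
    fun h => .comp (f := fun q : ℂ × (Fin d → ℂ) => vecCons q.1 q.2) (hD₂ _ hmem h) hcons,
    fun h => hcons.differentiableAt.continuousAt.eventually (hsub _ hmem h)⟩

theorem holomorphicAt_ite_of_eventuallyEq {E : Type*} [NormedAddCommGroup E] [NormedSpace ℂ E]
    {φ : E → ℝ} {z : E} {a : ℝ} {g₁ g₂ : E → ℂ} (hφ : ContinuousAt φ z)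
    (h₁ : φ z ≤ a → HolomorphicAt g₁ z) (h₂ : a ≤ φ z → HolomorphicAt g₂ z)
    (h : φ z = a → g₁ =ᶠ[𝓝 z] g₂) : HolomorphicAt (fun y => if φ y ≤ a then g₁ y else g₂ y) z := by
  rcases lt_trichotomy (φ z) a with hlt | heq | hgt
  · refine (h₁ hlt.le).congr ?_
    filter_upwards [hφ.eventually_lt continuousAt_const hlt] with y hy using (if_pos hy.le).symm
  · refine (h₁ heq.le).congr ?_
    filter_upwards [h heq] with y hy
    rw [hy, ite_self]
  · refine (h₂ hgt.le).congr ?_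
    filter_upwards [continuousAt_const.eventually_lt hφ hgt] with y hy using (if_neg hy.not_ge).symm

/-- `f` extends from the part of `X` inside the polyhedron of `p :: l`, embedded as a graph, to a
function holomorphic near the product of the unit disc and the part of `X` inside the polyhedron
of `l`, as in Oka's extension theorem. -/
def Extends (l : List ((Fin d → ℂ) → ℂ)) (p f : (Fin d → ℂ) → ℂ) (X : Set (Fin d → ℂ)) : Prop :=
  ∃ H : ℂ × (Fin d → ℂ) → ℂ,
    (∀ z ∈ X ∩ polyhedron l, ∀ w : ℂ, ‖w‖ ≤ 1 → HolomorphicAt H (w, z)) ∧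
    ∀ z ∈ X ∩ polyhedron (p :: l), ∀ᶠ y in 𝓝 z, H (p y, y) = f y

-- Two extensions differ by a multiple of `w - p z`, so that a splitting of the quotient corrects
-- them to one function without changing their values on the graph.
theorem Extends.merge (hp : Differentiable ℂ p) (hs : CousinSolvable (l.map (· ∘ vecTail)))
    (hX : Brick X) (k : Fin d) {u : ℂ} (hu : u ≠ 0) (a : ℝ)
    (h₁ : Extends l p f (X ∩ {z | (u * z k).im ≤ a}))
    (h₂ : Extends l p f (X ∩ {z | a ≤ (u * z k).im})) : Extends l p f X := by
  obtain ⟨H₁, hH₁, hf₁⟩ := h₁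
  obtain ⟨H₂, hH₂, hf₂⟩ := h₂
  obtain ⟨D, hD⟩ := exists_holomorphicAt_eq_sub_mul_of_graph (p := p)
    (G := fun q => H₁ q - H₂ q)
    (S := {q | ‖q.1‖ ≤ 1 ∧ q.2 ∈ X ∩ polyhedron l ∧ (u * q.2 k).im = a})
    (fun q _ => .of_differentiable hp _)
    (fun q ⟨hw, hz, ha⟩ => (hH₁ _ ⟨⟨hz.1, ha.le⟩, hz.2⟩ _ hw).sub
      (hH₂ _ ⟨⟨hz.1, ha.ge⟩, hz.2⟩ _ hw))
    (fun q ⟨hw, hz, ha⟩ hqp => by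
      have hpz := mem_polyhedron_cons.2 ⟨hqp ▸ hw, hz.2⟩
      filter_upwards [hf₁ _ ⟨⟨hz.1, ha.le⟩, hpz⟩, hf₂ _ ⟨⟨hz.1, ha.ge⟩, hpz⟩] with y hy₁ hy₂
      rw [hy₁, hy₂, sub_self])
  obtain ⟨D₁, D₂, hD₁₂⟩ := hs.prod hX k hu a fun z hz ha w hw => (hD (w, z) ⟨hw, hz, ha⟩).1
  have him : Continuous fun z : Fin d → ℂ => (u * z k).im := by fun_prop
  have hgraph : Differentiable ℂ fun q : ℂ × (Fin d → ℂ) => q.1 - p q.2 := by fun_prop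
  refine ⟨fun q => if (u * q.2 k).im ≤ a then H₁ q - (q.1 - p q.2) * D₁ q else
    H₂ q - (q.1 - p q.2) * D₂ q, fun z hz w hw => ?_, fun z hz => ?_⟩
  · obtain ⟨hD₁, hD₂, hsub⟩ := hD₁₂ z hz w hw
    have hg := HolomorphicAt.of_differentiable hgraph (w, z)
    refine holomorphicAt_ite_of_eventuallyEq (him.comp continuous_snd).continuousAt
      (fun h => (hH₁ z ⟨⟨hz.1, h⟩, hz.2⟩ w hw).sub (hg.mul (hD₁ h)))
      (fun h => (hH₂ z ⟨⟨hz.1, h⟩, hz.2⟩ w hw).sub (hg.mul (hD₂ h))) fun h => ?_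
    filter_upwards [(hD (w, z) ⟨hw, hz, h⟩).2, hsub h] with q hq hqD
    linear_combination hq + (q.1 - p q.2) * hqD
  · simp only [sub_self, zero_mul, sub_zero]
    rcases lt_trichotomy (u * z k).im a with hlt | heq | hgt
    · filter_upwards [him.continuousAt.eventually_lt continuousAt_const hlt,
        hf₁ z ⟨⟨hz.1, hlt.le⟩, hz.2⟩] with y hya hy
      rw [if_pos hya.le, hy]
    · filter_upwards [hf₁ z ⟨⟨hz.1, heq.le⟩, hz.2⟩, hf₂ z ⟨⟨hz.1, heq.ge⟩, hz.2⟩] with y hy₁ hy₂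
      rw [hy₁, hy₂, ite_self]
    · filter_upwards [continuousAt_const.eventually_lt him.continuousAt hgt,
        hf₂ z ⟨⟨hz.1, hgt.le⟩, hz.2⟩] with y hya hy
      rw [if_neg hya.not_ge, hy]

theorem isOpen_setOf_holomorphicAt {E F : Type*} [NormedAddCommGroup E] [NormedSpace ℂ E]
    [NormedAddCommGroup F] [NormedSpace ℂ F] (f : E → F) : IsOpen {x | HolomorphicAt f x} :=
  isOpen_iff_mem_nhds.2 fun _ hx => HolomorphicAt.eventually hx

theorem extends_of_cousinSolvable (hp : Differentiable ℂ p) (hl : ∀ q ∈ l, Continuous q)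
    (hs : CousinSolvable (l.map (· ∘ vecTail))) (hX : Brick X)
    (hf : ∀ z ∈ X ∩ polyhedron (p :: l), HolomorphicAt f z) : Extends l p f X := by
  have hcomp : IsCompact (X ∩ polyhedron (p :: l)) := hX.isCompact.inter_right
    (isClosed_polyhedron (List.forall_mem_cons.2 ⟨hp.continuous, hl⟩))
  obtain ⟨δ, hδ, hthick⟩ :=
    hcomp.exists_thickening_subset_open (isOpen_setOf_holomorphicAt f) hf
  refine Brick.induction_small (fun k u hu Y hY a h₁ h₂ => .merge hp hs hY k hu a h₁ h₂)
    hδ hX fun Y hYX _ hYδ => ?_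
  by_cases hne : (Y ∩ polyhedron (p :: l)).Nonempty
  · obtain ⟨y, hy, hyl⟩ := hne
    refine ⟨fun q => f q.2, fun z hz w _ => .comp ?_ (.of_differentiable differentiable_snd _),
      fun z _ => Eventually.of_forall fun y => rfl⟩
    exact hthick (mem_thickening_iff.2 ⟨y, ⟨hYX hy, hyl⟩, hYδ z hz.1 y hy⟩)
  · exact ⟨0, fun z _ w _ => .of_differentiable (differentiable_const 0) _,
      fun z hz => absurd ⟨z, hz⟩ hne⟩

theorem CousinSolvable.cons (hp : Differentiable ℂ p) (hl : ∀ q ∈ l, Continuous q)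
    (hs : CousinSolvable (l.map (· ∘ vecTail))) : CousinSolvable (p :: l) := by
  intro X hX k u hu a D hD
  obtain ⟨H, hH, hHD⟩ := extends_of_cousinSolvable (f := D) hp hl hs
    (hX.inter_strip k u isClosed_singleton (convex_singleton a))
    fun z hz => hD z ⟨hz.1.1, hz.2⟩ hz.1.2
  obtain ⟨D₁, D₂, hD₁₂⟩ := hs.prod hX k hu a fun z hz ha w hw => hH z ⟨⟨hz.1, ha⟩, hz.2⟩ w hw
  have hgraph : ∀ z, HolomorphicAt (fun z => (p z, z)) z := .of_differentiable (by fun_prop)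
  have hsplit := fun z (hz : z ∈ X ∩ polyhedron (p :: l)) =>
    have hz' := mem_polyhedron_cons.1 hz.2
    hD₁₂ z ⟨hz.1, hz'.2⟩ (p z) hz'.1
  refine ⟨fun z => D₁ (p z, z), fun z => D₂ (p z, z),
    fun z hz ha => .comp ((hsplit z hz).1 ha) (hgraph z),
    fun z hz ha => .comp ((hsplit z hz).2.1 ha) (hgraph z), fun z hz ha => ?_⟩
  filter_upwards [hHD z ⟨⟨hz.1, ha⟩, hz.2⟩,
    (hgraph z).differentiableAt.continuousAt.eventually ((hsplit z hz).2.2 ha)] with y hyH hyD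
  rw [← hyH, hyD]

theorem cousinSolvable_of_differentiable (l : List ((Fin d → ℂ) → ℂ))
    (hl : ∀ q ∈ l, Differentiable ℂ q) : CousinSolvable l := by
  induction h : l.length generalizing d with
  | zero =>
    rw [List.length_eq_zero_iff.1 h]
    exact cousinSolvable_nil
  | succ m ih =>
    obtain ⟨p, l, rfl⟩ := List.exists_cons_of_length_eq_add_one h
    rw [List.forall_mem_cons] at hl
    refine .cons hl.1 (fun q hq => (hl.2 q hq).continuous) (ih _ ?_ (by simpa using h))
    exact List.forall_mem_map.2 fun q hq => (hl.2 q hq).comp differentiable_vecTail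

theorem extends_of_differentiable (hp : Differentiable ℂ p) (hl : ∀ q ∈ l, Differentiable ℂ q)
    (hX : Brick X) (hf : ∀ z ∈ X ∩ polyhedron (p :: l), HolomorphicAt f z) : Extends l p f X :=
  extends_of_cousinSolvable hp (fun q hq => (hl q hq).continuous)
    (cousinSolvable_of_differentiable _ <| List.forall_mem_map.2 fun q hq =>
      (hl q hq).comp differentiable_vecTail) hX hf

end OkaExtension

section OkaWeil

open Matrix (vecCons vecTail)

theorem differentiableAt_eval {σ E : Type*} [NormedAddCommGroup E] [NormedSpace ℂ E]
    {g : E → σ → ℂ} {x : E} (hg : ∀ i, DifferentiableAt ℂ (fun y => g y i) x)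
    (p : MvPolynomial σ ℂ) : DifferentiableAt ℂ (fun y => eval (g y) p) x := by
  induction p using MvPolynomial.induction_on with
  | C a => simp
  | add p q hp hq => simp only [map_add]; exact hp.add hq
  | mul_X p i hp => simp only [map_mul, eval_X]; exact hp.mul (hg i)

theorem differentiable_eval {σ : Type*} [Finite σ] (p : MvPolynomial σ ℂ) :
    Differentiable ℂ fun z : σ → ℂ => eval z p := fun z =>
  have := Fintype.ofFinite σ
  differentiableAt_eval (g := fun z => z) (fun i => by fun_prop) p

section CauchyPowerSeries

variable {E : Type*} [NormedAddCommGroup E] [NormedSpace ℂ E]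

theorem norm_cauchyPowerSeries_coeff_le {g : ℂ → ℂ} {R M : ℝ} (hR : 0 < R)
    (hM : ∀ w ∈ sphere (0 : ℂ) R, ‖g w‖ ≤ M) (k : ℕ) :
    ‖(cauchyPowerSeries g 0 R).coeff k‖ ≤ M / R ^ k := by
  have hint : ∫ θ in (0 : ℝ)..2 * Real.pi, ‖g (circleMap 0 R θ)‖ ≤ M * (2 * Real.pi) := by
    have h := intervalIntegral.norm_integral_le_of_norm_le_const (a := 0) (b := 2 * Real.pi)
      (f := fun θ => ‖g (circleMap 0 R θ)‖) (C := M) fun θ _ => by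
        simpa using hM _ (circleMap_mem_sphere 0 hR.le θ)
    rw [sub_zero, abs_of_pos Real.two_pi_pos] at h
    exact (le_abs_self _).trans h
  calc ‖(cauchyPowerSeries g 0 R).coeff k‖ ≤ ‖cauchyPowerSeries g 0 R k‖ :=
        FormalMultilinearSeries.norm_apply_eq_norm_coef.ge
    _ ≤ ((2 * Real.pi)⁻¹ * ∫ θ in (0 : ℝ)..2 * Real.pi, ‖g (circleMap 0 R θ)‖) * |R|⁻¹ ^ k :=
        norm_cauchyPowerSeries_le g 0 R k
    _ ≤ ((2 * Real.pi)⁻¹ * (M * (2 * Real.pi))) * |R|⁻¹ ^ k := by gcongr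
    _ = M / R ^ k := by
        rw [abs_of_pos hR, inv_pow]
        field_simp

theorem norm_sum_cauchyPowerSeries_coeff_sub_le {g : ℂ → ℂ} {R M r : ℝ} {w : ℂ} (hr : 0 ≤ r)
    (hrR : r < R) (hg : DifferentiableOn ℂ g (closedBall 0 R))
    (hM : ∀ w ∈ closedBall (0 : ℂ) R, ‖g w‖ ≤ M) (hw : ‖w‖ ≤ r) (K : ℕ) :
    ‖∑ k ∈ Finset.range K, w ^ k * (cauchyPowerSeries g 0 R).coeff k - g w‖ ≤
      M * (r / R) ^ K / (1 - r / R) := by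
  have hR : 0 < R := hr.trans_lt hrR
  have hsum := hasSum_cauchyPowerSeries_integral (c := 0) (R := R) (w := w) (f := g)
    ((hg.continuousOn.mono sphere_subset_closedBall).circleIntegrable hR.le) (hw.trans_lt hrR)
  rw [zero_add, hg.circleIntegral_sub_inv_smul (by simpa using hw.trans_lt hrR),
    inv_smul_smul₀ Complex.two_pi_I_ne_zero] at hsum
  simp only [FormalMultilinearSeries.apply_eq_pow_smul_coeff, smul_eq_mul] at hsum
  refine norm_sub_le_of_geometric_bound_of_hasSum ((div_lt_one hR).2 hrR) (fun k => ?_) hsum K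
  have : 0 ≤ M := (norm_nonneg _).trans (hM 0 (mem_closedBall_self hR.le))
  calc ‖w ^ k * (cauchyPowerSeries g 0 R).coeff k‖
      = ‖w‖ ^ k * ‖(cauchyPowerSeries g 0 R).coeff k‖ := by rw [norm_mul, norm_pow]
    _ ≤ r ^ k * (M / R ^ k) := by
        gcongr
        exact norm_cauchyPowerSeries_coeff_le hR (fun w hw => hM w (sphere_subset_closedBall hw)) k
    _ = M * (r / R) ^ k := by rw [div_pow]; ring

theorem cauchyPowerSeries_coeff_eq_circleIntegral (g : ℂ → ℂ) (R : ℝ) (k : ℕ) :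
    (cauchyPowerSeries g 0 R).coeff k =
      (2 * Real.pi * Complex.I)⁻¹ * ∮ w in C(0, R), g w * (w⁻¹ ^ k * w⁻¹) := by
  have h := (cauchyPowerSeries g 0 R).apply_eq_pow_smul_coeff (n := k) (z := 1)
  rw [one_pow, one_smul] at h
  rw [← h, cauchyPowerSeries_apply, smul_eq_mul]
  congr 2 with w
  simp only [sub_zero, one_div, smul_eq_mul]
  ring

theorem HolomorphicAt.cauchyPowerSeries_coeff [ProperSpace E] {f : ℂ × E → ℂ} {z : E} {R : ℝ}
    (hR : 0 < R) (hf : ∀ w ∈ sphere (0 : ℂ) R, HolomorphicAt f (w, z)) (k : ℕ) :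
    HolomorphicAt (fun z => (cauchyPowerSeries (fun w => f (w, z)) 0 R).coeff k) z := by
  simp only [cauchyPowerSeries_coeff_eq_circleIntegral]
  refine .mul (.of_differentiable (differentiable_const _) _) <| .circleIntegral
    (Q := fun q : E × ℂ => f (q.2, q.1) * (q.2⁻¹ ^ k * q.2⁻¹)) hR.le fun w hw => .mul
      (.comp (f := fun q : E × ℂ => (q.2, q.1)) (hf w hw) (.of_differentiable (by fun_prop) _)) ?_
  filter_upwards [(continuous_snd.tendsto (z, w)).eventually_ne (ne_of_mem_sphere hw hR.ne')]
    with q hq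
  have hinv : DifferentiableAt ℂ (fun q : E × ℂ => q.2⁻¹) q := differentiableAt_snd.inv hq
  exact (hinv.pow k).mul hinv

theorem exists_gt_forall_holomorphicAt {R : ℝ} (hR : 0 ≤ R) {P : Set E} (hP : IsCompact P)
    {f : ℂ × E → ℂ} (hf : ∀ w ∈ closedBall 0 R, ∀ z ∈ P, HolomorphicAt f (w, z)) :
    ∃ R' > R, ∀ w ∈ closedBall 0 R', ∀ z ∈ P, HolomorphicAt f (w, z) := by
  obtain ⟨δ, hδ, h⟩ := ((isCompact_closedBall (0 : ℂ) R).prod hP).exists_thickening_subset_open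
    (isOpen_setOf_holomorphicAt f) fun q hq => hf q.1 hq.1 q.2 hq.2
  refine ⟨R + δ / 2, by linarith, fun w hw z hz => h (a := (w, z)) ?_⟩
  have hsub : closedBall (0 : ℂ) (R + δ / 2) ⊆ thickening δ (closedBall 0 R) := by
    rw [thickening_closedBall hδ hR]
    exact closedBall_subset_ball (by linarith)
  obtain ⟨w', hw', hdist⟩ := mem_thickening_iff.1 (hsub hw)
  exact mem_thickening_iff.2 ⟨(w', z), ⟨hw', hz⟩, by simpa [Prod.dist_eq, hδ] using hdist⟩

theorem exists_approx_sum_pow_mul_of_holomorphicAt [ProperSpace E] {R : ℝ} (hR : 0 ≤ R) {P : Set E}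
    (hP : IsCompact P) {f : ℂ × E → ℂ}
    (hf : ∀ w ∈ closedBall 0 R, ∀ z ∈ P, HolomorphicAt f (w, z)) {ε : ℝ} (hε : 0 < ε) :
    ∃ (K : ℕ) (c : ℕ → E → ℂ), (∀ k, ∀ z ∈ P, HolomorphicAt (c k) z) ∧
      ∀ w ∈ closedBall 0 R, ∀ z ∈ P, ‖f (w, z) - ∑ k ∈ Finset.range K, w ^ k * c k z‖ ≤ ε := by
  obtain ⟨R', hRR', hf'⟩ := exists_gt_forall_holomorphicAt hR hP hf
  have hR' : 0 < R' := hR.trans_lt hRR'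
  have hratio : R / R' < 1 := (div_lt_one hR').2 hRR'
  obtain ⟨M, hM⟩ := ((isCompact_closedBall (0 : ℂ) R').prod hP).exists_bound_of_continuousOn
    (f := f) fun q hq =>
      (hf' q.1 hq.1 q.2 hq.2).differentiableAt.continuousAt.continuousWithinAt
  have hlim : Tendsto (fun K : ℕ => M * (R / R') ^ K / (1 - R / R')) atTop (𝓝 0) := by
    simpa using ((tendsto_pow_atTop_nhds_zero_of_lt_one (by positivity) hratio).const_mul
      M).div_const (1 - R / R')
  obtain ⟨K, hK⟩ := (hlim.eventually_lt_const hε).exists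
  refine ⟨K, fun k z => (cauchyPowerSeries (fun w => f (w, z)) 0 R').coeff k, fun k z hz =>
    .cauchyPowerSeries_coeff hR' (fun w hw => hf' w (sphere_subset_closedBall hw) z hz) k,
    fun w hw z hz => ?_⟩
  rw [norm_sub_rev]
  refine (norm_sum_cauchyPowerSeries_coeff_sub_le (g := fun w => f (w, z)) hR hRR' (fun w hw => ?_)
    (fun w hw => hM (w, z) ⟨hw, hz⟩) (mem_closedBall_zero_iff.1 hw) K).trans hK.le
  exact ((hf' w hw z hz).differentiableAt.comp w (f := fun w => (w, z))
    (by fun_prop)).differentiableWithinAt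

end CauchyPowerSeries

theorem norm_sum_pow_mul_sub_le {R ε : ℝ} {w : ℂ} (hw : ‖w‖ ≤ R) {K : ℕ} {a b : ℕ → ℂ}
    (hab : ∀ k, ‖a k - b k‖ ≤ ε) :
    ‖∑ k ∈ Finset.range K, w ^ k * a k - ∑ k ∈ Finset.range K, w ^ k * b k‖ ≤
      (∑ k ∈ Finset.range K, R ^ k) * ε := by
  rw [← Finset.sum_sub_distrib, Finset.sum_mul]
  refine norm_sum_le_of_le _ fun k _ => ?_
  rw [← mul_sub, norm_mul, norm_pow]
  have hR : 0 ≤ R := (norm_nonneg w).trans hw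
  gcongr
  exact hab k

theorem exists_polynomial_approx_polydisc {d : ℕ} {R : Fin d → ℝ} {f : (Fin d → ℂ) → ℂ}
    (hf : ∀ z, (∀ i, ‖z i‖ ≤ R i) → HolomorphicAt f z) {ε : ℝ} (hε : 0 < ε) :
    ∃ g : MvPolynomial (Fin d) ℂ, ∀ z, (∀ i, ‖z i‖ ≤ R i) → ‖f z - eval z g‖ ≤ ε := by
  induction d generalizing ε with
  | zero => exact ⟨C (f 0), fun z _ => by simpa [Subsingleton.elim z 0] using hε.le⟩
  | succ d ih =>
    rcases lt_or_ge (R 0) 0 with hR | hR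
    · exact ⟨0, fun z hz => absurd (hz 0) (hR.trans_le (norm_nonneg _)).not_ge⟩
    set P : Set (Fin d → ℂ) := Set.pi univ fun i => closedBall 0 (R i.succ) with hP
    have hmem : ∀ z, z ∈ P ↔ ∀ i, ‖z i‖ ≤ R i.succ := by simp [hP]
    obtain ⟨K, c, hc, hfc⟩ := exists_approx_sum_pow_mul_of_holomorphicAt hR
      (isCompact_univ_pi fun i => isCompact_closedBall 0 (R (Fin.succ i)))
      (f := fun q => f (vecCons q.1 q.2)) (fun w hw z hz => .comp (hf _ (Fin.forall_fin_succ.2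
        ⟨mem_closedBall_zero_iff.1 hw, (hmem z).1 hz⟩))
        (.of_differentiable differentiable_vecCons _)) (half_pos hε)
    set S := ∑ k ∈ Finset.range K, R 0 ^ k
    have hS : 0 ≤ S := Finset.sum_nonneg fun k _ => pow_nonneg hR k
    choose g hg using fun k => ih (R := fun i => R i.succ) (f := c k)
      (fun z hz => hc k z ((hmem z).2 hz)) (ε := ε / 2 / (S + 1)) (by positivity)
    refine ⟨∑ k ∈ Finset.range K, X 0 ^ k * rename Fin.succ (g k), fun q hq => ?_⟩
    rw [Fin.forall_fin_succ] at hq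
    have hq₁ := hfc (q 0) (mem_closedBall_zero_iff.2 hq.1) (vecTail q) ((hmem _).2 hq.2)
    have hq₂ := norm_sum_pow_mul_sub_le (K := K) hq.1 fun k => hg k (vecTail q) hq.2
    have heval : eval q (∑ k ∈ Finset.range K, X 0 ^ k * rename Fin.succ (g k)) =
        ∑ k ∈ Finset.range K, q 0 ^ k * eval (vecTail q) (g k) := by
      simp only [map_sum, map_mul, map_pow, eval_X, eval_rename, vecTail]
    have hqcons : vecCons (q 0) (vecTail q) = q := Matrix.cons_head_tail q
    rw [hqcons] at hq₁
    rw [heval]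
    calc _ ≤ ε / 2 + S * (ε / 2 / (S + 1)) := (norm_sub_le_norm_sub_add_norm_sub _ _ _).trans
          (add_le_add hq₁ hq₂)
      _ ≤ ε / 2 + (S + 1) * (ε / 2 / (S + 1)) := by gcongr; linarith
      _ = ε := by field_simp; norm_num

theorem brick_polydisc {d : ℕ} (R : Fin d → ℝ) : Brick {z : Fin d → ℂ | ∀ i, ‖z i‖ ≤ R i} :=
  ⟨fun i => closedBall 0 (R i), fun i => ⟨isCompact_closedBall _ _, convex_closedBall _ _⟩, by
    ext; simp⟩

theorem mem_polyhedron_eval {d : ℕ} {l : List (MvPolynomial (Fin d) ℂ)} {z : Fin d → ℂ} :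
    z ∈ polyhedron (l.map fun p z => eval z p) ↔ ∀ p ∈ l, ‖eval z p‖ ≤ 1 := List.forall_mem_map

theorem eval_bind₁_cons_X {d : ℕ} (p : MvPolynomial (Fin d) ℂ) (g : MvPolynomial (Fin (d + 1)) ℂ)
    (z : Fin d → ℂ) :
    eval z (bind₁ (vecCons p X) g) = eval (vecCons (eval z p) z) g := by
  refine (eval₂Hom_bind₁ (RingHom.id ℂ) z (vecCons p X) g).trans ?_
  congr 2
  funext i
  cases i using Fin.cases with
  | zero => rfl
  | succ i => exact eval_X i

theorem forall_mem_map_rename_succ {d : ℕ} {l : List (MvPolynomial (Fin d) ℂ)}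
    {z : Fin (d + 1) → ℂ} :
    (∀ p ∈ l.map (rename Fin.succ), ‖eval z p‖ ≤ 1) ↔ ∀ p ∈ l, ‖eval (vecTail z) p‖ ≤ 1 := by
  simp only [List.forall_mem_map, eval_rename]
  rfl

-- Each polynomial is traded for one more variable `w`, restricted to the graph `w = p z`.
theorem exists_polynomial_approx_polyhedron {d : ℕ} {R : Fin d → ℝ}
    {l : List (MvPolynomial (Fin d) ℂ)} {f : (Fin d → ℂ) → ℂ}
    (hf : ∀ z, (∀ i, ‖z i‖ ≤ R i) → (∀ p ∈ l, ‖eval z p‖ ≤ 1) → HolomorphicAt f z)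
    {ε : ℝ} (hε : 0 < ε) :
    ∃ g : MvPolynomial (Fin d) ℂ, ∀ z, (∀ i, ‖z i‖ ≤ R i) → (∀ p ∈ l, ‖eval z p‖ ≤ 1) →
      ‖f z - eval z g‖ ≤ ε := by
  induction h : l.length generalizing d with
  | zero =>
    rw [List.length_eq_zero_iff] at h
    subst h
    obtain ⟨g, hg⟩ := exists_polynomial_approx_polydisc (fun z hz => hf z hz (by simp)) hε
    exact ⟨g, fun z hz _ => hg z hz⟩
  | succ m ih =>
    obtain ⟨p, l, rfl⟩ := List.exists_cons_of_length_eq_add_one h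
    obtain ⟨H, hH, hHf⟩ := extends_of_differentiable (l := l.map fun p z => eval z p)
      (differentiable_eval p) (List.forall_mem_map.2 fun q _ => differentiable_eval q)
      (brick_polydisc R) fun z hz => hf z hz.1 (mem_polyhedron_eval.1 hz.2)
    obtain ⟨g, hg⟩ := ih (R := vecCons 1 R) (l := l.map (rename Fin.succ))
      (f := fun z => H (z 0, vecTail z)) (fun z hz hzl => by
        rw [Fin.forall_fin_succ] at hz
        exact .comp (g := H) (f := fun z => (z 0, vecTail z))
          (hH _ ⟨hz.2, mem_polyhedron_eval.2 (forall_mem_map_rename_succ.1 hzl)⟩ _ hz.1)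
          (.of_differentiable ((differentiable_apply 0).prodMk differentiable_vecTail) _))
      (by simpa using h)
    refine ⟨bind₁ (vecCons p X) g, fun z hz hzl => ?_⟩
    have hgraph : H (eval z p, z) = f z := (hHf z ⟨hz, mem_polyhedron_eval.2 hzl⟩).self_of_nhds
    have hpl := List.forall_mem_cons.1 hzl
    rw [eval_bind₁_cons_X, ← hgraph]
    exact hg (vecCons (eval z p) z) (Fin.forall_fin_succ.2 ⟨hpl.1, hz⟩)
      (forall_mem_map_rename_succ.2 hpl.2)

/-- Polynomial convexity of `K` with respect to the coordinates `e`, expressed by separating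
polynomials instead of the hull. -/
def PolynomiallyConvex {E σ : Type*} (e : E → σ → ℂ) (K : Set E) : Prop :=
  ∀ z ∉ K, ∃ p : MvPolynomial σ ℂ, (∀ w ∈ K, ‖eval (e w) p‖ ≤ 1) ∧ 1 < ‖eval (e z) p‖

theorem PolynomiallyConvex.exists_polyhedron_inter_subset {σ E : Type*} [TopologicalSpace E]
    {e : E → σ → ℂ} {K : Set E} (hsep : PolynomiallyConvex e K) (he : Continuous e)
    {X W : Set E} (hX : IsCompact X) (hW : IsOpen W) (hKW : K ⊆ W) :
    ∃ l : List (MvPolynomial σ ℂ), (∀ p ∈ l, ∀ w ∈ K, ‖eval (e w) p‖ ≤ 1) ∧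
      ∀ z ∈ X, (∀ p ∈ l, ‖eval (e z) p‖ ≤ 1) → z ∈ W := by
  choose! p hpK hpz using hsep
  obtain ⟨t, ht, hcover⟩ := (hX.diff hW).elim_nhds_subcover (fun z => {y | 1 < ‖eval (e y) (p z)‖})
    fun z hz => (isOpen_lt continuous_const ((continuous_eval (p z)).comp he).norm).mem_nhds
      (hpz z fun hzK => hz.2 (hKW hzK))
  refine ⟨t.toList.map p, List.forall_mem_map.2 fun y hy =>
    hpK y fun hyK => (ht y (Finset.mem_toList.1 hy)).2 (hKW hyK), fun z hzX hzl => ?_⟩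
  by_contra hzW
  obtain ⟨y, hy, hzy⟩ := mem_iUnion₂.1 (hcover ⟨hzX, hzW⟩)
  exact (hzl (p y) (List.mem_map_of_mem (Finset.mem_toList.2 hy))).not_gt hzy

theorem PolynomiallyConvex.exists_approx_fin {d : ℕ} {K : Set (Fin d → ℂ)}
    (hsep : PolynomiallyConvex id K) (hK : IsCompact K) {f : (Fin d → ℂ) → ℂ}
    (hf : ∀ z ∈ K, HolomorphicAt f z) {ε : ℝ} (hε : 0 < ε) :
    ∃ g : MvPolynomial (Fin d) ℂ, ∀ z ∈ K, ‖f z - eval z g‖ ≤ ε := by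
  obtain ⟨R, hR₀, hR⟩ := hK.isBounded.subset_closedBall_lt 0 0
  have hball : ∀ z : Fin d → ℂ, z ∈ closedBall 0 R ↔ ∀ i, ‖z i‖ ≤ R := fun z => by
    rw [mem_closedBall_zero_iff, pi_norm_le_iff_of_nonneg hR₀.le]
  obtain ⟨l, hlK, hl⟩ := hsep.exists_polyhedron_inter_subset continuous_id
    (isCompact_closedBall 0 R) (isOpen_setOf_holomorphicAt f) hf
  obtain ⟨g, hg⟩ := exists_polynomial_approx_polyhedron (R := fun _ => R)
    (fun z hz => hl z ((hball z).2 hz)) hε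
  exact ⟨g, fun z hz => hg z ((hball z).1 (hR hz)) fun p hp => hlK p hp z hz⟩

-- The Oka–Weil theorem.
theorem PolynomiallyConvex.exists_approx {σ E : Type*} [Finite σ] [NormedAddCommGroup E]
    [NormedSpace ℂ E] {e : E ≃L[ℂ] (σ → ℂ)} {K : Set E} (hsep : PolynomiallyConvex e K)
    (hK : IsCompact K) {f : E → ℂ} (hf : ∀ z ∈ K, HolomorphicAt f z) {ε : ℝ} (hε : 0 < ε) :
    ∃ g : MvPolynomial σ ℂ, ∀ z ∈ K, ‖f z - eval (e z) g‖ ≤ ε := by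
  have := Fintype.ofFinite σ
  set i := Fintype.equivFin σ
  set e' : E ≃L[ℂ] (Fin (Fintype.card σ) → ℂ) :=
    e.trans (LinearEquiv.funCongrLeft ℂ ℂ i.symm).toContinuousLinearEquiv
  have he' : ∀ z, e' z = e z ∘ i.symm := fun z => rfl
  have heval : ∀ z (p : MvPolynomial σ ℂ), eval (e' z) (rename i p) = eval (e z) p := fun z p => by
    rw [eval_rename, he', Function.comp_assoc, Equiv.symm_comp_self, Function.comp_id]
  have hsep' : PolynomiallyConvex id (e' '' K) := by
    refine e'.surjective.forall.2 fun z hz => ?_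
    obtain ⟨p, hpK, hpz⟩ := hsep z fun h => hz (mem_image_of_mem _ h)
    exact ⟨rename i p, forall_mem_image.2 fun w hw => (heval w p).symm ▸ hpK w hw,
      (heval z p).symm ▸ hpz⟩
  obtain ⟨g, hg⟩ := hsep'.exists_approx_fin (f := f ∘ e'.symm) (hK.image e'.continuous)
    (forall_mem_image.2 fun z hz => .comp (g := f) (f := e'.symm)
      (by simpa only [e'.symm_apply_apply] using hf z hz)
      (.of_differentiable e'.symm.differentiable _)) hε
  refine ⟨rename i.symm g, fun z hz => ?_⟩
  rw [eval_rename, ← he']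
  simpa only [Function.comp_apply, e'.symm_apply_apply] using hg (e' z) (mem_image_of_mem _ hz)

end OkaWeil

section Separation

theorem PolynomiallyConvex.of_hull_eq {E σ : Type*} [TopologicalSpace E] {e : E → σ → ℂ}
    (he : Continuous e) {K : Set E} (hK : IsCompact K)
    (hull : {z | ∀ p : MvPolynomial σ ℂ,
      ‖eval (e z) p‖ ≤ sSup ((fun w => ‖eval (e w) p‖) '' K)} = K) :
    PolynomiallyConvex e K := by
  intro z hz
  rw [← hull, mem_ofPred_eq] at hz
  push Not at hz
  obtain ⟨p, hp⟩ := hz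
  set S := sSup ((fun w => ‖eval (e w) p‖) '' K)
  have hS : 0 ≤ S := Real.sSup_nonneg (forall_mem_image.2 fun w _ => norm_nonneg _)
  have hpK : ∀ w ∈ K, ‖eval (e w) p‖ ≤ S := fun w hw =>
    le_csSup (hK.image ((continuous_eval p).comp he).norm).bddAbove (mem_image_of_mem _ hw)
  obtain ⟨c, hSc, hcp⟩ := exists_between hp
  have hc : 0 < c := hS.trans_lt hSc
  have hnorm : ∀ w, ‖eval (e w) (C ((c : ℂ)⁻¹) * p)‖ = ‖eval (e w) p‖ / c := fun w => by
    rw [map_mul, eval_C, norm_mul, norm_inv, Complex.norm_real, Real.norm_of_nonneg hc.le,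
      inv_mul_eq_div]
  refine ⟨C ((c : ℂ)⁻¹) * p, fun w hw => ?_, ?_⟩
  · rw [hnorm, div_le_one hc]
    exact (hpK w hw).trans hSc.le
  · rwa [hnorm, one_lt_div hc]

theorem exists_norm_eval_mul_le_of_one_lt {E σ : Type*} {e : E → σ → ℂ} {K : Set E} {q : E}
    {P : MvPolynomial σ ℂ} (hPK : ∀ w ∈ K, ‖eval (e w) P‖ ≤ 1) (hPq : 1 < ‖eval (e q) P‖)
    {u : E → ℂ} (hu : ∃ B, ∀ w ∈ K, ‖u w‖ ≤ B) (huq : u q ≠ 0) :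
    ∃ Q : MvPolynomial σ ℂ, (∀ w ∈ K, ‖eval (e w) Q * u w‖ ≤ 1 / 2) ∧
      eval (e q) Q * u q = 2 := by
  obtain ⟨B, hB⟩ := hu
  set a := eval (e q) P
  have ha : a ≠ 0 := norm_pos_iff.1 (zero_lt_one.trans hPq)
  have hlim : Tendsto (fun k : ℕ => ‖2 / u q‖ * (‖a‖⁻¹ ^ k * B)) atTop (𝓝 0) := by
    simpa using ((tendsto_pow_atTop_nhds_zero_of_lt_one (by positivity)
      (inv_lt_one_of_one_lt₀ hPq)).mul_const B).const_mul ‖2 / u q‖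
  obtain ⟨k, hk⟩ := (hlim.eventually_lt_const one_half_pos).exists
  refine ⟨C (2 / u q) * (C a⁻¹ * P) ^ k, fun w hw => hk.le.trans' ?_, ?_⟩
  · simp only [map_mul, map_pow, eval_C, norm_mul, norm_pow, norm_inv, mul_assoc]
    gcongr
    · exact mul_le_of_le_one_right (by positivity) (hPK w hw)
    · exact hB w hw
  · simp only [map_mul, map_pow, eval_C]
    rw [inv_mul_cancel₀ ha, one_pow, mul_one, div_mul_cancel₀ _ huq]

theorem PolynomiallyConvex.exists_approx_indicator {σ E : Type*} [Finite σ]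
    [NormedAddCommGroup E] [NormedSpace ℂ E] {e : E ≃L[ℂ] (σ → ℂ)} {A B : Set E}
    (hAB : PolynomiallyConvex e (A ∪ B)) (hA : IsCompact A) (hB : IsCompact B)
    (hdisj : Disjoint A B) {ε : ℝ} (hε : 0 < ε) :
    ∃ p : MvPolynomial σ ℂ, (∀ w ∈ A, ‖eval (e w) p‖ ≤ ε) ∧
      ∀ w ∈ B, ‖eval (e w) p - 1‖ ≤ ε := by
  obtain ⟨U, V, hU, hV, hAU, hBV, hUV⟩ := SeparatedNhds.of_isCompact_isCompact hA hB hdisj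
  set χ : E → ℂ := V.indicator fun _ => 1
  have hχU : ∀ w ∈ U, χ w = 0 := fun w hw => indicator_of_notMem (disjoint_left.1 hUV hw) _
  have hχV : ∀ w ∈ V, χ w = 1 := fun w hw => indicator_of_mem hw _
  have hχ : ∀ w ∈ A ∪ B, HolomorphicAt χ w := by
    rintro w (hw | hw)
    · refine .congr (.of_differentiable (differentiable_const 0) w) ?_
      filter_upwards [hU.mem_nhds (hAU hw)] with y hy using (hχU y hy).symm
    · refine .congr (.of_differentiable (differentiable_const 1) w) ?_
      filter_upwards [hV.mem_nhds (hBV hw)] with y hy using (hχV y hy).symm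
  obtain ⟨p, hp⟩ := hAB.exists_approx (hA.union hB) hχ hε
  refine ⟨p, fun w hw => ?_, fun w hw => ?_⟩
  · simpa [hχU w (hAU hw)] using hp w (.inl hw)
  · simpa [hχV w (hBV hw), norm_sub_rev] using hp w (.inr hw)

variable {E F σ τ : Type*} [Fintype σ] [Fintype τ] [NormedAddCommGroup E] [NormedSpace ℂ E]
  [NormedAddCommGroup F] [NormedSpace ℂ F] {e : E ≃L[ℂ] (σ → ℂ)} {e' : F ≃L[ℂ] (τ → ℂ)}

/-- The coordinates on `E × F` obtained by juxtaposing coordinates on `E` and on `F`. -/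
def prodCoord (e : E ≃L[ℂ] (σ → ℂ)) (e' : F ≃L[ℂ] (τ → ℂ)) : (E × F) ≃L[ℂ] (σ ⊕ τ → ℂ) :=
  (e.prodCongr e').trans
    (LinearEquiv.sumArrowLequivProdArrow σ τ ℂ ℂ).symm.toContinuousLinearEquiv

theorem prodCoord_apply (w : E × F) : prodCoord e e' w = Sum.elim (e w.1) (e' w.2) := by
  ext i
  cases i <;> rfl

theorem eval_prodCoord_rename_inl (w : E × F) (p : MvPolynomial σ ℂ) :
    eval (prodCoord e e' w) (rename Sum.inl p) = eval (e w.1) p := by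
  rw [eval_rename, prodCoord_apply, Sum.elim_comp_inl]

variable {L : Set E} {K : Set (E × F)} {f : E → F}

theorem PolynomiallyConvex.exists_approx_mul_sub (hL : PolynomiallyConvex e L) (hLc : IsCompact L)
    (hf : ∀ z ∈ L, HolomorphicAt f z) {S : Set (E × F)} (hS : IsCompact S)
    (hSL : ∀ w ∈ S, w.1 ∈ L) (Q : MvPolynomial (σ ⊕ τ) ℂ) (j : τ) {ε : ℝ} (hε : 0 < ε) :
    ∃ p : MvPolynomial (σ ⊕ τ) ℂ, ∀ w ∈ S, ‖eval (prodCoord e e' w) p -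
      eval (prodCoord e e' w) Q * (e' w.2 j - e' (f w.1) j)‖ ≤ ε := by
  have hfj : ∀ z ∈ L, HolomorphicAt (fun z => e' (f z) j) z := fun z hz =>
    .comp (g := fun v => e' v j) (f := f) (.of_differentiable (by fun_prop) _) (hf z hz)
  obtain ⟨M, hM⟩ := hS.exists_bound_of_continuousOn
    ((continuous_eval Q).comp (prodCoord e e').continuous).continuousOn
  obtain ⟨g, hg⟩ := hL.exists_approx hLc hfj (ε := ε / (|M| + 1)) (by positivity)
  refine ⟨Q * (X (Sum.inr j) - rename Sum.inl g), fun w hw => ?_⟩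
  have heval : eval (prodCoord e e' w) (Q * (X (Sum.inr j) - rename Sum.inl g)) -
      eval (prodCoord e e' w) Q * (e' w.2 j - e' (f w.1) j) =
        eval (prodCoord e e' w) Q * (e' (f w.1) j - eval (e w.1) g) := by
    rw [map_mul, map_sub, eval_X, eval_prodCoord_rename_inl, prodCoord_apply, Sum.elim_inr]
    ring
  rw [heval, norm_mul]
  calc _ ≤ (|M| + 1) * (ε / (|M| + 1)) :=
        mul_le_mul ((hM w hw).trans (by linarith [le_abs_self M])) (hg w.1 (hSL w hw))
          (norm_nonneg _) (by positivity)
    _ = ε := by field_simp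

-- `Q` is a polynomial for which `Q * u`, with `u w = w.2 j - f w.1 j`, is small on `K` and equal
-- to `2` at `q`; it vanishes on the graph, and approximating `f · j` over `L` makes it polynomial.
theorem exists_separating_polynomial_of_mem (hL : PolynomiallyConvex e L) (hLc : IsCompact L)
    (hK : PolynomiallyConvex (prodCoord e e') K) (hKc : IsCompact K) (hKL : ∀ w ∈ K, w.1 ∈ L)
    (hf : ∀ z ∈ L, HolomorphicAt f z) {q : E × F} (hqL : q.1 ∈ L) (hqK : q ∉ K)
    (hqf : q.2 ≠ f q.1) :
    ∃ p : MvPolynomial (σ ⊕ τ) ℂ, (∀ w ∈ K ∪ (fun z => (z, f z)) '' L,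
      ‖eval (prodCoord e e' w) p‖ ≤ 1) ∧ 1 < ‖eval (prodCoord e e' q) p‖ := by
  obtain ⟨j, hj⟩ : ∃ j, e' q.2 j ≠ e' (f q.1) j := Function.ne_iff.1 (e'.injective.ne hqf)
  obtain ⟨P, hPK, hPq⟩ := hK q hqK
  have hfc : ContinuousOn f L := fun z hz =>
    (hf z hz).differentiableAt.continuousAt.continuousWithinAt
  set u : E × F → ℂ := fun w => e' w.2 j - e' (f w.1) j with hu
  have huc : ContinuousOn u (Prod.fst ⁻¹' L) := by
    have hcoord : Continuous fun v : F => e' v j := by fun_prop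
    exact (hcoord.comp continuous_snd).continuousOn.sub
      (hcoord.comp_continuousOn (hfc.comp continuousOn_fst (mapsTo_preimage _ _)))
  obtain ⟨Q, hQK, hQq⟩ := exists_norm_eval_mul_le_of_one_lt hPK hPq
    (hKc.exists_bound_of_continuousOn (huc.mono hKL)) (sub_ne_zero.2 hj)
  have hΓ : IsCompact ((fun z => (z, f z)) '' L) :=
    hLc.image_of_continuousOn (continuousOn_id.prodMk hfc)
  obtain ⟨p, hp⟩ := hL.exists_approx_mul_sub (e' := e') hLc hf ((hKc.union hΓ).insert q)
    (by rintro w (rfl | hw | ⟨z, hz, rfl⟩); exacts [hqL, hKL w hw, hz]) Q j one_half_pos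
  refine ⟨p, fun w hw => ?_, ?_⟩
  · have hQu : ‖eval (prodCoord e e' w) Q * u w‖ ≤ 1 / 2 := by
      rcases hw with hw | ⟨z, _, rfl⟩
      · exact hQK w hw
      · simp [hu]
    calc _ ≤ _ := norm_le_norm_add_norm_sub' _ (eval (prodCoord e e' w) Q * u w)
      _ ≤ 1 / 2 + 1 / 2 := add_le_add hQu (hp w (.inr hw))
      _ = 1 := add_halves 1
  · have hpq := hp q (.inl rfl)
    have hQ : ‖eval (prodCoord e e' q) Q * u q‖ = 2 := by rw [hQq, Complex.norm_ofNat]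
    linarith [norm_le_norm_add_norm_sub (eval (prodCoord e e' q) p)
      (eval (prodCoord e e' q) Q * u q)]

theorem PolynomiallyConvex.union_graph (hL : PolynomiallyConvex e L) (hLc : IsCompact L)
    (hK : PolynomiallyConvex (prodCoord e e') K) (hKc : IsCompact K) (hKL : ∀ w ∈ K, w.1 ∈ L)
    (hf : ∀ z ∈ L, HolomorphicAt f z) :
    PolynomiallyConvex (prodCoord e e') (K ∪ (fun z => (z, f z)) '' L) := by
  intro q hq
  by_cases hqL : q.1 ∈ L
  · exact exists_separating_polynomial_of_mem hL hLc hK hKc hKL hf hqL (fun h => hq (.inl h))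
      fun h => hq (.inr ⟨q.1, hqL, Prod.ext rfl h.symm⟩)
  · obtain ⟨p, hpL, hpq⟩ := hL q.1 hqL
    refine ⟨rename Sum.inl p, fun w hw => ?_, by rwa [eval_prodCoord_rename_inl]⟩
    rw [eval_prodCoord_rename_inl]
    rcases hw with hw | ⟨z, hz, rfl⟩
    exacts [hpL _ (hKL w hw), hpL z hz]

theorem PolynomiallyConvex.exists_eval_indicator_graph (hL : PolynomiallyConvex e L)
    (hLc : IsCompact L) (hK : PolynomiallyConvex (prodCoord e e') K) (hKc : IsCompact K)
    (hKL : ∀ w ∈ K, w.1 ∈ L) (hf : ∀ z ∈ L, HolomorphicAt f z) (hfK : ∀ z ∈ L, (z, f z) ∉ K)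
    {ε : ℝ} (hε : 0 < ε) :
    ∃ p : MvPolynomial (σ ⊕ τ) ℂ, (∀ w ∈ K, ‖eval (prodCoord e e' w) p‖ ≤ ε) ∧
      ∀ z ∈ L, ‖eval (prodCoord e e' (z, f z)) p - 1‖ ≤ ε := by
  have hgraph : IsCompact ((fun z => (z, f z)) '' L) :=
    hLc.image_of_continuousOn (continuousOn_id.prodMk fun z hz =>
      (hf z hz).differentiableAt.continuousAt.continuousWithinAt)
  have hdisj : Disjoint K ((fun z => (z, f z)) '' L) := by
    rw [disjoint_right]
    exact forall_mem_image.2 hfK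
  obtain ⟨p, hpK, hpL⟩ := (hL.union_graph hLc hK hKc hKL hf).exists_approx_indicator hKc hgraph
    hdisj hε
  exact ⟨p, hpK, forall_mem_image.1 hpL⟩

end Separation

section Isotopy

variable {E W : Type*} [NormedAddCommGroup E] [NormedSpace ℂ E] [NormedAddCommGroup W]
  [NormedSpace ℂ W] {U : Set E}

theorem differentiableOn_fibre_comp {Φ Φ' : E × W → W} (h : DifferentiableOn ℂ Φ (U ×ˢ univ))
    (h' : DifferentiableOn ℂ Φ' (U ×ˢ univ)) :
    DifferentiableOn ℂ (fun q => Φ (q.1, Φ' q)) (U ×ˢ univ) :=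
  h.comp (differentiableOn_fst.prodMk h') fun _ hq => ⟨hq.1, mem_univ _⟩

/-- `Φ` and `Ψ` are mutually inverse families of holomorphic automorphisms of `W`, depending
holomorphically on a parameter in `U`. -/
structure FibreAut (U : Set E) (Φ Ψ : E × W → W) : Prop where
  diff : DifferentiableOn ℂ Φ (U ×ˢ univ)
  diff_inv : DifferentiableOn ℂ Ψ (U ×ˢ univ)
  left_inv : ∀ z ∈ U, ∀ ζ, Ψ (z, Φ (z, ζ)) = ζ
  right_inv : ∀ z ∈ U, ∀ ζ, Φ (z, Ψ (z, ζ)) = ζ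

theorem FibreAut.mono {O : Set E} {Φ Ψ : E × W → W} (h : FibreAut U Φ Ψ) (hO : O ⊆ U) :
    FibreAut O Φ Ψ where
  diff := h.diff.mono (prod_mono_left hO)
  diff_inv := h.diff_inv.mono (prod_mono_left hO)
  left_inv z hz := h.left_inv z (hO hz)
  right_inv z hz := h.right_inv z (hO hz)

theorem FibreAut.comp {Φ Ψ Φ' Ψ' : E × W → W} (h : FibreAut U Φ Ψ) (h' : FibreAut U Φ' Ψ') :
    FibreAut U (fun q => Φ (q.1, Φ' q)) (fun q => Ψ' (q.1, Ψ q)) where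
  diff := differentiableOn_fibre_comp h.diff h'.diff
  diff_inv := differentiableOn_fibre_comp h'.diff_inv h.diff_inv
  left_inv z hz ζ := by simp only [h.left_inv z hz, h'.left_inv z hz]
  right_inv z hz ζ := by simp only [h.right_inv z hz, h'.right_inv z hz]

theorem FibreAut.iterate {Φ Ψ : E × W → W} (h : FibreAut U Φ Ψ) (m : ℕ) :
    FibreAut U (fun q => (fun ζ => Φ (q.1, ζ))^[m] q.2)
      (fun q => (fun ζ => Ψ (q.1, ζ))^[m] q.2) := by
  induction m with
  | zero => exact ⟨differentiableOn_snd, differentiableOn_snd, fun _ _ _ => rfl, fun _ _ _ => rfl⟩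
  | succ m ih =>
    simp only [Function.iterate_succ_apply' (fun ζ => Φ (_, ζ)),
      Function.iterate_succ_apply (fun ζ => Ψ (_, ζ))]
    exact h.comp ih

theorem FibreAut.recentre {Φ Ψ : E × W → W} (h : FibreAut U Φ Ψ) :
    FibreAut U (fun q => Φ (q.1, q.2 + Ψ (q.1, 0))) (fun q => Ψ q - Ψ (q.1, 0)) := by
  have h0 : DifferentiableOn ℂ (fun q : E × W => Ψ (q.1, 0)) (U ×ˢ univ) :=
    differentiableOn_fibre_comp h.diff_inv (differentiableOn_const 0)
  exact ⟨differentiableOn_fibre_comp h.diff (differentiableOn_snd.add h0), h.diff_inv.sub h0,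
    fun z hz ζ => by simp only [h.left_inv z hz, add_sub_cancel_right],
    fun z hz ζ => by simp only [sub_add_cancel, h.right_inv z hz]⟩

theorem hasDerivAt_comp_of_forall_zero_eq {Φ : ℂ → W → W} {γ : ℂ → W} {y y' : W}
    (hΦ : DifferentiableAt ℂ (fun q : ℂ × W => Φ q.1 q.2) (0, γ 0)) (h₀ : ∀ ζ, Φ 0 ζ = ζ)
    (hy : HasDerivAt (fun t => Φ t (γ 0)) y 0) (hγ : HasDerivAt γ y' 0) :
    HasDerivAt (fun t => Φ t (γ t)) (y + y') 0 := by
  obtain ⟨A, hA⟩ := hΦ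
  have hA₁ : A (1, 0) = y := (hA.comp_hasDerivAt (f := fun t : ℂ => (t, γ 0)) 0
    ((hasDerivAt_id 0).prodMk (hasDerivAt_const 0 _))).unique hy
  have hA₂ : A.comp (.inr ℂ ℂ W) = .id ℂ W := by
    have h : HasFDerivAt (fun ζ => Φ 0 ζ) (A.comp (.inr ℂ ℂ W)) (γ 0) :=
      hA.comp (f := fun ζ : W => ((0 : ℂ), ζ)) (γ 0) (hasFDerivAt_prodMk_right 0 _)
    exact h.unique (by simpa only [h₀] using! hasFDerivAt_id (γ 0))
  refine (hA.comp_hasDerivAt (f := fun t : ℂ => (t, γ t)) 0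
    ((hasDerivAt_id 0).prodMk hγ)).congr_deriv ?_
  calc A (1, y') = A (1, 0) + A.comp (.inr ℂ ℂ W) y' := by simp [← map_add]
    _ = y + y' := by rw [hA₁, hA₂, ContinuousLinearMap.id_apply]

/-- A holomorphic one-parameter family `Φ` of fibred automorphisms of `U × W`, with inverses `Ψ`,
which starts at the identity with velocity `Y`. -/
structure FibreIsotopy (U : Set E) (Y : E × W → W) (Φ Ψ : ℂ → E × W → W) : Prop where
  diff : DifferentiableOn ℂ (fun q : ℂ × E × W => Φ q.1 q.2) (univ ×ˢ (U ×ˢ univ))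
  diff_inv : DifferentiableOn ℂ (fun q : ℂ × E × W => Ψ q.1 q.2) (univ ×ˢ (U ×ˢ univ))
  left_inv : ∀ t, ∀ z ∈ U, ∀ ζ, Ψ t (z, Φ t (z, ζ)) = ζ
  right_inv : ∀ t, ∀ z ∈ U, ∀ ζ, Φ t (z, Ψ t (z, ζ)) = ζ
  zero : ∀ z ∈ U, ∀ ζ, Φ 0 (z, ζ) = ζ
  deriv : ∀ z ∈ U, ∀ ζ, HasDerivAt (fun t => Φ t (z, ζ)) (Y (z, ζ)) 0

theorem FibreIsotopy.fibreAut {Y : E × W → W} {Φ Ψ : ℂ → E × W → W} (h : FibreIsotopy U Y Φ Ψ)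
    (t : ℂ) : FibreAut U (Φ t) (Ψ t) where
  diff := h.diff.comp (f := fun q => (t, q)) (by fun_prop) fun _ hq => ⟨mem_univ _, hq⟩
  diff_inv := h.diff_inv.comp (f := fun q => (t, q)) (by fun_prop) fun _ hq => ⟨mem_univ _, hq⟩
  left_inv := h.left_inv t
  right_inv := h.right_inv t

theorem FibreIsotopy.zero_inv {Y : E × W → W} {Φ Ψ : ℂ → E × W → W} (h : FibreIsotopy U Y Φ Ψ)
    {z : E} (hz : z ∈ U) (ζ : W) : Ψ 0 (z, ζ) = ζ := by
  simpa only [h.zero z hz] using h.left_inv 0 z hz ζ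

theorem differentiableAt_of_isotopy (hU : IsOpen U) {Φ : ℂ → E × W → W}
    (hΦ : DifferentiableOn ℂ (fun q : ℂ × E × W => Φ q.1 q.2) (univ ×ˢ (U ×ˢ univ)))
    {z : E} (hz : z ∈ U) (q : ℂ × W) : DifferentiableAt ℂ (fun q : ℂ × W => Φ q.1 (z, q.2)) q :=
  (hΦ.differentiableAt ((isOpen_univ.prod (hU.prod isOpen_univ)).mem_nhds (x := (q.1, z, q.2))
    ⟨mem_univ _, hz, mem_univ _⟩)).comp q (f := fun q : ℂ × W => (q.1, z, q.2)) (by fun_prop)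

theorem FibreIsotopy.deriv_inv {Y : E × W → W} {Φ Ψ : ℂ → E × W → W} (h : FibreIsotopy U Y Φ Ψ)
    (hU : IsOpen U) {z : E} (hz : z ∈ U) (ζ : W) :
    HasDerivAt (fun t => Ψ t (z, ζ)) (-Y (z, ζ)) 0 := by
  have hΨ : DifferentiableAt ℂ (fun t => Ψ t (z, ζ)) 0 :=
    (differentiableAt_of_isotopy hU h.diff_inv hz (0, ζ)).comp (0 : ℂ)
      (f := fun t => (t, ζ)) (by fun_prop)
  have hcomp : HasDerivAt (fun t => Ψ t (z, Φ t (z, ζ)))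
      (_root_.deriv (fun t => Ψ t (z, ζ)) 0 + Y (z, ζ)) 0 :=
    hasDerivAt_comp_of_forall_zero_eq (Φ := fun t ζ => Ψ t (z, ζ))
      (differentiableAt_of_isotopy hU h.diff_inv hz _) (h.zero_inv hz)
      (by simpa only [h.zero z hz] using hΨ.hasDerivAt) (h.deriv z hz ζ)
  simp only [h.left_inv _ z hz] at hcomp
  exact hΨ.hasDerivAt.congr_deriv (eq_neg_of_add_eq_zero_left (hcomp.unique (hasDerivAt_const 0 ζ)))

/-- The vertical vector field `Y` is the initial velocity of a `FibreIsotopy`. -/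
def IsotopyVelocity (U : Set E) (Y : E × W → W) : Prop :=
  ∃ Φ Ψ : ℂ → E × W → W, FibreIsotopy U Y Φ Ψ

theorem IsotopyVelocity.congr {Y Y' : E × W → W} (h : IsotopyVelocity U Y)
    (hY : ∀ z ∈ U, ∀ ζ, Y (z, ζ) = Y' (z, ζ)) : IsotopyVelocity U Y' := by
  obtain ⟨Φ, Ψ, h⟩ := h
  exact ⟨Φ, Ψ, { h with deriv := fun z hz ζ => hY z hz ζ ▸ h.deriv z hz ζ }⟩

theorem isotopyVelocity_zero (U : Set E) : IsotopyVelocity U (fun _ : E × W => (0 : W)) :=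
  ⟨fun _ q => q.2, fun _ q => q.2, by fun_prop, by fun_prop, fun _ _ _ _ => rfl,
    fun _ _ _ _ => rfl, fun _ _ _ => rfl, fun _ _ ζ => hasDerivAt_const 0 ζ⟩

theorem IsotopyVelocity.add (hU : IsOpen U) {Y Y' : E × W → W} (h : IsotopyVelocity U Y)
    (h' : IsotopyVelocity U Y') : IsotopyVelocity U (fun q => Y q + Y' q) := by
  obtain ⟨Φ, Ψ, h⟩ := h
  obtain ⟨Φ', Ψ', h'⟩ := h'
  refine ⟨fun t q => Φ t (q.1, Φ' t q), fun t q => Ψ' t (q.1, Ψ t q), ?_, ?_,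
    fun t => ((h.fibreAut t).comp (h'.fibreAut t)).left_inv,
    fun t => ((h.fibreAut t).comp (h'.fibreAut t)).right_inv, fun z hz ζ => ?_, fun z hz ζ => ?_⟩
  · exact h.diff.comp (f := fun q : ℂ × E × W => (q.1, q.2.1, Φ' q.1 q.2))
      (differentiableOn_fst.prodMk (DifferentiableOn.prodMk (by fun_prop) h'.diff))
      fun q hq => ⟨mem_univ _, hq.2.1, mem_univ _⟩
  · exact h'.diff_inv.comp (f := fun q : ℂ × E × W => (q.1, q.2.1, Ψ q.1 q.2))
      (differentiableOn_fst.prodMk (DifferentiableOn.prodMk (by fun_prop) h.diff_inv))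
      fun q hq => ⟨mem_univ _, hq.2.1, mem_univ _⟩
  · simp only [h'.zero z hz, h.zero z hz]
  · exact hasDerivAt_comp_of_forall_zero_eq (Φ := fun t ζ => Φ t (z, ζ))
      (γ := fun t => Φ' t (z, ζ)) (differentiableAt_of_isotopy hU h.diff hz _) (h.zero z hz)
      (by simpa only [h'.zero z hz] using h.deriv z hz ζ) (h'.deriv z hz ζ)

theorem IsotopyVelocity.sum {ι : Type*} (hU : IsOpen U) (s : Finset ι) {Y : ι → E × W → W}
    (h : ∀ i ∈ s, IsotopyVelocity U (Y i)) : IsotopyVelocity U (fun q => ∑ i ∈ s, Y i q) := by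
  classical
  induction s using Finset.induction_on with
  | empty => simpa using isotopyVelocity_zero U
  | insert i s hi ih =>
    simp only [Finset.sum_insert hi]
    rw [Finset.forall_mem_insert] at h
    exact h.1.add hU (ih h.2)

end Isotopy

section Overshear

/-- The entire function `(eˣ - 1) / x`. -/
def expSlope : ℂ → ℂ := dslope Complex.exp 0

theorem differentiable_expSlope : Differentiable ℂ expSlope := by
  rw [← differentiableOn_univ]
  exact (Complex.differentiableOn_dslope univ_mem).2 Complex.differentiable_exp.differentiableOn

theorem one_add_mul_expSlope (x : ℂ) : 1 + x * expSlope x = Complex.exp x := by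
  have h := sub_smul_dslope Complex.exp 0 x
  rw [sub_zero, smul_eq_mul, Complex.exp_zero] at h
  rw [expSlope, h, add_sub_cancel]

theorem expSlope_zero : expSlope 0 = 1 := by
  rw [expSlope, dslope_same, Complex.deriv_exp, Complex.exp_zero]

theorem exp_mul_expSlope_neg (x : ℂ) : Complex.exp x * expSlope (-x) = expSlope x := by
  rcases eq_or_ne x 0 with rfl | hx
  · simp
  · have hexp : Complex.exp x * Complex.exp (-x) = 1 := by rw [← Complex.exp_add]; simp
    refine mul_left_cancel₀ hx ?_
    linear_combination (-Complex.exp x) * one_add_mul_expSlope (-x) - one_add_mul_expSlope x - hexp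

variable {E W : Type*} [NormedAddCommGroup W] [NormedSpace ℂ W] {c : E → ℂ} {l m : W →L[ℂ] ℂ}
  {v : W}

/-- The time-`t` flow of the vertical field `c(z) e^{l(ζ)} m(ζ) v`, provided that `l v = 0`. -/
def overshear (c : E → ℂ) (l m : W →L[ℂ] ℂ) (v : W) (t : ℂ) (q : E × W) : W :=
  q.2 + (t * expSlope (t * (c q.1 * Complex.exp (l q.2) * m v)) *
    (c q.1 * Complex.exp (l q.2) * m q.2)) • v

theorem overshear_neg_overshear (hv : l v = 0) (t : ℂ) (z : E) (ζ : W) :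
    overshear c l m v (-t) (z, overshear c l m v t (z, ζ)) = ζ := by
  set b := c z * Complex.exp (l ζ) with hb
  set ξ := overshear c l m v t (z, ζ) with hξ
  have hl : l ξ = l ζ := by simp [hξ, overshear, hv]
  have hm : m ξ = m ζ * Complex.exp (t * (b * m v)) := by
    simp only [hξ, overshear, map_add, map_smul, smul_eq_mul]
    rw [← hb, ← one_add_mul_expSlope (t * (b * m v))]
    ring
  have hcancel : t * expSlope (t * (b * m v)) * (b * m ζ) +
      -t * expSlope (-t * (b * m v)) * (b * (m ζ * Complex.exp (t * (b * m v)))) = 0 := by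
    rw [← exp_mul_expSlope_neg (t * (b * m v)), neg_mul t (b * m v)]
    ring
  calc overshear c l m v (-t) (z, ξ)
      = ξ + (-t * expSlope (-t * (b * m v)) * (b * (m ζ * Complex.exp (t * (b * m v))))) • v := by
        rw [overshear, hl, hm]
    _ = ζ := by
        rw [hξ, overshear, ← hb, add_assoc, ← add_smul, hcancel, zero_smul, add_zero]

theorem hasDerivAt_overshear (z : E) (ζ : W) : HasDerivAt (fun t => overshear c l m v t (z, ζ))
    ((c z * Complex.exp (l ζ) * m ζ) • v) 0 := by
  set b := c z * Complex.exp (l ζ)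
  have hslope : DifferentiableAt ℂ (fun t : ℂ => expSlope (t * (b * m v))) 0 :=
    (differentiable_expSlope _).comp (f := fun t : ℂ => t * (b * m v)) 0 (by fun_prop)
  refine ((((hasDerivAt_id (0 : ℂ)).mul hslope.hasDerivAt).mul_const (b * m ζ)).smul_const
    v).const_add ζ |>.congr_deriv ?_
  simp [expSlope_zero]

variable [NormedAddCommGroup E] [NormedSpace ℂ E] {U : Set E}

theorem differentiableOn_overshear (hc : DifferentiableOn ℂ c U) :
    DifferentiableOn ℂ (fun q : ℂ × E × W => overshear c l m v q.1 q.2)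
      (univ ×ˢ (U ×ˢ univ)) := by
  have hcoeff : DifferentiableOn ℂ (fun q : ℂ × E × W => c q.2.1 * Complex.exp (l q.2.2))
      (univ ×ˢ (U ×ˢ univ)) :=
    (hc.comp (f := fun q : ℂ × E × W => q.2.1) (by fun_prop) fun q hq => hq.2.1).mul (by fun_prop)
  have hslope : DifferentiableOn ℂ (fun q : ℂ × E × W =>
      expSlope (q.1 * (c q.2.1 * Complex.exp (l q.2.2) * m v))) (univ ×ˢ (U ×ˢ univ)) :=
    differentiable_expSlope.comp_differentiableOn
      (differentiableOn_fst.mul (hcoeff.mul_const (m v)))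
  exact DifferentiableOn.add (by fun_prop)
    (((differentiableOn_fst.mul hslope).mul (hcoeff.mul (by fun_prop))).smul_const v)

theorem isotopyVelocity_overshear (hc : DifferentiableOn ℂ c U) (hv : l v = 0) :
    IsotopyVelocity U (fun q : E × W => (c q.1 * Complex.exp (l q.2) * m q.2) • v) :=
  ⟨overshear c l m v, fun t => overshear c l m v (-t), differentiableOn_overshear hc,
    (differentiableOn_overshear hc).comp (f := fun q : ℂ × E × W => (-q.1, q.2)) (by fun_prop)
      fun _ hq => ⟨mem_univ _, hq.2⟩,
    fun t z _ ζ => overshear_neg_overshear hv t z ζ,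
    fun t z _ ζ => by
      simpa only [neg_neg] using overshear_neg_overshear (c := c) (m := m) hv (-t) z ζ,
    fun z _ ζ => by simp [overshear], fun z _ ζ => hasDerivAt_overshear z ζ⟩

end Overshear

section ExpSum

variable {E W : Type*} [NormedAddCommGroup E] [NormedSpace ℂ E] [NormedAddCommGroup W]
  [NormedSpace ℂ W] {U : Set E}

/-- Finite sums of functions `c(z) e^{l(ζ)}` with `c` holomorphic on `U` and `l` linear. -/
inductive ExpSum (U : Set E) : (E × W → ℂ) → Prop
  | term (c : E → ℂ) (l : W →L[ℂ] ℂ) (hc : DifferentiableOn ℂ c U) :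
      ExpSum U fun q => c q.1 * Complex.exp (l q.2)
  | add (a b : E × W → ℂ) (ha : ExpSum U a) (hb : ExpSum U b) : ExpSum U fun q => a q + b q

theorem ExpSum.mul {a b : E × W → ℂ} (ha : ExpSum U a) (hb : ExpSum U b) :
    ExpSum U fun q => a q * b q := by
  induction ha with
  | term c l hc =>
    induction hb with
    | term c' l' hc' =>
      convert ExpSum.term (fun z => c z * c' z) (l + l') (hc.mul hc') using 2 with q
      rw [add_apply, Complex.exp_add]
      ring
    | add b b' _ _ ihb ihb' => simpa only [mul_add] using ihb.add _ _ ihb'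
  | add a a' _ _ iha iha' => simpa only [add_mul] using iha.add _ _ iha'

theorem ExpSum.comp_fst {c : E → ℂ} (hc : DifferentiableOn ℂ c U) :
    ExpSum U fun q : E × W => c q.1 := by
  simpa using ExpSum.term c (0 : W →L[ℂ] ℂ) hc

theorem ExpSum.differentiable_fibre {a : E × W → ℂ} (ha : ExpSum U a) (z : E) :
    Differentiable ℂ fun ζ => a (z, ζ) := by
  induction ha with
  | term c l _ =>
    change Differentiable ℂ fun ζ => c z * Complex.exp (l ζ)
    fun_prop
  | add a b _ _ iha ihb => exact iha.add ihb

/-- Bounded functions on `Q` which are uniform limits on `Q` of exponential sums. Boundedness is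
what makes them an algebra. -/
structure ExpApprox (U : Set E) (Q : Set (E × W)) (g : E × W → ℂ) : Prop where
  bounded : ∃ M, ∀ q ∈ Q, ‖g q‖ ≤ M
  approx : ∀ ε > 0, ∃ a, ExpSum U a ∧ ∀ q ∈ Q, ‖a q - g q‖ ≤ ε

variable {Q : Set (E × W)} {g g' : E × W → ℂ}

theorem ExpApprox.exists_pos_bound (h : ExpApprox U Q g) : ∃ M > 0, ∀ q ∈ Q, ‖g q‖ ≤ M := by
  obtain ⟨M, hM⟩ := h.bounded
  exact ⟨max M 1, by positivity, fun q hq => (hM q hq).trans (le_max_left _ _)⟩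

theorem ExpApprox.congr (h : ExpApprox U Q g) (hg : ∀ q ∈ Q, g q = g' q) : ExpApprox U Q g' := by
  refine ⟨?_, fun ε hε => ?_⟩
  · obtain ⟨M, hM⟩ := h.bounded
    exact ⟨M, fun q hq => hg q hq ▸ hM q hq⟩
  · obtain ⟨a, ha, h⟩ := h.approx ε hε
    exact ⟨a, ha, fun q hq => hg q hq ▸ h q hq⟩

theorem ExpApprox.add (h : ExpApprox U Q g) (h' : ExpApprox U Q g') :
    ExpApprox U Q fun q => g q + g' q := by
  refine ⟨?_, fun ε hε => ?_⟩
  · obtain ⟨M, hM⟩ := h.bounded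
    obtain ⟨M', hM'⟩ := h'.bounded
    exact ⟨M + M', fun q hq => (norm_add_le _ _).trans (add_le_add (hM q hq) (hM' q hq))⟩
  · obtain ⟨a, ha, h⟩ := h.approx (ε / 2) (half_pos hε)
    obtain ⟨a', ha', h'⟩ := h'.approx (ε / 2) (half_pos hε)
    refine ⟨_, ha.add _ _ ha', fun q hq => ?_⟩
    rw [add_sub_add_comm, ← add_halves ε]
    exact (norm_add_le _ _).trans (add_le_add (h q hq) (h' q hq))

theorem ExpApprox.mul (h : ExpApprox U Q g) (h' : ExpApprox U Q g') :
    ExpApprox U Q fun q => g q * g' q := by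
  obtain ⟨M, hM0, hM⟩ := h.exists_pos_bound
  obtain ⟨M', hM'0, hM'⟩ := h'.exists_pos_bound
  refine ⟨⟨M * M', fun q hq => ?_⟩, fun ε hε => ?_⟩
  · exact (norm_mul_le _ _).trans (mul_le_mul (hM q hq) (hM' q hq) (norm_nonneg _) hM0.le)
  · set η := min 1 (ε / (M + M' + 1))
    have hη0 : 0 < η := by positivity
    obtain ⟨a, ha, h⟩ := h.approx η hη0
    obtain ⟨a', ha', h'⟩ := h'.approx η hη0
    refine ⟨_, ha.mul ha', fun q hq => ?_⟩
    have ha'_le : ‖a' q‖ ≤ M' + 1 := (norm_le_norm_add_norm_sub' (a' q) (g' q)).trans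
      (add_le_add (hM' q hq) ((h' q hq).trans (min_le_left _ _)))
    calc ‖a q * a' q - g q * g' q‖ = ‖(a q - g q) * a' q + g q * (a' q - g' q)‖ := by ring_nf
      _ ≤ ‖a q - g q‖ * ‖a' q‖ + ‖g q‖ * ‖a' q - g' q‖ :=
          (norm_add_le _ _).trans (add_le_add (norm_mul_le _ _) (norm_mul_le _ _))
      _ ≤ η * (M' + 1) + M * η :=
          add_le_add (mul_le_mul (h q hq) ha'_le (norm_nonneg _) hη0.le)
            (mul_le_mul (hM q hq) (h' q hq) (norm_nonneg _) hM0.le)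
      _ = η * (M + M' + 1) := by ring
      _ ≤ ε := (le_div_iff₀ (by positivity)).1 (min_le_right _ _)

theorem expApprox_comp_fst (hQ : IsCompact Q) (hQU : ∀ q ∈ Q, q.1 ∈ U) {c : E → ℂ}
    (hc : DifferentiableOn ℂ c U) : ExpApprox U Q fun q => c q.1 :=
  ⟨hQ.exists_bound_of_continuousOn (hc.continuousOn.comp continuous_fst.continuousOn hQU),
    fun ε hε => ⟨_, ExpSum.comp_fst hc, fun q _ => by simpa using hε.le⟩⟩

theorem expApprox_const (c : ℂ) : ExpApprox U Q fun _ => c :=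
  ⟨⟨‖c‖, fun _ _ => le_rfl⟩, fun ε hε => ⟨_, ExpSum.comp_fst (c := fun _ => c)
    (differentiableOn_const _), fun q _ => by simpa using hε.le⟩⟩

theorem norm_inv_mul_exp_sub_one_sub_le {t M : ℝ} (ht : 0 < t) (htM : t * M ≤ 1) {w : ℂ}
    (hw : ‖w‖ ≤ M) : ‖(t : ℂ)⁻¹ * (Complex.exp (t * w) - 1) - w‖ ≤ t * M ^ 2 := by
  have htc : (t : ℂ) ≠ 0 := by exact_mod_cast ht.ne'
  have hnorm : ‖(t : ℂ)‖ = t := by rw [Complex.norm_real, Real.norm_of_nonneg ht.le]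
  have htw : ‖(t : ℂ) * w‖ ≤ t * M := by rw [norm_mul, hnorm]; gcongr
  calc ‖(t : ℂ)⁻¹ * (Complex.exp (t * w) - 1) - w‖
      = t⁻¹ * ‖Complex.exp (t * w) - 1 - t * w‖ := by
        rw [← hnorm, ← norm_inv, hnorm, ← norm_mul, mul_sub _ _ (t * w), inv_mul_cancel_left₀ htc]
    _ ≤ t⁻¹ * (t * M) ^ 2 := by
        gcongr
        exact (Complex.norm_exp_sub_one_sub_id_le (htw.trans htM)).trans (by gcongr)
    _ = t * M ^ 2 := by field_simp

theorem expApprox_linear (hQ : IsCompact Q) (l : W →L[ℂ] ℂ) : ExpApprox U Q fun q => l q.2 := by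
  obtain ⟨C, hC⟩ := hQ.exists_bound_of_continuousOn (f := fun q : E × W => l q.2)
    (l.continuous.comp continuous_snd).continuousOn
  refine ⟨⟨C, hC⟩, fun ε hε => ?_⟩
  set M := max C 1
  set t : ℝ := min (1 / M) (ε / M ^ 2)
  have ht : 0 < t := by positivity
  refine ⟨_, (ExpSum.term (fun _ => (t : ℂ)⁻¹) ((t : ℂ) • l) (differentiableOn_const _)).add _ _
    (ExpSum.comp_fst (c := fun _ => -(t : ℂ)⁻¹) (differentiableOn_const _)), fun q hq => ?_⟩
  calc ‖(t : ℂ)⁻¹ * Complex.exp (((t : ℂ) • l) q.2) + -(t : ℂ)⁻¹ - l q.2‖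
      = ‖(t : ℂ)⁻¹ * (Complex.exp (t * l q.2) - 1) - l q.2‖ := by
        rw [smul_apply, smul_eq_mul, mul_sub_one, sub_eq_add_neg (_ * _)]
    _ ≤ t * M ^ 2 := norm_inv_mul_exp_sub_one_sub_le ht
        ((le_div_iff₀ (by positivity)).1 (min_le_left _ _)) ((hC q hq).trans (le_max_left _ _))
    _ ≤ ε := (le_div_iff₀ (by positivity)).1 (min_le_right _ _)

theorem ExpApprox.eval {σ : Type*} {g : E × W → σ → ℂ} (hg : ∀ i, ExpApprox U Q fun q => g q i)
    (p : MvPolynomial σ ℂ) : ExpApprox U Q fun q => MvPolynomial.eval (g q) p := by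
  induction p using MvPolynomial.induction_on with
  | C a => simpa using expApprox_const a
  | add p q hp hq => simpa using hp.add hq
  | mul_X p i hp => simpa using hp.mul (hg i)

/-- A polynomial with superattracting fixed points `0` and `1`: its iterates sharpen a function
which is close to `0` or `1`. -/
def smoothStep (w : ℂ) : ℂ := 3 * w ^ 2 - 2 * w ^ 3

theorem norm_smoothStep_le {w : ℂ} (hw : ‖w‖ ≤ 1 / 4) : ‖smoothStep w‖ ≤ 7 / 8 * ‖w‖ := by
  calc ‖smoothStep w‖ ≤ 3 * ‖w‖ ^ 2 + 2 * ‖w‖ ^ 3 := (norm_sub_le _ _).trans (by simp)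
    _ ≤ 7 / 8 * ‖w‖ := by nlinarith [mul_nonneg (norm_nonneg w) (norm_nonneg w), norm_nonneg w]

theorem norm_smoothStep_iterate_le {w : ℂ} (hw : ‖w‖ ≤ 1 / 4) (m : ℕ) :
    ‖smoothStep^[m] w‖ ≤ (7 / 8) ^ m * (1 / 4) := by
  induction m with
  | zero => simpa using hw
  | succ m ih =>
    have hle : ‖smoothStep^[m] w‖ ≤ 1 / 4 :=
      ih.trans (mul_le_of_le_one_left (by norm_num) (pow_le_one₀ (by norm_num) (by norm_num)))
    rw [Function.iterate_succ_apply', pow_succ', mul_assoc]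
    exact (norm_smoothStep_le hle).trans (by gcongr)

theorem smoothStep_iterate_one_sub (w : ℂ) (m : ℕ) :
    smoothStep^[m] (1 - w) = 1 - smoothStep^[m] w := by
  induction m with
  | zero => rfl
  | succ m ih =>
    simp only [Function.iterate_succ_apply', ih, smoothStep]
    ring

theorem norm_smoothStep_iterate_sub_one_le {w : ℂ} (hw : ‖w - 1‖ ≤ 1 / 4) (m : ℕ) :
    ‖smoothStep^[m] w - 1‖ ≤ (7 / 8) ^ m * (1 / 4) := by
  rw [norm_sub_rev] at hw ⊢
  rw [← smoothStep_iterate_one_sub]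
  exact norm_smoothStep_iterate_le hw m

theorem ExpApprox.smoothStep_iterate (h : ExpApprox U Q g) (m : ℕ) :
    ExpApprox U Q fun q => smoothStep^[m] (g q) := by
  induction m with
  | zero => exact h
  | succ m ih =>
    refine (((expApprox_const 3).mul (ih.mul ih)).add
      ((expApprox_const (-2)).mul (ih.mul (ih.mul ih)))).congr fun q _ => ?_
    rw [Function.iterate_succ_apply', smoothStep]
    ring

theorem ExpApprox.exists_cutoff {Q₁ Q₂ : Set (E × W)} {h g : E × W → ℂ}
    (hh : ExpApprox U (Q₁ ∪ Q₂) h) (h₁ : ∀ q ∈ Q₁, ‖h q - 1‖ ≤ 1 / 4) (h₂ : ∀ q ∈ Q₂, ‖h q‖ ≤ 1 / 4)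
    (hg : ExpApprox U (Q₁ ∪ Q₂) g) {ε : ℝ} (hε : 0 < ε) :
    ∃ a, ExpSum U a ∧ (∀ q ∈ Q₁, ‖a q - g q‖ ≤ ε) ∧ ∀ q ∈ Q₂, ‖a q‖ ≤ ε := by
  obtain ⟨M, _, hM⟩ := hg.exists_pos_bound
  have hlim : Tendsto (fun m : ℕ => (7 / 8 : ℝ) ^ m * (1 / 4) * M) atTop (𝓝 0) := by
    simpa only [zero_mul] using ((tendsto_pow_atTop_nhds_zero_of_lt_one (r := (7 / 8 : ℝ))
      (by norm_num) (by norm_num)).mul_const (1 / 4)).mul_const M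
  obtain ⟨m, hm⟩ := (hlim.eventually_lt_const (half_pos hε)).exists
  obtain ⟨a, ha, hag⟩ := ((hh.smoothStep_iterate m).mul hg).approx (ε / 2) (half_pos hε)
  have key : ∀ q ∈ Q₁ ∪ Q₂, ∀ c : ℂ, ‖smoothStep^[m] (h q) - c‖ ≤ (7 / 8) ^ m * (1 / 4) →
      ‖a q - c * g q‖ ≤ ε := fun q hq c hc =>
    calc ‖a q - c * g q‖
        = ‖(a q - smoothStep^[m] (h q) * g q) + (smoothStep^[m] (h q) - c) * g q‖ := by ring_nf
      _ ≤ ε / 2 + (7 / 8) ^ m * (1 / 4) * M := (norm_add_le _ _).trans (add_le_add (hag q hq)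
          ((norm_mul_le _ _).trans (mul_le_mul hc (hM q hq) (norm_nonneg _) (by positivity))))
      _ ≤ ε := by linarith
  refine ⟨a, ha, fun q hq => ?_, fun q hq => ?_⟩
  · simpa using key q (.inl hq) 1 (norm_smoothStep_iterate_sub_one_le (h₁ q hq) m)
  · simpa using key q (.inr hq) 0 (by simpa using norm_smoothStep_iterate_le (h₂ q hq) m)

end ExpSum

section Thickening

variable {E W : Type*} [NormedAddCommGroup W] {K : Set (E × W)} {ρ : ℝ}

/-- The vertical closed `ρ`-neighbourhood of `K` (for compact `K`). -/
def fibreThickening (K : Set (E × W)) (ρ : ℝ) : Set (E × W) :=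
  {q | ∃ ζ, (q.1, ζ) ∈ K ∧ ‖q.2 - ζ‖ ≤ ρ}

theorem fibreThickening_mono {ρ' : ℝ} (h : ρ ≤ ρ') : fibreThickening K ρ ⊆ fibreThickening K ρ' :=
  fun _ ⟨ζ, hζ, hq⟩ => ⟨ζ, hζ, hq.trans h⟩

theorem mem_fibreThickening_of_norm_sub_le {s : ℝ} {z : E} {ζ ζ' : W}
    (h : (z, ζ) ∈ fibreThickening K ρ) (hs : ‖ζ' - ζ‖ ≤ s) :
    (z, ζ') ∈ fibreThickening K (ρ + s) := by
  obtain ⟨ξ, hξ, hq⟩ := h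
  refine ⟨ξ, hξ, ?_⟩
  rw [add_comm]
  exact (norm_sub_le_norm_sub_add_norm_sub ζ' ζ ξ).trans (add_le_add hs hq)

theorem isCompact_fibreThickening [TopologicalSpace E] [ProperSpace W] (hK : IsCompact K) (ρ : ℝ) :
    IsCompact (fibreThickening K ρ) := by
  have himage : fibreThickening K ρ =
      (fun x : (E × W) × W => (x.1.1, x.1.2 + x.2)) '' (K ×ˢ closedBall 0 ρ) := by
    ext ⟨z, ζ⟩
    constructor
    · rintro ⟨ξ, hξ, hq⟩
      exact ⟨((z, ξ), ζ - ξ), ⟨hξ, by simpa using hq⟩, by simp⟩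
    · rintro ⟨⟨⟨z', ξ⟩, η⟩, ⟨hξ, hη⟩, h⟩
      obtain ⟨rfl, rfl⟩ := Prod.ext_iff.1 h
      exact ⟨ξ, hξ, by simpa using hη⟩
  rw [himage]
  exact (hK.prod (isCompact_closedBall 0 ρ)).image (by fun_prop)

end Thickening

section ShearField

variable {E ι : Type*} [DecidableEq ι]

/-- The vertical field `ζ_j (∂_j a · e_k - ∂_k a · e_j)`. For `a = ζ_k` with `k ≠ j` it is
`-ζ_j e_j`, and for an exponential sum `a` it is a sum of overshear fields. -/
def shearField (j k : ι) (a : E × EuclideanSpace ℂ ι → ℂ) (q : E × EuclideanSpace ℂ ι) :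
    EuclideanSpace ℂ ι :=
  q.2 j • ((fderiv ℂ (fun ζ => a (q.1, ζ)) q.2 (.single j 1)) • .single k 1
    - (fderiv ℂ (fun ζ => a (q.1, ζ)) q.2 (.single k 1)) • .single j 1)

theorem shearField_sub_mul_coord [Finite ι] {a : E × EuclideanSpace ℂ ι → ℂ} {z : E}
    {ζ : EuclideanSpace ℂ ι} {j k : ι} (hjk : j ≠ k)
    (hd : DifferentiableAt ℂ (fun ξ => a (z, ξ)) ζ) (c : ℂ) :
    shearField j k (fun q => a q - c * q.2 k) (z, ζ) =
      shearField j k a (z, ζ) + c • EuclideanSpace.single j (ζ j) := by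
  have := Fintype.ofFinite ι
  have hcoord : HasFDerivAt (fun ξ : EuclideanSpace ℂ ι => c * ξ k)
      (c • EuclideanSpace.proj (𝕜 := ℂ) k) ζ :=
    (EuclideanSpace.proj (𝕜 := ℂ) k : EuclideanSpace ℂ ι →L[ℂ] ℂ).hasFDerivAt.const_mul c
  have hsingle : EuclideanSpace.single j (ζ j) = ζ j • EuclideanSpace.single j (1 : ℂ) := by
    ext i
    simp
  have hderiv : fderiv ℂ (fun ξ => a (z, ξ) - c * ξ k) ζ =
      fderiv ℂ (fun ξ => a (z, ξ)) ζ - c • EuclideanSpace.proj k :=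
    (hd.hasFDerivAt.sub hcoord).fderiv
  simp only [shearField, hderiv, hsingle, sub_apply, smul_apply, PiLp.proj_apply,
    PiLp.single_apply, hjk.symm, if_true, if_false]
  module

variable [Fintype ι]

theorem norm_shearField_le {a : E × EuclideanSpace ℂ ι → ℂ} (j k : ι)
    (q : E × EuclideanSpace ℂ ι) :
    ‖shearField j k a q‖ ≤ ‖q.2‖ * (2 * ‖fderiv ℂ (fun ζ => a (q.1, ζ)) q.2‖) := by
  have hcoord (i i' : ι) : ‖fderiv ℂ (fun ζ => a (q.1, ζ)) q.2 (.single i 1) •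
      (.single i' 1 : EuclideanSpace ℂ ι)‖ ≤ ‖fderiv ℂ (fun ζ => a (q.1, ζ)) q.2‖ := by
    rw [norm_smul, PiLp.norm_single, norm_one, mul_one]
    simpa using (fderiv ℂ (fun ζ => a (q.1, ζ)) q.2).le_opNorm (.single i 1)
  rw [shearField, norm_smul, two_mul]
  exact mul_le_mul (PiLp.norm_apply_le q.2 j)
    ((norm_sub_le _ _).trans (add_le_add (hcoord j k) (hcoord k j))) (norm_nonneg _) (norm_nonneg _)

theorem norm_sum_shearField_add_smul_le {κ : ι → ι} (hκ : ∀ j, κ j ≠ j)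
    {a : ι → E × EuclideanSpace ℂ ι → ℂ} {z : E} {ζ : EuclideanSpace ℂ ι} {s B ε : ℝ} (hs : 0 < s)
    (hB : ‖ζ‖ ≤ B) (hd : ∀ k, Differentiable ℂ fun ζ => a k (z, ζ)) (c : ℂ)
    (ha : ∀ k, ∀ ξ ∈ ball ζ s, ‖a k (z, ξ) - c * ξ k‖ ≤ ε) :
    ‖∑ j, shearField j (κ j) (a (κ j)) (z, ζ) + c • ζ‖ ≤
      Fintype.card ι * (B * (2 * (2 * ε / s))) := by
  have hζ : ζ = ∑ j, EuclideanSpace.single j (ζ j) := by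
    ext i
    simp [Finset.sum_apply, Pi.single_apply]
  have hterm (j : ι) : ‖shearField j (κ j) (a (κ j)) (z, ζ) + c • EuclideanSpace.single j (ζ j)‖ ≤
      B * (2 * (2 * ε / s)) := by
    rw [← shearField_sub_mul_coord (hκ j).symm (hd _ ζ)]
    refine (norm_shearField_le _ _ _).trans (mul_le_mul hB ?_ (by positivity)
      ((norm_nonneg _).trans hB))
    gcongr
    refine norm_fderiv_le_of_norm_le hs (Differentiable.differentiableOn ?_) (ha (κ j))
    exact (hd _).sub (by fun_prop)
  conv_lhs => enter [1, 2]; rw [hζ]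
  rw [Finset.smul_sum, ← Finset.sum_add_distrib]
  simpa using norm_sum_le_of_le Finset.univ fun j _ => hterm j

variable [NormedAddCommGroup E] [NormedSpace ℂ E] {U : Set E}

theorem ExpSum.isotopyVelocity_shearField (hU : IsOpen U) {a : E × EuclideanSpace ℂ ι → ℂ}
    (ha : ExpSum U a) (j k : ι) : IsotopyVelocity U (shearField j k a) := by
  induction ha with
  | term c l hc =>
    set v : EuclideanSpace ℂ ι := l (.single j 1) • .single k 1 - l (.single k 1) • .single j 1
      with hv
    have hlv : l v = 0 := by
      rw [hv, map_sub, map_smul, map_smul, smul_eq_mul, smul_eq_mul, mul_comm, sub_self]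
    refine (isotopyVelocity_overshear (m := EuclideanSpace.proj j) hc hlv).congr fun z _ ζ => ?_
    have hd : fderiv ℂ (fun ζ => c z * Complex.exp (l ζ)) ζ = (c z * Complex.exp (l ζ)) • l := by
      rw [((l.hasFDerivAt (x := ζ)).cexp.const_mul (c z)).fderiv, smul_smul]
    simp only [shearField, hd, smul_apply, smul_eq_mul, PiLp.proj_apply, hv]
    module
  | add a b ha hb iha ihb =>
    refine (iha.add hU ihb).congr fun z _ ζ => ?_
    have hd : fderiv ℂ (fun ζ => a (z, ζ) + b (z, ζ)) ζ =
        fderiv ℂ (fun ζ => a (z, ζ)) ζ + fderiv ℂ (fun ζ => b (z, ζ)) ζ :=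
      fderiv_fun_add (ha.differentiable_fibre z ζ) (hb.differentiable_fibre z ζ)
    simp only [shearField, hd, add_apply]
    module

end ShearField

section RadialField

variable {E ι : Type*} [Fintype ι] [NormedAddCommGroup E] [NormedSpace ℂ E] {U V : Set E}

theorem exists_radial_field [Nontrivial ι] (hU : IsOpen U)
    {K : Set (E × EuclideanSpace ℂ ι)} {r ρ : ℝ} (hr : 0 < r) (hρ : 0 < ρ) (hK : IsCompact K)
    (happ : ∀ ε > 0, ∀ k : ι, ∃ a, ExpSum U a ∧
      (∀ q ∈ V ×ˢ closedBall (0 : EuclideanSpace ℂ ι) (2 * r), ‖a q - q.2 k‖ ≤ ε) ∧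
      ∀ q ∈ fibreThickening K (2 * ρ), ‖a q‖ ≤ ε) {ε : ℝ} (hε : 0 < ε) :
    ∃ Y : E × EuclideanSpace ℂ ι → EuclideanSpace ℂ ι, IsotopyVelocity U Y ∧
      (∀ z ∈ V, ∀ ζ, ‖ζ‖ ≤ r → ‖Y (z, ζ) + ζ‖ ≤ ε) ∧ ∀ q ∈ fibreThickening K ρ, ‖Y q‖ ≤ ε := by
  classical
  choose κ hκ using fun j : ι => exists_ne j
  obtain ⟨B₀, hB₀⟩ := (isCompact_fibreThickening hK ρ).exists_bound_of_continuousOn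
    (f := Prod.snd) continuous_snd.continuousOn
  set B := max r B₀
  set s := min r ρ
  have hs : 0 < s := lt_min hr hρ
  have hB : 0 < B := hr.trans_le (le_max_left _ _)
  set ε' := ε * s / (4 * (Fintype.card ι * B))
  have hε' : 0 < ε' := by positivity
  have hsum : Fintype.card ι * (B * (2 * (2 * ε' / s))) = ε := by
    simp only [ε']
    field_simp
    norm_num
  choose a ha ha₁ ha₂ using happ ε' hε'
  have hd (z : E) (k : ι) : Differentiable ℂ fun ζ => a k (z, ζ) := (ha k).differentiable_fibre z
  refine ⟨fun q => ∑ j, shearField j (κ j) (a (κ j)) q,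
    .sum hU _ fun j _ => (ha (κ j)).isotopyVelocity_shearField hU j (κ j), fun z hz ζ hζ => ?_,
    fun q hq => ?_⟩
  · refine (one_smul ℂ ζ ▸ norm_sum_shearField_add_smul_le hκ hs (hζ.trans (le_max_left r B₀))
      (hd z) 1 fun k ξ hξ => ?_).trans_eq hsum
    rw [one_mul]
    refine ha₁ k (z, ξ) ⟨hz, mem_closedBall_zero_iff.2 ?_⟩
    linarith [norm_le_norm_add_norm_sub' ξ ζ, mem_ball_iff_norm.1 hξ, min_le_left r ρ]
  · refine (add_zero (∑ j, shearField j (κ j) (a (κ j)) q) ▸ zero_smul ℂ q.2 ▸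
      norm_sum_shearField_add_smul_le hκ hs ((hB₀ q hq).trans (le_max_right r B₀))
      (hd q.1) 0 fun k ξ hξ => ?_).trans_eq hsum
    rw [zero_mul, sub_zero]
    refine ha₂ k (q.1, ξ) (fibreThickening_mono (by linarith [min_le_right r ρ])
      (mem_fibreThickening_of_norm_sub_le hq (mem_ball_iff_norm.1 hξ).le))

end RadialField

section Euler

variable {E W : Type*} [NormedAddCommGroup E] [NormedSpace ℂ E] [NormedAddCommGroup W]
  [NormedSpace ℂ W] {U V : Set E}

theorem norm_sub_sub_smul_le_of_norm_le {g : ℂ → W} {y : W} {M : ℝ}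
    (hg : DifferentiableOn ℂ g (ball 0 1)) (hM : ∀ t ∈ ball (0 : ℂ) 1, ‖g t‖ ≤ M)
    (hy : HasDerivAt g y 0) {t : ℂ} (ht : ‖t‖ < 1) :
    ‖g t - g 0 - t • y‖ ≤ 4 * M * ‖t‖ ^ 2 := by
  have hyM : ‖y‖ ≤ 2 * M := by
    simpa [hy.hasFDerivAt.fderiv] using norm_fderiv_le_of_norm_le one_pos hg hM
  have hbound (s : ℂ) (hs : s ∈ ball (0 : ℂ) 1) : ‖g s - g 0 - s • y‖ ≤ 4 * M := by
    have hsy : ‖s • y‖ ≤ ‖y‖ :=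
      norm_smul s y ▸ mul_le_of_le_one_left (norm_nonneg y) (mem_ball_zero_iff.1 hs).le
    linarith [norm_sub_le (g s - g 0) (s • y), norm_sub_le (g s) (g 0), hM s hs,
      hM 0 (mem_ball_self one_pos)]
  have hsmall : (fun s => g s - g 0 - s • y) =o[𝓝 0] fun s : ℂ => ‖s‖ := by
    simpa only [sub_zero] using (hasDerivAt_iff_isLittleO.1 hy).norm_right
  simpa using Complex.dist_le_mul_div_pow_of_mapsTo_ball_of_isLittleO (n := 1) (R₂ := 4 * M)
    ((hg.sub_const (g 0)).sub (differentiableOn_id.smul_const y))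
    (fun s hs => by simpa using hbound s hs) (by simpa using hsmall) (mem_ball_zero_iff.2 ht)

theorem FibreIsotopy.symm (hU : IsOpen U) {Y : E × W → W} {Φ Ψ : ℂ → E × W → W}
    (h : FibreIsotopy U Y Φ Ψ) : FibreIsotopy U (fun q => -Y q) Ψ Φ where
  diff := h.diff_inv
  diff_inv := h.diff
  left_inv := h.right_inv
  right_inv := h.left_inv
  zero _ hz := h.zero_inv hz
  deriv _ hz := h.deriv_inv hU hz

theorem FibreIsotopy.exists_norm_sub_sub_smul_le {Y : E × W → W} {Φ Ψ : ℂ → E × W → W}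
    (h : FibreIsotopy U Y Φ Ψ) {Q : Set (E × W)} (hQ : IsCompact Q) (hQU : ∀ q ∈ Q, q.1 ∈ U) :
    ∃ C, ∀ q ∈ Q, ∀ t : ℂ, ‖t‖ < 1 → ‖Φ t q - q.2 - t • Y q‖ ≤ C * ‖t‖ ^ 2 := by
  obtain ⟨M, hM⟩ := ((isCompact_closedBall (0 : ℂ) 1).prod hQ).exists_bound_of_continuousOn
    (f := fun q : ℂ × E × W => Φ q.1 q.2)
    (h.diff.continuousOn.mono fun q hq => ⟨mem_univ _, hQU _ hq.2, mem_univ _⟩)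
  refine ⟨4 * M, fun q hq t ht => ?_⟩
  have hdiff : DifferentiableOn ℂ (fun t => Φ t q) (ball 0 1) :=
    h.diff.comp (f := fun t : ℂ => (t, q)) (by fun_prop)
      fun t _ => ⟨mem_univ _, hQU q hq, mem_univ _⟩
  simpa only [show Φ 0 q = q.2 from h.zero q.1 (hQU q hq) q.2] using
    norm_sub_sub_smul_le_of_norm_le hdiff
      (fun t ht => hM (t, q) ⟨ball_subset_closedBall ht, hq⟩) (h.deriv q.1 (hQU q hq) q.2) ht

theorem FibreIsotopy.eventually_norm_sub_sub_smul_le {Y : E × W → W} {Φ Ψ : ℂ → E × W → W}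
    (h : FibreIsotopy U Y Φ Ψ) {Q : Set (E × W)} (hQ : IsCompact Q) (hQU : ∀ q ∈ Q, q.1 ∈ U)
    {ε : ℝ} (hε : 0 < ε) :
    ∀ᶠ m : ℕ in atTop, ∀ q ∈ Q, ‖Φ (m : ℂ)⁻¹ q - q.2 - (m : ℂ)⁻¹ • Y q‖ ≤ ε / m := by
  obtain ⟨C, hC⟩ := h.exists_norm_sub_sub_smul_le hQ hQU
  filter_upwards [(tendsto_const_div_atTop_nhds_zero_nat C).eventually_lt_const hε,
    eventually_gt_atTop 1] with m hm hm₁ q hq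
  have hnorm : ‖(m : ℂ)⁻¹‖ = (m : ℝ)⁻¹ := by rw [norm_inv, Complex.norm_natCast]
  calc ‖Φ (m : ℂ)⁻¹ q - q.2 - (m : ℂ)⁻¹ • Y q‖ ≤ C * ‖(m : ℂ)⁻¹‖ ^ 2 :=
        hC q hq _ (hnorm ▸ inv_lt_one_of_one_lt₀ (by exact_mod_cast hm₁))
    _ = C / m / m := by rw [hnorm]; ring
    _ ≤ ε / m := by gcongr

theorem norm_iterate_sub_le {W : Type*} [NormedAddCommGroup W] {g : W → W} {x : W}
    {η : ℝ} (hη : 0 ≤ η) {m : ℕ} (h : ∀ ξ, ‖ξ - x‖ ≤ m * η → ‖g ξ - ξ‖ ≤ η) {i : ℕ} (hi : i ≤ m) :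
    ‖g^[i] x - x‖ ≤ i * η := by
  induction i with
  | zero => simp
  | succ i ih =>
    have hm : ‖g^[i] x - x‖ ≤ m * η :=
      (ih (by omega)).trans (by gcongr; omega)
    rw [Function.iterate_succ_apply']
    push_cast
    linarith [norm_sub_le_norm_sub_add_norm_sub (g (g^[i] x)) (g^[i] x) x, ih (by omega), h _ hm]

theorem norm_iterate_sub_pow_smul_le {g : W → W} {x : W} {a : ℂ} {η r : ℝ} (ha : 1 ≤ ‖a‖)
    (hη : 0 ≤ η) {m : ℕ} (hr : ‖a‖ ^ m * (‖x‖ + m * η) ≤ r)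
    (h : ∀ ξ, ‖ξ‖ ≤ r → ‖g ξ - a • ξ‖ ≤ η) {i : ℕ} (hi : i ≤ m) :
    ‖g^[i] x - a ^ i • x‖ ≤ ‖a‖ ^ i * (i * η) := by
  induction i with
  | zero => simp
  | succ i ih =>
    have hmem : ‖g^[i] x‖ ≤ r := by
      have hle := norm_le_norm_add_norm_sub' (g^[i] x) (a ^ i • x)
      rw [norm_smul, norm_pow] at hle
      calc ‖g^[i] x‖ ≤ ‖a‖ ^ i * (‖x‖ + i * η) := by linarith [ih (by omega)]
        _ ≤ ‖a‖ ^ m * (‖x‖ + m * η) := by gcongr <;> omega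
        _ ≤ r := hr
    calc ‖g^[i + 1] x - a ^ (i + 1) • x‖
        = ‖(g (g^[i] x) - a • g^[i] x) + a • (g^[i] x - a ^ i • x)‖ := by
          rw [Function.iterate_succ_apply', smul_sub, smul_smul, ← pow_succ', sub_add_sub_cancel]
      _ ≤ η + ‖a‖ * (‖a‖ ^ i * (i * η)) := by
          refine (norm_add_le _ _).trans (add_le_add (h _ hmem) ?_)
          rw [norm_smul]
          gcongr
          exact ih (by omega)
      _ ≤ ‖a‖ ^ (i + 1) * η + ‖a‖ * (‖a‖ ^ i * (i * η)) := by
          gcongr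
          exact le_mul_of_one_le_left hη (one_le_pow₀ ha)
      _ = ‖a‖ ^ (i + 1) * ((i + 1 : ℕ) * η) := by push_cast; ring

theorem norm_one_add_inv_pow_le_exp_one (m : ℕ) : ‖1 + (m : ℂ)⁻¹‖ ^ m ≤ Real.exp 1 := by
  have hle : ‖1 + (m : ℂ)⁻¹‖ ≤ Real.exp (m : ℝ)⁻¹ := by
    have := norm_add_le (1 : ℂ) (m : ℂ)⁻¹
    rw [norm_one, norm_inv, Complex.norm_natCast] at this
    linarith [Real.add_one_le_exp (m : ℝ)⁻¹]
  calc ‖1 + (m : ℂ)⁻¹‖ ^ m ≤ Real.exp (m : ℝ)⁻¹ ^ m := by gcongr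
    _ = Real.exp (m * (m : ℝ)⁻¹) := by rw [Real.exp_nat_mul]
    _ ≤ Real.exp 1 := Real.exp_le_exp.2 mul_inv_le_one

theorem norm_iterate_sub_exp_one_smul_le {g : W → W} {x : W} {η r : ℝ} {m : ℕ} (hη : 0 ≤ η)
    (hm : m ≠ 0) (hr : Real.exp 1 * (‖x‖ + η) ≤ r)
    (h : ∀ ξ, ‖ξ‖ ≤ r → ‖g ξ - (1 + (m : ℂ)⁻¹) • ξ‖ ≤ η / m) :
    ‖g^[m] x - Complex.exp 1 • x‖ ≤
      Real.exp 1 * η + ‖(1 + (m : ℂ)⁻¹) ^ m - Complex.exp 1‖ * ‖x‖ := by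
  have hmη : m * (η / m) = η := mul_div_cancel₀ η (by exact_mod_cast hm)
  have ha : 1 ≤ ‖1 + (m : ℂ)⁻¹‖ := by
    have : ‖1 + (m : ℂ)⁻¹‖ = 1 + (m : ℝ)⁻¹ := by
      rw [← Complex.norm_of_nonneg (by positivity : 0 ≤ 1 + (m : ℝ)⁻¹)]
      push_cast
      rfl
    rw [this]
    exact le_add_of_nonneg_right (by positivity)
  have hpow := norm_one_add_inv_pow_le_exp_one m
  have hiter : ‖g^[m] x - (1 + (m : ℂ)⁻¹) ^ m • x‖ ≤ Real.exp 1 * η := by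
    refine (norm_iterate_sub_pow_smul_le ha (by positivity) ?_ h le_rfl).trans ?_
    · rw [hmη]
      exact (by gcongr : _ ≤ _).trans hr
    · rw [hmη]
      gcongr
  calc ‖g^[m] x - Complex.exp 1 • x‖
      ≤ ‖g^[m] x - (1 + (m : ℂ)⁻¹) ^ m • x‖ + ‖(1 + (m : ℂ)⁻¹) ^ m • x - Complex.exp 1 • x‖ :=
        norm_sub_le_norm_sub_add_norm_sub _ _ _
    _ ≤ _ := by rw [← sub_smul, norm_smul]; gcongr

variable [ProperSpace W]

theorem FibreIsotopy.eventually_norm_iterate_sub_le {Y : E × W → W} {Φ Ψ : ℂ → E × W → W}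
    (h : FibreIsotopy U Y Φ Ψ) {K : Set (E × W)} (hK : IsCompact K) (hKU : ∀ q ∈ K, q.1 ∈ U)
    {s ε : ℝ} (hε : 0 < ε) (hY : ∀ q ∈ fibreThickening K (s + 2 * ε), ‖Y q‖ ≤ ε) :
    ∀ᶠ m : ℕ in atTop, ∀ q ∈ fibreThickening K s,
      ‖(fun ζ => Φ (m : ℂ)⁻¹ (q.1, ζ))^[m] q.2 - q.2‖ ≤ 2 * ε := by
  filter_upwards [h.eventually_norm_sub_sub_smul_le (isCompact_fibreThickening hK (s + 2 * ε))
    (fun q ⟨ζ, hζ, _⟩ => hKU (q.1, ζ) hζ) hε, eventually_ne_atTop 0] with m hstep hm q hq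
  have hmη : m * (2 * ε / m) = 2 * ε := mul_div_cancel₀ _ (by exact_mod_cast hm)
  refine (norm_iterate_sub_le (η := 2 * ε / m) (by positivity) (fun ξ hξ => ?_) le_rfl).trans_eq hmη
  have hmem : (q.1, ξ) ∈ fibreThickening K (s + 2 * ε) :=
    mem_fibreThickening_of_norm_sub_le hq (hmη ▸ hξ)
  calc ‖Φ (m : ℂ)⁻¹ (q.1, ξ) - ξ‖
      ≤ ‖(m : ℂ)⁻¹ • Y (q.1, ξ)‖ + ‖Φ (m : ℂ)⁻¹ (q.1, ξ) - ξ - (m : ℂ)⁻¹ • Y (q.1, ξ)‖ :=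
        norm_le_norm_add_norm_sub' _ _
    _ ≤ (m : ℝ)⁻¹ * ε + ε / m := by
        rw [norm_smul, norm_inv, Complex.norm_natCast]
        gcongr
        exacts [hY _ hmem, hstep _ hmem]
    _ = 2 * ε / m := by ring

theorem FibreIsotopy.eventually_norm_iterate_sub_exp_one_smul_le {Y : E × W → W}
    {Φ Ψ : ℂ → E × W → W} (h : FibreIsotopy U Y Φ Ψ) (hV : IsCompact V) (hVU : V ⊆ U)
    {r s ε : ℝ} (hε : 0 < ε) (hs : Real.exp 1 * (s + 2 * ε) ≤ r)
    (hY : ∀ z ∈ V, ∀ ζ, ‖ζ‖ ≤ r → ‖Y (z, ζ) - ζ‖ ≤ ε) :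
    ∀ᶠ m : ℕ in atTop, ∀ z ∈ V, ∀ ζ, ‖ζ‖ ≤ s →
      ‖(fun ζ => Φ (m : ℂ)⁻¹ (z, ζ))^[m] ζ - Complex.exp 1 • ζ‖ ≤ Real.exp 1 * (3 * ε) := by
  have hexp : ∀ᶠ m : ℕ in atTop, ‖(1 + (m : ℂ)⁻¹) ^ m - Complex.exp 1‖ * s < ε := by
    have hlim := ((Complex.tendsto_one_add_div_pow_exp 1).sub_const (Complex.exp 1)).norm
    simp only [sub_self, norm_zero, one_div] at hlim
    exact (hlim.mul_const s).eventually_lt_const (by rwa [zero_mul])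
  filter_upwards [h.eventually_norm_sub_sub_smul_le (hV.prod (isCompact_closedBall (0 : W) r))
    (fun q hq => hVU hq.1) hε, hexp, eventually_ne_atTop 0] with m hstep hexp hm z hz ζ hζ
  have hr : Real.exp 1 * (‖ζ‖ + 2 * ε) ≤ r := (by gcongr : _ ≤ _).trans hs
  have hiter := norm_iterate_sub_exp_one_smul_le (g := fun ζ => Φ (m : ℂ)⁻¹ (z, ζ))
    (by positivity) hm hr fun ξ hξ => by
    calc ‖Φ (m : ℂ)⁻¹ (z, ξ) - (1 + (m : ℂ)⁻¹) • ξ‖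
        = ‖(Φ (m : ℂ)⁻¹ (z, ξ) - ξ - (m : ℂ)⁻¹ • Y (z, ξ)) + (m : ℂ)⁻¹ • (Y (z, ξ) - ξ)‖ := by
          congr 1; module
      _ ≤ ε / m + (m : ℝ)⁻¹ * ε := by
          refine (norm_add_le _ _).trans ?_
          rw [norm_smul, norm_inv, Complex.norm_natCast]
          gcongr
          exacts [hstep (z, ξ) ⟨hz, mem_closedBall_zero_iff.2 hξ⟩, hY z hz ξ hξ]
      _ = 2 * ε / m := by ring
  have hexp' : ‖(1 + (m : ℂ)⁻¹) ^ m - Complex.exp 1‖ * ‖ζ‖ ≤ Real.exp 1 * ε :=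
    (by gcongr : _ ≤ _).trans
      (hexp.le.trans (le_mul_of_one_le_left hε.le (Real.one_le_exp zero_le_one)))
  linarith

theorem exists_expanding_aut (hU : IsOpen U) (hV : IsCompact V) (hVU : V ⊆ U) {K : Set (E × W)}
    (hK : IsCompact K) (hKU : ∀ q ∈ K, q.1 ∈ U) {r ρ : ℝ} (hr : 0 < r) (hρ : 0 < ρ)
    (hY : ∀ ε > 0, ∃ Y : E × W → W, IsotopyVelocity U Y ∧
      (∀ z ∈ V, ∀ ζ, ‖ζ‖ ≤ r → ‖Y (z, ζ) + ζ‖ ≤ ε) ∧ ∀ q ∈ fibreThickening K ρ, ‖Y q‖ ≤ ε)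
    {δ : ℝ} (hδ : 0 < δ) :
    ∃ Φ Ψ : E × W → W, FibreAut U Φ Ψ ∧
      (∀ z ∈ V, ∀ ζ, ‖ζ‖ ≤ r / (2 * Real.exp 1) → ‖Ψ (z, ζ) - Complex.exp 1 • ζ‖ ≤ δ) ∧
      ∀ q ∈ fibreThickening K (ρ / 2), ‖Φ q - q.2‖ ≤ δ := by
  have he : 1 ≤ Real.exp 1 := Real.one_le_exp zero_le_one
  obtain ⟨d, hd, hdδ, hdr, hdρ⟩ : ∃ d > 0, d ≤ δ ∧ d ≤ r ∧ d ≤ ρ :=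
    ⟨min δ (min r ρ), by positivity, by simp, by simp, by simp⟩
  set ε := d / (4 * Real.exp 1) with hε_def
  have hε : 0 < ε := by positivity
  have hεd : Real.exp 1 * ε = d / 4 := by rw [hε_def]; field_simp
  have hεle : ε ≤ d / 4 := hεd ▸ le_mul_of_one_le_left hε.le he
  obtain ⟨Y, ⟨Φ, Ψ, h⟩, hYV, hYK⟩ := hY ε hε
  have hs : Real.exp 1 * (r / (2 * Real.exp 1) + 2 * ε) ≤ r := by
    have : Real.exp 1 * (r / (2 * Real.exp 1)) = r / 2 := by field_simp
    linarith
  obtain ⟨m, hmV, hmK⟩ := (((h.symm hU).eventually_norm_iterate_sub_exp_one_smul_le hV hVU hε hs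
    fun z hz ζ hζ => by rw [← neg_add', norm_neg]; exact hYV z hz ζ hζ).and
    (h.eventually_norm_iterate_sub_le hK hKU (s := ρ / 2) hε fun q hq =>
      hYK q (fibreThickening_mono (by linarith) hq))).exists
  exact ⟨_, _, (h.fibreAut (m : ℂ)⁻¹).iterate m,
    fun z hz ζ hζ => (hmV z hz ζ hζ).trans (by linarith),
    fun q hq => (hmK q hq).trans (by linarith)⟩

theorem exists_expanding_aut_fixing_zero (hU : IsOpen U) (hV : IsCompact V) (hVU : V ⊆ U)
    {K : Set (E × W)} (hK : IsCompact K) (hKV : ∀ q ∈ K, q.1 ∈ V) {r ρ : ℝ}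
    (hr : 0 < r) (hρ : 0 < ρ)
    (hY : ∀ ε > 0, ∃ Y : E × W → W, IsotopyVelocity U Y ∧
      (∀ z ∈ V, ∀ ζ, ‖ζ‖ ≤ r → ‖Y (z, ζ) + ζ‖ ≤ ε) ∧ ∀ q ∈ fibreThickening K ρ, ‖Y q‖ ≤ ε)
    {δ : ℝ} (hδ : 0 < δ) :
    ∃ Φ Ψ : E × W → W, FibreAut U Φ Ψ ∧ (∀ z, Ψ (z, 0) = 0) ∧
      (∀ z ∈ V, ∀ ζ, ‖ζ‖ ≤ r / (2 * Real.exp 1) → ‖Ψ (z, ζ) - Complex.exp 1 • ζ‖ ≤ δ) ∧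
      ∀ q ∈ fibreThickening K (ρ / 4), ‖Φ q - q.2‖ ≤ δ := by
  obtain ⟨Φ, Ψ, hA, hΨ, hΦ⟩ := exists_expanding_aut hU hV hVU hK (fun q hq => hVU (hKV q hq)) hr
    hρ hY (δ := min (δ / 2) (ρ / 4)) (by positivity)
  have h₀ (z : E) (hz : z ∈ V) : ‖Ψ (z, 0)‖ ≤ min (δ / 2) (ρ / 4) := by
    simpa only [smul_zero, sub_zero] using hΨ z hz 0 (by rw [norm_zero]; positivity)
  have hδ' := min_le_left (δ / 2) (ρ / 4)
  refine ⟨_, _, hA.recentre, fun z => sub_self _, fun z hz ζ hζ => ?_, fun q hq => ?_⟩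
  · have := norm_sub_le (Ψ (z, ζ) - Complex.exp 1 • ζ) (Ψ (z, 0))
    rw [sub_right_comm] at this
    linarith [hΨ z hz ζ hζ, h₀ z hz]
  · have hz : q.1 ∈ V := by obtain ⟨ξ, hξ, _⟩ := hq; exact hKV (q.1, ξ) hξ
    have hmem : (q.1, q.2 + Ψ (q.1, 0)) ∈ fibreThickening K (ρ / 2) :=
      fibreThickening_mono (by linarith) (mem_fibreThickening_of_norm_sub_le hq
        (s := ρ / 4) (by rw [add_sub_cancel_left]; exact (h₀ _ hz).trans (min_le_right _ _)))
    have hΦq : ‖Φ (q.1, q.2 + Ψ (q.1, 0)) - q.2 - Ψ (q.1, 0)‖ ≤ min (δ / 2) (ρ / 4) := by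
      simpa only [sub_sub] using hΦ _ hmem
    linarith [norm_le_norm_add_norm_sub' (Φ (q.1, q.2 + Ψ (q.1, 0)) - q.2) (Ψ (q.1, 0)), h₀ _ hz]

end Euler

section Basin

/-- The fibrewise composition `ψ k ∘ ψ (k + 1) ∘ ⋯ ∘ ψ (k + j - 1)`. -/
def fibreComps {E W : Type*} (ψ : ℕ → E × W → W) : ℕ → ℕ → E × W → W
  | _, 0, q => q.2
  | k, j + 1, q => ψ k (q.1, fibreComps ψ (k + 1) j q)

theorem fibreComps_add {E W : Type*} (ψ : ℕ → E × W → W) (k i j : ℕ) (q : E × W) :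
    fibreComps ψ k (i + j) q = fibreComps ψ k i (q.1, fibreComps ψ (k + i) j q) := by
  induction i generalizing k with
  | zero => rw [Nat.zero_add]; rfl
  | succ i ih => rw [Nat.succ_add, fibreComps, fibreComps, ih, Nat.add_assoc, Nat.add_comm 1 i]

theorem fibreComps_succ {E W : Type*} (ψ : ℕ → E × W → W) (k j : ℕ) (q : E × W) :
    fibreComps ψ k (j + 1) q = fibreComps ψ k j (q.1, ψ (k + j) q) :=
  fibreComps_add ψ k j 1 q

theorem fibreComps_apply_zero {E W : Type*} [Zero W] {ψ : ℕ → E × W → W} {z : E}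
    (hψ : ∀ k, ψ k (z, 0) = 0) (k j : ℕ) : fibreComps ψ k j (z, 0) = 0 := by
  induction j generalizing k with
  | zero => rfl
  | succ j ih => rw [fibreComps, ih, hψ]

theorem norm_le_two_mul_of_norm_sub_le {W : Type*} [NormedAddCommGroup W] {ζ ξ : W} {k : ℕ}
    (h : ‖ξ - ζ‖ ≤ (1 / 2) ^ k * ‖ζ‖) : ‖ξ‖ ≤ 2 * ‖ζ‖ := by
  have hk : (1 / 2 : ℝ) ^ k * ‖ζ‖ ≤ ‖ζ‖ :=
    mul_le_of_le_one_left (norm_nonneg ζ) (pow_le_one₀ (by norm_num) (by norm_num))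
  linarith [norm_le_norm_add_norm_sub' ξ ζ]

theorem norm_fibreComps_sub_le {E W : Type*} [NormedAddCommGroup W] {O : Set E}
    {ψ : ℕ → E × W → W} {R : ℕ → ℝ} (hR : Monotone R)
    (hψ : ∀ k, ∀ z ∈ O, ∀ ζ, ‖ζ‖ ≤ R k → ‖ψ k (z, ζ) - ζ‖ ≤ (1 / 2) ^ (k + 2) * ‖ζ‖)
    (k j : ℕ) {z : E} (hz : z ∈ O) {ζ : W} (hζ : 2 * ‖ζ‖ ≤ R k) :
    ‖fibreComps ψ k j (z, ζ) - ζ‖ ≤ (1 / 2) ^ k * ‖ζ‖ := by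
  induction j generalizing k with
  | zero => simp only [fibreComps, sub_self, norm_zero]; positivity
  | succ j ih =>
    have htail := ih (k + 1) (hζ.trans (hR (Nat.le_succ k)))
    have hnorm := norm_le_two_mul_of_norm_sub_le htail
    calc ‖fibreComps ψ k (j + 1) (z, ζ) - ζ‖
        ≤ (1 / 2) ^ (k + 2) * ‖fibreComps ψ (k + 1) j (z, ζ)‖ + (1 / 2) ^ (k + 1) * ‖ζ‖ :=
          (norm_sub_le_norm_sub_add_norm_sub _ _ _).trans
            (add_le_add (hψ k z hz _ (hnorm.trans hζ)) htail)
      _ ≤ (1 / 2) ^ (k + 2) * (2 * ‖ζ‖) + (1 / 2) ^ (k + 1) * ‖ζ‖ := by gcongr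
      _ = (1 / 2) ^ k * ‖ζ‖ := by ring

variable {E W : Type*} [NormedAddCommGroup E] [NormedSpace ℂ E] [NormedAddCommGroup W]
  [NormedSpace ℂ W] {O : Set E} {ψ : ℕ → E × W → W} {R : ℕ → ℝ}

theorem differentiableOn_fibreComps (hψ : ∀ k, DifferentiableOn ℂ (ψ k) (O ×ˢ univ)) (k j : ℕ) :
    DifferentiableOn ℂ (fibreComps ψ k j) (O ×ˢ univ) := by
  induction j generalizing k with
  | zero => exact differentiableOn_snd
  | succ j ih => exact differentiableOn_fibre_comp (Φ := ψ k) (hψ k) (ih (k + 1))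

theorem dist_fibreComps_succ_le (hR : Monotone R)
    (hdiff : ∀ k, DifferentiableOn ℂ (ψ k) (O ×ˢ univ))
    (hψ : ∀ k, ∀ z ∈ O, ∀ ζ, ‖ζ‖ ≤ R k → ‖ψ k (z, ζ) - ζ‖ ≤ (1 / 2) ^ (k + 2) * ‖ζ‖)
    {k : ℕ} (hk : 0 < R k) {q : E × W} (hq : q ∈ O ×ˢ ball (0 : W) (R k / 8)) (j : ℕ) :
    dist (fibreComps ψ k j q) (fibreComps ψ k (j + 1) q) ≤ R k / 2 / 2 ^ j := by
  obtain ⟨hz, hζ⟩ : q.1 ∈ O ∧ ‖q.2‖ < R k / 8 := ⟨hq.1, mem_ball_zero_iff.1 hq.2⟩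
  have hsub := hψ (k + j) q.1 hz q.2 (by linarith [hR (Nat.le_add_right k j)])
  have hnorm := norm_le_two_mul_of_norm_sub_le hsub
  have hfibre : DifferentiableOn ℂ (fun ξ => fibreComps ψ k j (q.1, ξ))
      (ball 0 (2 * (R k / 4))) :=
    (differentiableOn_fibreComps hdiff k j).comp (f := fun ξ : W => (q.1, ξ)) (by fun_prop)
      fun ξ _ => ⟨hz, mem_univ _⟩
  have hbound (ξ : W) (hξ : ξ ∈ ball (0 : W) (2 * (R k / 4))) :
      ‖fibreComps ψ k j (q.1, ξ)‖ ≤ R k := by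
    rw [mem_ball_zero_iff] at hξ
    linarith [norm_le_two_mul_of_norm_sub_le
      (norm_fibreComps_sub_le hR hψ k j hz (ζ := ξ) (by linarith))]
  have hlip := norm_sub_le_of_norm_le (y := q.2) (y' := ψ (k + j) q) (by positivity) hfibre hbound
    (mem_ball_zero_iff.2 (by linarith)) (mem_ball_zero_iff.2 (by linarith))
  calc dist (fibreComps ψ k j q) (fibreComps ψ k (j + 1) q)
      ≤ 2 * R k / (R k / 4) * ‖q.2 - ψ (k + j) q‖ := by
        rwa [fibreComps_succ, dist_eq_norm]
    _ = 8 * ‖ψ (k + j) q - q.2‖ := by rw [norm_sub_rev]; field_simp; ring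
    _ ≤ 8 * ((1 / 2) ^ (k + j + 2) * (R k / 8)) := by gcongr; exact hsub.trans (by gcongr)
    _ ≤ 8 * ((1 / 2) ^ (j + 1) * (R k / 8)) := by
        gcongr ?_ * (?_ * _)
        exact pow_le_pow_of_le_one (by norm_num) (by norm_num) (by omega)
    _ = R k / 2 / 2 ^ j := by rw [one_div, inv_pow, pow_succ]; field_simp

theorem exists_limit_fibreComps_on_ball [CompleteSpace W] (hO : IsOpen O) (hR : Monotone R)
    (hdiff : ∀ k, DifferentiableOn ℂ (ψ k) (O ×ˢ univ))
    (hψ : ∀ k, ∀ z ∈ O, ∀ ζ, ‖ζ‖ ≤ R k → ‖ψ k (z, ζ) - ζ‖ ≤ (1 / 2) ^ (k + 2) * ‖ζ‖)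
    {k : ℕ} (hk : 0 < R k) :
    ∃ t : E × W → W, DifferentiableOn ℂ t (O ×ˢ ball 0 (R k / 8)) ∧
      ∀ q ∈ O ×ˢ ball (0 : W) (R k / 8),
        Tendsto (fun j => fibreComps ψ k j q) atTop (𝓝 (t q)) := by
  have hstep (q : E × W) (hq : q ∈ O ×ˢ ball (0 : W) (R k / 8)) (j : ℕ) :
      dist (fibreComps ψ k j q) (fibreComps ψ k (j + 1) q) ≤ R k / 2 / 2 ^ j :=
    dist_fibreComps_succ_le hR hdiff hψ hk hq j
  have hlim (q : E × W) (hq : q ∈ O ×ˢ ball (0 : W) (R k / 8)) :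
      ∃ l, Tendsto (fun j => fibreComps ψ k j q) atTop (𝓝 l) :=
    cauchySeq_tendsto_of_complete (cauchySeq_of_le_geometric_two (hstep q hq))
  choose! t ht using hlim
  have hunif : TendstoUniformlyOn (fun j => fibreComps ψ k j) t atTop
      (O ×ˢ ball (0 : W) (R k / 8)) := by
    have hrate : Tendsto (fun j : ℕ => R k / 2 ^ j) atTop (𝓝 0) :=
      tendsto_const_nhds.div_atTop (tendsto_pow_atTop_atTop_of_one_lt one_lt_two)
    rw [Metric.tendstoUniformlyOn_iff]
    intro ε hε
    filter_upwards [hrate.eventually_lt_const hε] with j hj q hq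
    rw [dist_comm]
    exact (dist_le_of_le_geometric_two_of_tendsto (hstep q hq) (ht q hq) j).trans_lt hj
  exact ⟨t, differentiableOn_of_tendstoUniformlyOn (hO.prod isOpen_ball)
    (.of_forall fun j => (differentiableOn_fibreComps hdiff k j).mono
      (prod_mono_right (subset_univ _))) hunif, ht⟩

theorem tendsto_fibreComps_zero (hO : IsOpen O)
    (hdiff : ∀ k, DifferentiableOn ℂ (ψ k) (O ×ˢ univ)) {k : ℕ} {q : E × W} (hq : q.1 ∈ O) {w : W}
    (h : Tendsto (fun j => fibreComps ψ k j q) atTop (𝓝 w)) :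
    Tendsto (fun j => fibreComps ψ 0 j q) atTop (𝓝 (fibreComps ψ 0 k (q.1, w))) := by
  have hcont : ContinuousAt (fun ξ => fibreComps ψ 0 k (q.1, ξ)) w :=
    ((differentiableOn_fibreComps hdiff 0 k).differentiableAt ((hO.prod isOpen_univ).mem_nhds
      (x := (q.1, w)) ⟨hq, mem_univ _⟩)).continuousAt.comp (f := fun ξ : W => (q.1, ξ))
      (by fun_prop)
  rw [← tendsto_add_atTop_iff_nat k]
  refine (hcont.tendsto.comp h).congr fun j => ?_
  rw [Nat.add_comm j k, fibreComps_add, Nat.zero_add]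
  rfl

theorem exists_limit_fibreComps [CompleteSpace W] (hO : IsOpen O) (hR : Monotone R)
    (hR₀ : ∀ k, 0 < R k) (hRtop : Tendsto R atTop atTop)
    (hdiff : ∀ k, DifferentiableOn ℂ (ψ k) (O ×ˢ univ))
    (hψ : ∀ k, ∀ z ∈ O, ∀ ζ, ‖ζ‖ ≤ R k → ‖ψ k (z, ζ) - ζ‖ ≤ (1 / 2) ^ (k + 2) * ‖ζ‖) :
    ∃ F : E × W → W, DifferentiableOn ℂ F (O ×ˢ univ) ∧
      ∀ z ∈ O, ∀ ζ, ∀ᶠ k in atTop, ∃ ξ, ‖ξ - ζ‖ ≤ (1 / 2) ^ k * ‖ζ‖ ∧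
        F (z, ζ) = fibreComps ψ 0 k (z, ξ) := by
  choose t htdiff ht using fun k => exists_limit_fibreComps_on_ball hO hR hdiff hψ (hR₀ k)
  have hball (ζ : W) : ∀ᶠ k in atTop, ζ ∈ ball (0 : W) (R k / 8) := by
    filter_upwards [hRtop.eventually_gt_atTop (8 * ‖ζ‖)] with k hk
    rw [mem_ball_zero_iff]
    linarith
  have hlim (k : ℕ) (q : E × W) (hq : q ∈ O ×ˢ ball (0 : W) (R k / 8)) :
      Tendsto (fun j => fibreComps ψ 0 j q) atTop (𝓝 (fibreComps ψ 0 k (q.1, t k q))) :=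
    tendsto_fibreComps_zero hO hdiff hq.1 (ht k q hq)
  have hlim' (q : E × W) (hq : q.1 ∈ O) :
      ∃ l, Tendsto (fun j => fibreComps ψ 0 j q) atTop (𝓝 l) := by
    obtain ⟨k, hk⟩ := (hball q.2).exists
    exact ⟨_, hlim k q ⟨hq, hk⟩⟩
  choose! F hF using hlim'
  have hFeq (k : ℕ) : EqOn F (fun q => fibreComps ψ 0 k (q.1, t k q))
      (O ×ˢ ball (0 : W) (R k / 8)) :=
    fun q hq => tendsto_nhds_unique (hF q hq.1) (hlim k q hq)
  refine ⟨F, fun q hq => ?_, fun z hz ζ => ?_⟩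
  · obtain ⟨k, hk⟩ := (hball q.2).exists
    have hd : DifferentiableOn ℂ (fun q => fibreComps ψ 0 k (q.1, t k q))
        (O ×ˢ ball (0 : W) (R k / 8)) :=
      (differentiableOn_fibreComps hdiff 0 k).comp (differentiableOn_fst.prodMk (htdiff k))
        fun q hq => ⟨hq.1, mem_univ _⟩
    exact ((hd.congr (hFeq k)).differentiableAt
      ((hO.prod isOpen_ball).mem_nhds ⟨hq.1, hk⟩)).differentiableWithinAt
  · filter_upwards [hball ζ] with k hk
    refine ⟨t k (z, ζ), ?_, hFeq k ⟨hz, hk⟩⟩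
    have hζ : 2 * ‖ζ‖ ≤ R k := by linarith [mem_ball_zero_iff.1 hk, norm_nonneg ζ]
    exact le_of_tendsto ((ht k (z, ζ) ⟨hz, hk⟩).sub_const ζ).norm
      (.of_forall fun j => norm_fibreComps_sub_le hR hψ k j hz hζ)

/-- The orbit `x, Φ 0 x, Φ 1 (Φ 0 x), …` in the fibre over `z`. -/
def fibreOrbit {E W : Type*} (Φ : ℕ → E × W → W) (z : E) (x : W) : ℕ → W
  | 0 => x
  | k + 1 => Φ k (z, fibreOrbit Φ z x k)

theorem fibreOrbit_mem_fibreThickening {E W : Type*} [NormedAddCommGroup W]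
    {K : Set (E × W)} {ρ : ℝ} (hρ : 0 ≤ ρ) {Φ : ℕ → E × W → W}
    (hΦ : ∀ k, ∀ q ∈ fibreThickening K ρ, ‖Φ k q - q.2‖ ≤ ρ * (1 / 2) ^ (k + 1)) {z : E} {x : W}
    (hx : (z, x) ∈ K) (k : ℕ) : (z, fibreOrbit Φ z x k) ∈ fibreThickening K ρ := by
  suffices h : ‖fibreOrbit Φ z x k - x‖ ≤ ρ * (1 - (1 / 2) ^ k) from
    ⟨x, hx, h.trans (mul_le_of_le_one_right hρ (sub_le_self _ (by positivity)))⟩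
  induction k with
  | zero => simp [fibreOrbit]
  | succ k ih =>
    have hmem : (z, fibreOrbit Φ z x k) ∈ fibreThickening K ρ :=
      ⟨x, hx, ih.trans (mul_le_of_le_one_right hρ (sub_le_self _ (by positivity)))⟩
    calc ‖fibreOrbit Φ z x (k + 1) - x‖
        ≤ ρ * (1 / 2) ^ (k + 1) + ρ * (1 - (1 / 2) ^ k) :=
          (norm_sub_le_norm_sub_add_norm_sub _ _ _).trans (add_le_add (hΦ k _ hmem) ih)
      _ = ρ * (1 - (1 / 2) ^ (k + 1)) := by ring

/-- The inverse maps `Ψ k`, conjugated by the linear model `c`: the composition of the first `k` of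
these is `Ψ 0 ∘ ⋯ ∘ Ψ (k - 1) ∘ c⁻ᵏ`. -/
def rescaledInverse {E W : Type*} [NormedAddCommGroup W] [NormedSpace ℂ W] (c : ℂ)
    (Ψ : ℕ → E × W → W) (k : ℕ) (q : E × W) : W :=
  c ^ k • Ψ k (q.1, (c ^ (k + 1))⁻¹ • q.2)

theorem differentiableOn_rescaledInverse (c : ℂ) {Ψ : ℕ → E × W → W}
    (hΨ : ∀ k, DifferentiableOn ℂ (Ψ k) (O ×ˢ univ)) (k : ℕ) :
    DifferentiableOn ℂ (rescaledInverse c Ψ k) (O ×ˢ univ) :=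
  (differentiableOn_fibre_comp (hΨ k)
    (differentiableOn_snd.const_smul (c ^ (k + 1))⁻¹)).const_smul (c ^ k)

theorem fibreOrbit_fibreComps_rescaledInverse {Φ Ψ : ℕ → E × W → W}
    (h : ∀ k, FibreAut O (Φ k) (Ψ k)) {c : ℂ} (hc : c ≠ 0) {z : E} (hz : z ∈ O) (k : ℕ) (ξ : W) :
    fibreOrbit Φ z (fibreComps (rescaledInverse c Ψ) 0 k (z, ξ)) k = (c ^ k)⁻¹ • ξ := by
  induction k generalizing ξ with
  | zero => simp [fibreOrbit, fibreComps]
  | succ k ih =>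
    rw [fibreComps_succ, fibreOrbit, ih, Nat.zero_add, rescaledInverse,
      inv_smul_smul₀ (pow_ne_zero k hc), (h k).right_inv z hz]

theorem norm_sub_smul_le_mul_norm {G : W → W} {c : ℂ} {r δ : ℝ}
    (hG : DifferentiableOn ℂ G (ball 0 r)) (h₀ : G 0 = 0)
    (hb : ∀ ζ, ‖ζ‖ ≤ r → ‖G ζ - c • ζ‖ ≤ δ) {ζ : W} (hζ : ‖ζ‖ < r) :
    ‖G ζ - c • ζ‖ ≤ δ / r * ‖ζ‖ := by
  have hmaps : MapsTo (fun ζ => G ζ - c • ζ) (ball 0 r) (closedBall (G 0 - c • (0 : W)) δ) :=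
    fun ξ hξ => by simpa [h₀] using hb ξ (mem_ball_zero_iff.1 hξ).le
  simpa [h₀] using Complex.dist_le_div_mul_dist_of_mapsTo_ball
    (hG.sub (differentiableOn_id.const_smul c)) hmaps (mem_ball_zero_iff.2 hζ)

theorem norm_rescaledInverse_sub_le {E W : Type*} [NormedAddCommGroup W] [NormedSpace ℂ W]
    {Ψ : ℕ → E × W → W} {c : ℂ} (hc : 1 < ‖c‖) {r : ℝ} (hr : 0 < r) {k : ℕ} {z : E}
    (hdiff : Differentiable ℂ fun ζ => Ψ k (z, ζ)) (h₀ : Ψ k (z, 0) = 0)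
    (hΨ : ∀ ζ, ‖ζ‖ ≤ r → ‖Ψ k (z, ζ) - c • ζ‖ ≤ r * (1 / 2) ^ (k + 2)) {ζ : W}
    (hζ : ‖ζ‖ ≤ ‖c‖ ^ k * r) :
    ‖rescaledInverse c Ψ k (z, ζ) - ζ‖ ≤ (1 / 2) ^ (k + 2) * ‖ζ‖ := by
  have hc₀ : c ≠ 0 := norm_pos_iff.1 (one_pos.trans hc)
  set ξ := (c ^ (k + 1))⁻¹ • ζ
  have hζξ : c ^ (k + 1) • ξ = ζ := smul_inv_smul₀ (pow_ne_zero _ hc₀) ζ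
  have hnorm : ‖c‖ ^ (k + 1) * ‖ξ‖ = ‖ζ‖ := by rw [← norm_pow, ← norm_smul, hζξ]
  have hξ : ‖ξ‖ < r := by
    have : ‖c‖ ^ (k + 1) * ‖ξ‖ < ‖c‖ ^ (k + 1) * r :=
      (hnorm.trans_le hζ).trans_lt (by gcongr; omega)
    exact lt_of_mul_lt_mul_left this (by positivity)
  calc ‖rescaledInverse c Ψ k (z, ζ) - ζ‖ = ‖c ^ k • (Ψ k (z, ξ) - c • ξ)‖ := by
        rw [smul_sub, smul_smul, ← pow_succ, hζξ, rescaledInverse]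
    _ ≤ ‖c‖ ^ k * (r * (1 / 2) ^ (k + 2) / r * ‖ξ‖) := by
        rw [norm_smul, norm_pow]
        gcongr
        exact norm_sub_smul_le_mul_norm hdiff.differentiableOn h₀ hΨ hξ
    _ = (1 / 2) ^ (k + 2) * (‖c‖ ^ k * ‖ξ‖) := by field_simp
    _ ≤ (1 / 2) ^ (k + 2) * ‖ζ‖ := by
        rw [← hnorm]
        gcongr
        · exact hc.le
        · omega

theorem exists_forall_tendsto_pow_smul_fibreOrbit [CompleteSpace W] (hO : IsOpen O)
    {Φ Ψ : ℕ → E × W → W} (hA : ∀ k, FibreAut O (Φ k) (Ψ k)) (h₀ : ∀ k z, Ψ k (z, 0) = 0)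
    {c : ℂ} (hc : 1 < ‖c‖) {r : ℝ} (hr : 0 < r)
    (hΨ : ∀ k, ∀ z ∈ O, ∀ ζ, ‖ζ‖ ≤ r → ‖Ψ k (z, ζ) - c • ζ‖ ≤ r * (1 / 2) ^ (k + 2)) :
    ∃ F : E × W → W, DifferentiableOn ℂ F (O ×ˢ univ) ∧ ∀ z ∈ O, F (z, 0) = 0 ∧
      ∀ ζ, Tendsto (fun k => c ^ k • fibreOrbit Φ z (F (z, ζ)) k) atTop (𝓝 ζ) := by
  have hc₀ : c ≠ 0 := norm_pos_iff.1 (one_pos.trans hc)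
  have hest (k : ℕ) (z : E) (hz : z ∈ O) (ζ : W) (hζ : ‖ζ‖ ≤ ‖c‖ ^ k * r) :
      ‖rescaledInverse c Ψ k (z, ζ) - ζ‖ ≤ (1 / 2) ^ (k + 2) * ‖ζ‖ :=
    norm_rescaledInverse_sub_le hc hr (differentiableOn_univ.1 <| (hA k).diff_inv.comp
      (f := fun ζ => (z, ζ)) (by fun_prop) fun _ _ => ⟨hz, mem_univ _⟩) (h₀ k z) (hΨ k z hz) hζ
  obtain ⟨F, hF, hlim⟩ := exists_limit_fibreComps hO (R := fun k => ‖c‖ ^ k * r)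
    ((pow_right_mono₀ hc.le).mul_const hr.le) (fun k => by positivity)
    ((tendsto_pow_atTop_atTop_of_one_lt hc).atTop_mul_const hr)
    (differentiableOn_rescaledInverse c fun k => (hA k).diff_inv) hest
  refine ⟨F, hF, fun z hz => ⟨?_, fun ζ => ?_⟩⟩
  · obtain ⟨k, ξ, hξ, hk⟩ := (hlim z hz 0).exists
    rw [norm_zero, mul_zero, sub_zero, norm_le_zero_iff] at hξ
    rw [hk, hξ, fibreComps_apply_zero fun k => by simp only [rescaledInverse, smul_zero, h₀]]
  · have hrate : Tendsto (fun k : ℕ => (1 / 2 : ℝ) ^ k * ‖ζ‖) atTop (𝓝 0) := by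
      simpa only [zero_mul] using (tendsto_pow_atTop_nhds_zero_of_lt_one (r := (1 / 2 : ℝ))
        (by norm_num) (by norm_num)).mul_const ‖ζ‖
    rw [tendsto_iff_norm_sub_tendsto_zero]
    refine squeeze_zero' (.of_forall fun _ => norm_nonneg _) ?_ hrate
    filter_upwards [hlim z hz ζ] with k ⟨ξ, hξ, hk⟩
    rwa [hk, fibreOrbit_fibreComps_rescaledInverse hA hc₀ hz, smul_inv_smul₀ (pow_ne_zero k hc₀)]

theorem exists_fatouBieberbach [CompleteSpace W] (hO : IsOpen O) {K : Set (E × W)} {r ρ : ℝ}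
    (hr : 0 < r) (hρ : 0 < ρ) {c : ℂ} (hc : 1 < ‖c‖) (hK : ∀ q ∈ fibreThickening K ρ, r ≤ ‖q.2‖)
    (h : ∀ δ > 0, ∃ Φ Ψ : E × W → W, FibreAut O Φ Ψ ∧ (∀ z, Ψ (z, 0) = 0) ∧
      (∀ z ∈ O, ∀ ζ, ‖ζ‖ ≤ r → ‖Ψ (z, ζ) - c • ζ‖ ≤ δ) ∧
      ∀ q ∈ fibreThickening K ρ, ‖Φ q - q.2‖ ≤ δ) :
    ∃ F : E × W → W, DifferentiableOn ℂ F (O ×ˢ univ) ∧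
      ∀ z ∈ O, F (z, 0) = 0 ∧ Function.Injective (fun ζ => F (z, ζ)) ∧ ∀ ζ, (z, F (z, ζ)) ∉ K := by
  choose Φ Ψ hA h₀ hΨ hΦ using fun k : ℕ =>
    h (min (r * (1 / 2) ^ (k + 2)) (ρ * (1 / 2) ^ (k + 1))) (by positivity)
  obtain ⟨F, hF, hlim⟩ := exists_forall_tendsto_pow_smul_fibreOrbit hO hA h₀ hc hr
    fun k z hz ζ hζ => (hΨ k z hz ζ hζ).trans (min_le_left _ _)
  refine ⟨F, hF, fun z hz => ⟨(hlim z hz).1, fun ζ ζ' hζ => ?_, fun ζ hmem => ?_⟩⟩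
  · have hlimζ := (hlim z hz).2 ζ
    rw [show F (z, ζ) = F (z, ζ') from hζ] at hlimζ
    exact tendsto_nhds_unique hlimζ ((hlim z hz).2 ζ')
  · have horbit (k : ℕ) : r ≤ ‖fibreOrbit Φ z (F (z, ζ)) k‖ :=
      hK _ (fibreOrbit_mem_fibreThickening hρ.le
        (fun k q hq => (hΦ k q hq).trans (min_le_right _ _)) hmem k)
    refine not_tendsto_nhds_of_tendsto_atTop (tendsto_atTop_mono (fun k => ?_)
      ((tendsto_pow_atTop_atTop_of_one_lt hc).atTop_mul_const hr)) _ ((hlim z hz).2 ζ).norm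
    rw [norm_smul, norm_pow]
    gcongr
    exact horbit k

end Basin

section Cutoff

theorem exists_cthickening_prod_closedBall_subset {E W : Type*} [PseudoMetricSpace E]
    [NormedAddCommGroup W] {L : Set E} (hL : IsCompact L) {A : Set (E × W)} (hA : IsOpen A)
    (hLA : ∀ z ∈ L, (z, 0) ∈ A) : ∃ δ > 0, cthickening δ L ×ˢ closedBall 0 δ ⊆ A := by
  have hLA' : L ×ˢ {(0 : W)} ⊆ A := by
    rintro ⟨z, _⟩ ⟨hz, rfl⟩
    exact hLA z hz
  obtain ⟨δ, hδ, hsub⟩ := (hL.prod isCompact_singleton).exists_cthickening_subset_open hA hLA'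
  refine ⟨δ, hδ, fun q ⟨hq, hq₂⟩ => hsub ?_⟩
  rw [hL.cthickening_eq_biUnion_closedBall hδ.le, mem_iUnion₂] at hq
  obtain ⟨y, hy, hqy⟩ := hq
  exact mem_cthickening_of_dist_le q (y, 0) δ _ ⟨hy, rfl⟩ (max_le hqy hq₂)

theorem exists_fibreThickening_subset {E W : Type*} [PseudoMetricSpace E]
    [NormedAddCommGroup W] {K : Set (E × W)} (hK : IsCompact K) {A : Set (E × W)} (hA : IsOpen A)
    (hKA : K ⊆ A) : ∃ δ > 0, fibreThickening K δ ⊆ A := by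
  obtain ⟨δ, hδ, hsub⟩ := hK.exists_cthickening_subset_open hA hKA
  refine ⟨δ, hδ, fun q ⟨ζ, hζ, hq⟩ => hsub (mem_cthickening_of_dist_le q (q.1, ζ) δ _ hζ ?_)⟩
  rw [Prod.dist_eq, dist_self, dist_eq_norm]
  exact max_le hδ.le hq

theorem exists_radii_of_norm_sub_lt {E W : Type*} [PseudoMetricSpace E] [NormedAddCommGroup W]
    {U L : Set E} (hL : IsCompact L) (hU : IsOpen U) (hLU : L ⊆ U) {K : Set (E × W)}
    (hK : IsCompact K) (hKL : ∀ q ∈ K, q.1 ∈ L) {h : E × W → ℂ}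
    (hcont : ContinuousOn h (U ×ˢ univ)) {ε : ℝ} (hhL : ∀ z ∈ L, ‖h (z, 0) - 1‖ < ε)
    (hhK : ∀ q ∈ K, ‖h q‖ < ε) :
    ∃ r > 0, ∃ ρ > 0, cthickening (2 * r) L ⊆ U ∧
      (∀ q ∈ cthickening (2 * r) L ×ˢ closedBall 0 (2 * r), ‖h q - 1‖ < ε) ∧
      ∀ q ∈ fibreThickening K (2 * ρ), ‖h q‖ < ε := by
  have hopen : IsOpen (U ×ˢ (univ : Set W)) := hU.prod isOpen_univ
  obtain ⟨δ₁, hδ₁, hsub₁⟩ := exists_cthickening_prod_closedBall_subset hL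
    ((hcont.sub continuousOn_const).norm.isOpen_inter_preimage hopen (isOpen_gt' ε))
    fun z hz => ⟨⟨hLU hz, mem_univ _⟩, hhL z hz⟩
  obtain ⟨δ₂, hδ₂, hsub₂⟩ := exists_fibreThickening_subset hK
    (hcont.norm.isOpen_inter_preimage hopen (isOpen_gt' ε))
    fun q hq => ⟨⟨hLU (hKL q hq), mem_univ _⟩, hhK q hq⟩
  refine ⟨δ₁ / 2, half_pos hδ₁, δ₂ / 2, half_pos hδ₂, ?_⟩
  rw [mul_div_cancel₀ δ₁ two_ne_zero, mul_div_cancel₀ δ₂ two_ne_zero]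
  exact ⟨fun z hz => (hsub₁ (a := (z, 0)) ⟨hz, mem_closedBall_self hδ₁.le⟩).1.1,
    fun q hq => (hsub₁ hq).2, fun q hq => (hsub₂ hq).2⟩

variable {E ι : Type*} [NormedAddCommGroup E] [NormedSpace ℂ E] [Fintype ι]
  [Nontrivial ι] {U V L : Set E} {K : Set (E × EuclideanSpace ℂ ι)} {h : E × EuclideanSpace ℂ ι → ℂ}

theorem exists_expanding_aut_of_expApprox (hU : IsOpen U) (hV : IsCompact V) (hVU : V ⊆ U)
    (hK : IsCompact K) (hKV : ∀ q ∈ K, q.1 ∈ V) {r ρ : ℝ} (hr : 0 < r) (hρ : 0 < ρ)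
    (hh : ExpApprox U (V ×ˢ closedBall 0 (2 * r) ∪ fibreThickening K (2 * ρ)) h)
    (h₁ : ∀ q ∈ V ×ˢ closedBall 0 (2 * r), ‖h q - 1‖ ≤ 1 / 4)
    (h₂ : ∀ q ∈ fibreThickening K (2 * ρ), ‖h q‖ ≤ 1 / 4) {δ : ℝ} (hδ : 0 < δ) :
    ∃ Φ Ψ : E × EuclideanSpace ℂ ι → EuclideanSpace ℂ ι,
      FibreAut U Φ Ψ ∧ (∀ z, Ψ (z, 0) = 0) ∧
      (∀ z ∈ V, ∀ ζ, ‖ζ‖ ≤ r / (2 * Real.exp 1) → ‖Ψ (z, ζ) - Complex.exp 1 • ζ‖ ≤ δ) ∧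
      ∀ q ∈ fibreThickening K (ρ / 4), ‖Φ q - q.2‖ ≤ δ := by
  have hQ : IsCompact (V ×ˢ closedBall (0 : EuclideanSpace ℂ ι) (2 * r) ∪
      fibreThickening K (2 * ρ)) :=
    (hV.prod (isCompact_closedBall _ _)).union (isCompact_fibreThickening hK _)
  exact exists_expanding_aut_fixing_zero hU hV hVU hK hKV hr hρ (fun ε hε =>
    exists_radial_field hU hr hρ hK (fun ε hε k => hh.exists_cutoff h₁ h₂
      (expApprox_linear hQ (EuclideanSpace.proj (𝕜 := ℂ) k)) hε) hε) hδ

theorem exists_fatouBieberbach_of_expApprox [ProperSpace E] (hL : IsCompact L) (hU : IsOpen U)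
    (hLU : L ⊆ U) (hK : IsCompact K) (hKL : ∀ q ∈ K, q.1 ∈ L) (hcont : ContinuousOn h (U ×ˢ univ))
    (hh : ∀ Q, IsCompact Q → (∀ q ∈ Q, q.1 ∈ U) → ExpApprox U Q h)
    (hhL : ∀ z ∈ L, ‖h (z, 0) - 1‖ < 1 / 4) (hhK : ∀ q ∈ K, ‖h q‖ < 1 / 4) :
    ∃ O ⊆ U, IsOpen O ∧ L ⊆ O ∧ ∃ F : E × EuclideanSpace ℂ ι → EuclideanSpace ℂ ι,
      DifferentiableOn ℂ F (O ×ˢ univ) ∧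
      ∀ z ∈ O, F (z, 0) = 0 ∧ Function.Injective (fun ζ => F (z, ζ)) ∧ ∀ ζ, (z, F (z, ζ)) ∉ K := by
  obtain ⟨r, hr, ρ, hρ, hVU, h₁, h₂⟩ :=
    exists_radii_of_norm_sub_lt hL hU hLU hK hKL hcont hhL hhK
  have hLV : L ⊆ cthickening (2 * r) L := self_subset_cthickening L
  have hOV : thickening (2 * r) L ⊆ cthickening (2 * r) L := thickening_subset_cthickening _ _
  have hexp : 1 < Real.exp 1 := Real.one_lt_exp_iff.2 one_pos
  refine ⟨thickening (2 * r) L, hOV.trans hVU, isOpen_thickening,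
    self_subset_thickening (by positivity) L,
    exists_fatouBieberbach (r := r / (2 * Real.exp 1)) (ρ := ρ / 4) (c := Complex.exp 1)
      isOpen_thickening (by positivity) (by positivity) (by simp [Complex.norm_exp])
      (fun q hq => ?_) fun δ hδ => ?_⟩
  · by_contra! hlt
    have hr' : r / (2 * Real.exp 1) ≤ 2 * r := (div_le_iff₀ (by positivity)).2 (by nlinarith)
    have hz : q.1 ∈ L := hq.elim fun ζ hζ => hKL (q.1, ζ) hζ.1
    have hnear := h₁ q ⟨hLV hz, mem_closedBall_zero_iff.2 (hlt.le.trans hr')⟩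
    have hsmall := h₂ q (fibreThickening_mono (by linarith) hq)
    have hone := norm_le_norm_add_norm_sub (h q) 1
    rw [norm_one] at hone
    linarith
  · obtain ⟨Φ, Ψ, hA, h₀, hΨ, hΦ⟩ := exists_expanding_aut_of_expApprox hU hL.cthickening hVU hK
      (fun q hq => hLV (hKL q hq)) hr hρ (hh _ ((hL.cthickening.prod
        (isCompact_closedBall _ _)).union (isCompact_fibreThickening hK _)) fun q hq =>
          hq.elim (fun hq => hVU hq.1) fun ⟨ζ, hζ, _⟩ => hLU (hKL (q.1, ζ) hζ))
      (fun q hq => (h₁ q hq).le) (fun q hq => (h₂ q hq).le) hδ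
    exact ⟨Φ, Ψ, hA.mono (hOV.trans hVU), h₀, fun z hz => hΨ z (hOV hz), hΦ⟩

end Cutoff

section VariableFibres

/-- A polynomial in fibre coordinates centred at the graph of `f`. -/
def recentredEval {E F σ τ : Type*} [Fintype σ] [Fintype τ] [NormedAddCommGroup E]
    [NormedSpace ℂ E] [NormedAddCommGroup F] [NormedSpace ℂ F] (e : E ≃L[ℂ] (σ → ℂ))
    (e' : F ≃L[ℂ] (τ → ℂ)) (f : E → F) (p : MvPolynomial (σ ⊕ τ) ℂ) (q : E × F) : ℂ :=
  eval (prodCoord e e' (q.1, q.2 + f q.1)) p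

variable {E W σ τ : Type*} [Fintype σ] [Fintype τ] [NormedAddCommGroup E] [NormedSpace ℂ E]
  [NormedAddCommGroup W] [NormedSpace ℂ W] {e : E ≃L[ℂ] (σ → ℂ)} {U L : Set E}

theorem expApprox_recentredEval {e' : W ≃L[ℂ] (τ → ℂ)} {f : E → W} {Q : Set (E × W)}
    (hQ : IsCompact Q) (hQU : ∀ q ∈ Q, q.1 ∈ U) (hf : DifferentiableOn ℂ f U)
    (p : MvPolynomial (σ ⊕ τ) ℂ) : ExpApprox U Q (recentredEval e e' f p) := by
  refine ExpApprox.eval (g := fun q => prodCoord e e' (q.1, q.2 + f q.1)) (fun i => ?_) p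
  simp only [prodCoord_apply]
  rcases i with i | j
  · exact expApprox_comp_fst hQ hQU (c := fun z => e z i) (by fun_prop)
  · simp only [Sum.elim_inr, map_add, Pi.add_apply]
    exact (expApprox_linear hQ (.proj j ∘L (e' : W →L[ℂ] τ → ℂ))).add
      (expApprox_comp_fst hQ hQU (c := fun z => e' (f z) j) (by fun_prop))

theorem continuousOn_recentredEval {e' : W ≃L[ℂ] (τ → ℂ)} {f : E → W} (hf : ContinuousOn f U)
    (p : MvPolynomial (σ ⊕ τ) ℂ) : ContinuousOn (recentredEval e e' f p) (U ×ˢ univ) :=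
  ((continuous_eval p).comp (prodCoord e e').continuous).comp_continuousOn
    (continuousOn_fst.prodMk (continuousOn_snd.add (hf.comp continuousOn_fst fun _ hq => hq.1)))

theorem exists_fatouBieberbach_avoiding {ι : Type*} [Fintype ι] [Nontrivial ι]
    {e' : EuclideanSpace ℂ ι ≃L[ℂ] (τ → ℂ)} {K : Set (E × EuclideanSpace ℂ ι)}
    {f : E → EuclideanSpace ℂ ι} (hLc : IsCompact L) (hL : PolynomiallyConvex e L)
    (hKc : IsCompact K) (hK : PolynomiallyConvex (prodCoord e e') K) (hKL : ∀ q ∈ K, q.1 ∈ L)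
    (hU : IsOpen U) (hLU : L ⊆ U) (hf : DifferentiableOn ℂ f U) (hfK : ∀ z ∈ L, (z, f z) ∉ K) :
    ∃ O, IsOpen O ∧ L ⊆ O ∧ ∃ F : E × EuclideanSpace ℂ ι → EuclideanSpace ℂ ι,
      DifferentiableOn ℂ F (O ×ˢ univ) ∧ ∀ z ∈ O, F (z, 0) = f z ∧
        Function.Injective (fun ζ => F (z, ζ)) ∧ ∀ ζ, (z, F (z, ζ)) ∉ K := by
  have : FiniteDimensional ℂ E := e.symm.toLinearEquiv.finiteDimensional
  have : ProperSpace E := FiniteDimensional.proper ℂ E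
  obtain ⟨p, hpK, hpL⟩ := hL.exists_eval_indicator_graph hLc hK hKc hKL
    (fun z hz => (hf.eventually_differentiableAt (hU.mem_nhds (hLU hz)))) hfK (ε := 1 / 8)
    (by norm_num)
  have hshift : IsCompact ((fun q => (q.1, q.2 - f q.1)) '' K) :=
    hKc.image_of_continuousOn (continuousOn_fst.prodMk (continuousOn_snd.sub
      (hf.continuousOn.comp continuousOn_fst fun q hq => hLU (hKL q hq))))
  obtain ⟨O, hOU, hO, hLO, F, hF, hFO⟩ := exists_fatouBieberbach_of_expApprox
    (h := recentredEval e e' f p) hLc hU hLU hshift (by rintro _ ⟨q, hq, rfl⟩; exact hKL q hq)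
    (continuousOn_recentredEval hf.continuousOn p)
    (fun Q hQ hQU => expApprox_recentredEval hQ hQU hf p)
    (fun z hz => by
      rw [recentredEval, zero_add]
      exact (hpL z hz).trans_lt (by norm_num))
    (by
      rintro _ ⟨q, hq, rfl⟩
      rw [recentredEval, sub_add_cancel]
      exact (hpK q hq).trans_lt (by norm_num))
  refine ⟨O, hO, hLO, fun q => F q + f q.1,
    hF.add (hf.comp differentiableOn_fst fun q hq => hOU hq.1), fun z hz => ?_⟩
  obtain ⟨h₀, hinj, havoid⟩ := hFO z hz
  exact ⟨by simp only [h₀, zero_add], fun ζ ζ' h => hinj (add_right_cancel h),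
    fun ζ hmem => havoid ζ ⟨_, hmem, by simp only [add_sub_cancel_right]⟩⟩

end VariableFibres

/-- Variable-fibre version of the main theorem. Let `n > 1`, `L ⊆ ℂᴺ` compact polynomially
convex, and `K̃ ⊆ ℂ^{N+n}` a compact polynomially convex set whose projection to `ℂᴺ` is
contained in `L`, with fibres `K_z = {ζ : (z,ζ) ∈ K̃}`. Let `f` be holomorphic on a neighbourhood
of `L` with `f(z) ∉ K_z` for all `z ∈ L`. Then there exist a neighbourhood `V` of `L` and a
holomorphic map `F : V × ℂⁿ → ℂⁿ` such that for each `z ∈ V ∩ L`: `F(z,0) = f(z)`,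
`ζ ↦ F(z,ζ)` is injective, and `F({z} × ℂⁿ) ∩ K_z = ∅`. -/
theorem stmt_18 (n N : ℕ) (hn : 1 < n)
    (L : Set (EuclideanSpace ℂ (Fin N))) (hLc : IsCompact L) (hLpc : IsPolyConvex L)
    (Kt : Set (EuclideanSpace ℂ (Fin N) × EuclideanSpace ℂ (Fin n)))
    (hKtc : IsCompact Kt) (hKtpc : IsPolyConvex2 Kt) (hproj : ∀ q ∈ Kt, q.1 ∈ L)
    (U : Set (EuclideanSpace ℂ (Fin N))) (hU : IsOpen U) (hLU : L ⊆ U)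
    (f : EuclideanSpace ℂ (Fin N) → EuclideanSpace ℂ (Fin n))
    (hf : DifferentiableOn ℂ f U) (hfK : ∀ z ∈ L, (z, f z) ∉ Kt) :
    ∃ V : Set (EuclideanSpace ℂ (Fin N)), IsOpen V ∧ L ⊆ V ∧
      ∃ F : EuclideanSpace ℂ (Fin N) × EuclideanSpace ℂ (Fin n) → EuclideanSpace ℂ (Fin n),
        DifferentiableOn ℂ F (V ×ˢ univ) ∧
        ∀ z ∈ V ∩ L, F (z, 0) = f z ∧
          Function.Injective (fun ζ => F (z, ζ)) ∧
          ∀ ζ : EuclideanSpace ℂ (Fin n), (z, F (z, ζ)) ∉ Kt := by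
  have : Nontrivial (Fin n) := Fin.nontrivial_iff_two_le.2 hn
  have hL : PolynomiallyConvex (EuclideanSpace.equiv (Fin N) ℂ) L :=
    .of_hull_eq (ContinuousLinearEquiv.continuous _) hLc hLpc
  have hK : PolynomiallyConvex
      (prodCoord (EuclideanSpace.equiv (Fin N) ℂ) (EuclideanSpace.equiv (Fin n) ℂ)) Kt := by
    refine .of_hull_eq (ContinuousLinearEquiv.continuous _) hKtc ?_
    simp only [prodCoord_apply]
    exact hKtpc
  obtain ⟨V, hV, hLV, F, hF, hFV⟩ :=
    exists_fatouBieberbach_avoiding hLc hL hKtc hK hproj hU hLU hf hfK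
  exact ⟨V, hV, hLV, F, hF, fun z hz => hFV z hz.1⟩
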